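/- arXiv:math/0409349 — 2 statements merged into one kernel-verified Lean document; each statement's English description precedes it below -/
import Mathlib

section
/- Topological Helly theorem in the plane: let S₀, S₁, ..., S_m (m ≥ 2) be finitely many simply connected compact subsets of the plane ℝ² such that the intersection of every three of them is nonempty and the intersection of every two of them is simply connected. Then the total intersection S₀ ∩ S₁ ∩ ... ∩ S_m is nonempty and simply connected. -/
/-!
The topology of the plane enters through branches of `log (· - z)`: a compact set admits one if and
only if `z` is not in its filled hull, the union of the set with the bounded components of its
complement. Along paths in a simply connected set such branches always exist, so a simply connected
set contains the filled hull of each of its loops. This hull is nonseparating and uniformly locally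
connected, hence simply connected: a homotopy is built in it by repeated subdivision of the square.
So the intersection of two simply connected sets is simply connected once it is path connected.

The intersection of three such sets is path connected because two points joined by paths in each
pairwise intersection can be joined by a connected set in the intersection of the three hulls: if
they were separated, gluing branches of `log ((· - p) / (· - q))` would give a nonvanishing function
on the plane of nonzero degree at infinity. Four sets meet by a Knaster–Kuratowski–Mazurkiewicz
argument in the hull of a loop in one of them which passes through the three others. The case of a
finite family follows by induction, replacing its members by their intersections with one of them.
-/

open Set Filter Topology Metric
open scoped unitInterval

namespace PlanarHelly

/-! ### Logarithms -/

lemma eqOn_of_exp_eq {α : Type*} [TopologicalSpace α] {s : Set α} (hs : IsPreconnected s)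
    {f g : α → ℂ} (hf : ContinuousOn f s) (hg : ContinuousOn g s)
    (hfg : ∀ x ∈ s, Complex.exp (f x) = Complex.exp (g x)) {a : α} (ha : a ∈ s)
    (hfga : f a = g a) : EqOn f g s :=
  Complex.isCoveringMap_exp.eqOn_of_comp_eqOn hs hf hg (fun x hx => Subtype.ext (hfg x hx)) ha hfga

lemma exists_continuous_log {A : Type*} [TopologicalSpace A] [SimplyConnectedSpace A]
    [LocallyPathConnectedSpace A] {f : A → ℂ} (hf : Continuous f) (hf0 : ∀ a, f a ≠ 0) :
    ∃ g : A → ℂ, Continuous g ∧ ∀ x, Complex.exp (g x) = f x := by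
  obtain ⟨a⟩ : Nonempty A := inferInstance
  obtain ⟨g, ⟨-, hgf⟩, -⟩ := Complex.isCoveringMapOn_exp.existsUnique_continuousMap_lifts
    ⟨f, hf⟩ (Complex.exp_log (hf0 a)) hf0
  exact ⟨g, g.continuous, congrFun hgf⟩

/-- `l` is a continuous branch of the logarithm of `f` on `X`. -/
structure IsLogOn {E : Type*} [TopologicalSpace E] (l f : E → ℂ) (X : Set E) : Prop where
  continuousOn : ContinuousOn l X
  exp_eq : ∀ x ∈ X, Complex.exp (l x) = f x

lemma IsLogOn.mono {E : Type*} [TopologicalSpace E] {l f : E → ℂ} {X Y : Set E}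
    (hl : IsLogOn l f X) (h : Y ⊆ X) : IsLogOn l f Y :=
  ⟨hl.continuousOn.mono h, fun x hx => hl.exp_eq x (h hx)⟩

lemma IsLogOn.eqOn {E : Type*} [TopologicalSpace E] {l l' f : E → ℂ} {X : Set E}
    (hl : IsLogOn l f X) (hl' : IsLogOn l' f X) (hX : IsPreconnected X) {x : E} (hx : x ∈ X)
    (h : l x = l' x) : EqOn l l' X :=
  eqOn_of_exp_eq hX hl.continuousOn hl'.continuousOn
    (fun y hy => by rw [hl.exp_eq y hy, hl'.exp_eq y hy]) hx h

lemma IsLogOn.exists_union {E : Type*} [TopologicalSpace E] {l l' f : E → ℂ} {X Y : Set E}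
    (hl : IsLogOn l f X) (hl' : IsLogOn l' f Y) (hX : IsOpen X) (hY : IsOpen Y)
    (h : EqOn l l' (X ∩ Y)) : ∃ m, IsLogOn m f (X ∪ Y) := by
  classical
  have hmX : EqOn (X.piecewise l l') l X := piecewise_eqOn _ _ _
  have hmY : EqOn (X.piecewise l l') l' Y := fun x hx => by
    by_cases hxX : x ∈ X
    · rw [hmX hxX, h ⟨hxX, hx⟩]
    · exact piecewise_eq_of_notMem _ _ _ hxX
  refine ⟨X.piecewise l l', (hl.continuousOn.congr hmX).union_of_isOpen
    (hl'.continuousOn.congr hmY) hX hY, fun x hx => hx.elim (fun hx => ?_) fun hx => ?_⟩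
  · rw [hmX hx, hl.exp_eq x hx]
  · rw [hmY hx, hl'.exp_eq x hx]

lemma IsLogOn.exists_iUnion {ι E : Type*} [TopologicalSpace E] {f : E → ℂ} {W : ι → Set E}
    {l : ι → E → ℂ} {x₀ : E} {e : ℂ} (hl : ∀ i, IsLogOn (l i) f (W i)) (hW : ∀ i, IsOpen (W i))
    (hWc : ∀ i, IsPreconnected (W i)) (hWd : Directed (· ⊆ ·) W) (hx₀ : ∀ i, x₀ ∈ W i)
    (hl₀ : ∀ i, l i x₀ = e) [Nonempty ι] :
    ∃ m : E → ℂ, IsLogOn m f (⋃ i, W i) ∧ m x₀ = e := by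
  have hmono {i j : ι} (h : W i ⊆ W j) {x : E} (hx : x ∈ W i) : l i x = l j x :=
    (hl i).eqOn ((hl j).mono h) (hWc i) (hx₀ i) (by rw [hl₀, hl₀]) hx
  have hagree {i j : ι} {x : E} (hi : x ∈ W i) (hj : x ∈ W j) : l i x = l j x := by
    obtain ⟨k, hik, hjk⟩ := hWd i j
    rw [hmono hik hi, hmono hjk hj]
  choose! c hc using fun x (hx : x ∈ ⋃ i, W i) => mem_iUnion.1 hx
  refine ⟨fun x => l (c x) x, ⟨fun x hx => ?_, fun x hx => (hl _).exp_eq x (hc x hx)⟩, hl₀ _⟩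
  have hnhds := (hW (c x)).mem_nhds (hc x hx)
  refine (((hl (c x)).continuousOn.continuousAt hnhds).congr ?_).continuousWithinAt
  filter_upwards [hnhds] with y hy
  exact hagree hy (hc y (mem_iUnion.2 ⟨_, hy⟩))

/-- `l` is a logarithm of `f` on `X` which is continuous along every path in `X`. On a set that is
not locally path connected this is weaker than continuity of `l`, but it is what simple connectivity
provides. -/
structure IsPathLogOn {E : Type*} [TopologicalSpace E] (l f : E → ℂ) (X : Set E) : Prop where
  exp_eq : ∀ x ∈ X, Complex.exp (l x) = f x
  continuous_comp : ∀ γ : I → E, Continuous γ → (∀ t, γ t ∈ X) → Continuous (l ∘ γ)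

lemma exists_log_along_paths {X : Type*} [TopologicalSpace X] [SimplyConnectedSpace X] {f : X → ℂ}
    (hf : Continuous f) (hf0 : ∀ x, f x ≠ 0) {b : X} {e : ℂ} (he : Complex.exp e = f b) :
    ∃ l : X → ℂ, l b = e ∧ (∀ x, Complex.exp (l x) = f x) ∧
      ∀ {x y : X} (γ : Path x y), ∃ g : C(I, ℂ), (∀ t, Complex.exp (g t) = f (γ t)) ∧
        g 0 = l x ∧ g 1 = l y := by
  have cov := Complex.isCoveringMap_exp
  let F : C(X, {z : ℂ // z ≠ 0}) := ⟨fun x => ⟨f x, hf0 x⟩, by fun_prop⟩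
  have map_eq {x y : X} (p q : Path x y) : Path.Homotopic.Quotient.mk (p.map F.continuous) =
      .mk (q.map F.continuous) :=
    Path.Homotopic.Quotient.eq.2 ((SimplyConnectedSpace.paths_homotopic p q).map F)
  let toPt (x : X) : Path b x := PathConnectedSpace.somePath b x
  let l (x : X) := cov.monodromy (.mk ((toPt x).map F.continuous)) ⟨e, Subtype.ext he⟩
  refine ⟨fun x => l x, ?_, fun x => congrArg Subtype.val (l x).2, fun {x y} γ => ?_⟩
  · have hb : l b = ⟨e, _⟩ := (congrArg (cov.monodromy · _) (map_eq (toPt b) (.refl b))).trans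
      (congrFun cov.monodromy_refl _)
    exact congrArg Subtype.val hb
  · have hy : l y = cov.monodromy (.mk (γ.map F.continuous)) (l x) := by
      refine (congrArg (cov.monodromy · _) (map_eq (toPt y) ((toPt x).trans γ))).trans ?_
      rw [Path.map_trans, Path.Homotopic.Quotient.mk_trans]
      exact cov.monodromy_trans_apply ..
    have h0 : (γ.map F.continuous) 0 = _ := (γ.map F.continuous).source.trans (l x).2.symm
    refine ⟨cov.liftPath (γ.map F.continuous) (l x) h0, fun t => ?_, cov.liftPath_zero .., ?_⟩
    · exact congrArg Subtype.val (congrFun (cov.liftPath_lifts (γ.map F.continuous) (l x) h0) t)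
    · exact (congrArg Subtype.val hy).symm

lemma exists_isPathLogOn {E : Type*} [TopologicalSpace E] {X : Set E} (hX : IsSimplyConnected X)
    {f : E → ℂ} (hf : ContinuousOn f X) (hf0 : ∀ x ∈ X, f x ≠ 0) {b : E} (hb : b ∈ X) {e : ℂ}
    (he : Complex.exp e = f b) : ∃ l, IsPathLogOn l f X ∧ l b = e := by
  classical
  have := hX.simplyConnectedSpace
  obtain ⟨l, hlb, hlf, hl⟩ := exists_log_along_paths (b := (⟨b, hb⟩ : X)) hf.domRestrict
    (fun x => hf0 x x.2) he
  refine ⟨fun x => if hx : x ∈ X then l ⟨x, hx⟩ else 0, ⟨fun x hx => ?_, fun γ hγ hγX => ?_⟩, ?_⟩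
  · simpa only [dif_pos hx, domRestrict_apply] using hlf ⟨x, hx⟩
  · let δ : C(I, X) := ⟨fun t => ⟨γ t, hγX t⟩, by fun_prop⟩
    obtain ⟨g, hgf, hg0, -⟩ := hl (⟨δ, rfl, rfl⟩ : Path (δ 0) (δ 1))
    have hg (t : I) : g t = l (δ t) := by
      obtain ⟨k, hkf, hk0, hk1⟩ :=
        hl (⟨δ.comp ⟨fun s => t * s, by fun_prop⟩, by simp, by simp⟩ : Path (δ 0) (δ t))
      have := eqOn_of_exp_eq (isPreconnected_univ (α := I)) (f := k) (g := fun s => g (t * s))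
        (by fun_prop) (by fun_prop) (fun s _ => by rw [hkf, hgf]; rfl) (mem_univ 0)
        (by rw [hk0, mul_zero, hg0]) (mem_univ 1)
      simpa only [hk1, mul_one] using this.symm
    convert g.continuous using 1
    ext t
    rw [hg, Function.comp_apply, dif_pos (hγX t)]
    rfl
  · simpa only [dif_pos hb] using hlb

lemma IsPathLogOn.eq_of_joinedIn {E : Type*} [TopologicalSpace E] {l l' f : E → ℂ} {X X' Y : Set E}
    (hl : IsPathLogOn l f X) (hl' : IsPathLogOn l' f X') (hX : Y ⊆ X) (hX' : Y ⊆ X') {x y : E}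
    (hxy : JoinedIn Y x y) (hx : l x = l' x) : l y = l' y := by
  obtain ⟨γ, hγ⟩ := hxy
  have := eqOn_of_exp_eq (isPreconnected_univ (α := I))
    (hl.continuous_comp γ γ.continuous fun t => hX (hγ t)).continuousOn
    (hl'.continuous_comp γ γ.continuous fun t => hX' (hγ t)).continuousOn
    (fun t _ => by
      rw [Function.comp_apply, Function.comp_apply, hl.exp_eq _ (hX (hγ t)),
        hl'.exp_eq _ (hX' (hγ t))])
    (mem_univ 0) (by simpa using hx) (mem_univ 1)
  simpa using this

lemma continuousOn_range_of_comp {α β γ : Type*} [TopologicalSpace α] [CompactSpace α]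
    [TopologicalSpace β] [T2Space β] [TopologicalSpace γ] {f : α → β} (hf : Continuous f)
    {g : β → γ} (hg : Continuous (g ∘ f)) : ContinuousOn g (range f) := by
  have hq : IsQuotientMap (rangeFactorization f) :=
    hf.rangeFactorization.isClosedMap.isQuotientMap hf.rangeFactorization
      rangeFactorization_surjective
  exact continuousOn_iff_continuous_domRestrict.2 (hq.continuous_iff.2 hg)

lemma IsPathLogOn.isLogOn_range {E : Type*} [TopologicalSpace E] [T2Space E] {l f : E → ℂ}
    {X : Set E} (hl : IsPathLogOn l f X) {x y : E} (γ : Path x y) (hγ : ∀ t, γ t ∈ X) :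
    IsLogOn l f (range γ) :=
  ⟨continuousOn_range_of_comp γ.continuous (hl.continuous_comp γ γ.continuous hγ),
    fun _ ⟨t, ht⟩ => hl.exp_eq _ (ht ▸ hγ t)⟩

/-! ### Planar exteriors and the degree at infinity -/

lemma isPreconnected_exterior (R : ℝ) : IsPreconnected {z : ℂ | R < ‖z‖} := by
  have hpolar : {z : ℂ | R < ‖z‖} =
      (fun p : ℝ × ℝ => (p.1 : ℂ) * Complex.exp (p.2 * Complex.I)) '' (Ioi R ×ˢ univ) := by
    ext z
    constructor
    · intro hz
      exact ⟨(‖z‖, z.arg), ⟨hz, mem_univ _⟩, Complex.norm_mul_exp_arg_mul_I z⟩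
    · rintro ⟨⟨r, θ⟩, ⟨hr : R < r, -⟩, rfl⟩
      simpa [Complex.norm_exp_ofReal_mul_I] using hr.trans_le (le_abs_self r)
  rw [hpolar]
  exact (isPreconnected_Ioi.prod isPreconnected_univ).image _ (by fun_prop)

lemma not_isBounded_exterior (R : ℝ) : ¬ Bornology.IsBounded {z : ℂ | R < ‖z‖} := by
  intro h
  refine NormedSpace.unbounded_univ ℝ ℂ
    ((h.union (isBounded_closedBall (x := 0) (r := R))).subset fun z _ => ?_)
  simpa using lt_or_ge R ‖z‖

/-- Dividing by `exp M` turns `F` into `z - a` near infinity, which has no logarithm on a large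
circle around `a`. -/
lemma not_eq_sub_mul_exp {F M : ℂ → ℂ} {a : ℂ} {R : ℝ} (hF : Continuous F) (hF0 : ∀ z, F z ≠ 0)
    (hM : ContinuousOn M {z | R < ‖z‖}) :
    ∃ z, R < ‖z‖ ∧ F z ≠ (z - a) * Complex.exp (M z) := by
  by_contra! hFM
  obtain ⟨g, hg, hgF⟩ := exists_continuous_log hF hF0
  set r : ℝ := |R| + ‖a‖ + 1 with hr
  have hr0 : 0 < r := by positivity
  let c (t : ℝ) : ℂ := a + r * Complex.exp (t * Complex.I)
  have hcR (t : ℝ) : R < ‖c t‖ := by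
    have hca : ‖c t - a‖ = r := by
      simp [c, Complex.norm_exp_ofReal_mul_I, abs_of_pos hr0]
    linarith [norm_sub_le (c t) a, le_abs_self R, hr]
  let φ (t : ℝ) : ℂ := g (c t) - M (c t) - t * Complex.I
  have hφ : Continuous φ :=
    ((hg.comp (by fun_prop)).sub (hM.comp_continuous (by fun_prop) hcR)).sub (by fun_prop)
  have hexp (t : ℝ) : Complex.exp (φ t) = r := by
    have := Complex.exp_ne_zero
    rw [Complex.exp_sub, Complex.exp_sub, hgF, hFM _ (hcR t)]
    simp only [c, add_sub_cancel_left]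
    field_simp [this]
  have hconst : φ (2 * Real.pi) = φ 0 :=
    eqOn_of_exp_eq isPreconnected_univ hφ.continuousOn (continuousOn_const (c := φ 0))
      (fun t _ => by rw [hexp, hexp]) (mem_univ 0) rfl (mem_univ _)
  have hperiod : c (2 * Real.pi) = c 0 := by simp [c, Complex.exp_two_pi_mul_I]
  simp only [φ, hperiod] at hconst
  have : (2 * Real.pi * Complex.I : ℂ) = 0 := by push_cast at hconst; linear_combination -hconst
  simp [Real.pi_ne_zero] at this

/-! ### Filled hulls -/

/-- The filled hull of `P ⊆ ℂ`: the union of `P` with the bounded components of its complement.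
A point `z ∈ P` qualifies because `connectedComponentIn Pᶜ z = ∅`. -/
def filledHull (P : Set ℂ) : Set ℂ := {z | Bornology.IsBounded (connectedComponentIn Pᶜ z)}

/-- Nonseparating compact subsets of the plane, which are the compact sets equal to their filled
hull. -/
structure IsNonseparating (K : Set ℂ) : Prop where
  isCompact : IsCompact K
  isPreconnected_compl : IsPreconnected Kᶜ

lemma subset_filledHull (P : Set ℂ) : P ⊆ filledHull P := fun z hz => by
  rw [filledHull, mem_ofPred_eq, connectedComponentIn_eq_empty (by simpa using hz)]
  exact Bornology.isBounded_empty

lemma notMem_filledHull {P C : Set ℂ} {z : ℂ} (hC : IsPreconnected C) (hz : z ∈ C) (hCP : C ⊆ Pᶜ)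
    (hb : ¬ Bornology.IsBounded C) : z ∉ filledHull P :=
  fun h => hb (Bornology.IsBounded.subset h (hC.subset_connectedComponentIn hz hCP))

lemma filledHull_mono {P Q : Set ℂ} (h : P ⊆ Q) : filledHull P ⊆ filledHull Q :=
  fun z (hz : Bornology.IsBounded _) =>
    hz.subset (connectedComponentIn_mono z (compl_subset_compl.2 h))

lemma not_isBounded_compl {K : Set ℂ} (hK : Bornology.IsBounded K) : ¬ Bornology.IsBounded Kᶜ :=
  fun h => NormedSpace.unbounded_univ ℝ ℂ (union_compl_self K ▸ hK.union h)

lemma IsNonseparating.filledHull_subset {P K : Set ℂ} (hK : IsNonseparating K) (h : P ⊆ K) :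
    filledHull P ⊆ K := fun z hz => by
  by_contra hzK
  exact notMem_filledHull hK.isPreconnected_compl hzK (compl_subset_compl.2 h)
    (not_isBounded_compl hK.isCompact.isBounded) hz

lemma isNonseparating_closedBall (c : ℂ) (r : ℝ) : IsNonseparating (closedBall c r) := by
  refine ⟨isCompact_closedBall c r, ?_⟩
  convert (isPreconnected_exterior r).image (· + c) (by fun_prop) using 1
  ext z
  simp [dist_eq_norm, ← sub_eq_add_neg]

lemma connectedComponentIn_subset_compl_filledHull {P : Set ℂ} {z : ℂ} (hz : z ∉ filledHull P) :
    connectedComponentIn Pᶜ z ⊆ (filledHull P)ᶜ := fun w hw hwP => by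
  rw [filledHull, mem_ofPred_eq, ← connectedComponentIn_eq hw] at hwP
  exact hz hwP

lemma isClosed_filledHull {P : Set ℂ} (hP : IsClosed P) : IsClosed (filledHull P) := by
  refine isOpen_compl_iff.1 (isOpen_iff_mem_nhds.2 fun z hz => ?_)
  have hzP : z ∈ Pᶜ := fun h => hz (subset_filledHull P h)
  exact mem_of_superset
    (hP.isOpen_compl.connectedComponentIn.mem_nhds (mem_connectedComponentIn hzP))
    (connectedComponentIn_subset_compl_filledHull hz)

lemma isNonseparating_filledHull {P : Set ℂ} (hP : IsCompact P) :
    IsNonseparating (filledHull P) := by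
  obtain ⟨R, hR⟩ := hP.isBounded.subset_closedBall 0
  have hhull : filledHull P ⊆ closedBall 0 R :=
    (isNonseparating_closedBall 0 R).filledHull_subset hR
  have hext : {z : ℂ | R < ‖z‖} ⊆ (filledHull P)ᶜ := fun z hz h =>
    absurd (mem_closedBall_zero_iff.1 (hhull h)) (not_le.2 hz)
  refine ⟨isCompact_of_isClosed_isBounded (isClosed_filledHull hP.isClosed)
    (isBounded_closedBall.subset hhull), ?_⟩
  obtain ⟨e, he⟩ : {z : ℂ | R < ‖z‖}.Nonempty := by
    by_contra! h
    exact not_isBounded_exterior R (h ▸ Bornology.isBounded_empty)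
  refine isPreconnected_of_forall e fun z hz => ⟨_, connectedComponentIn_subset_compl_filledHull hz,
    ?_, mem_connectedComponentIn fun h => hz (subset_filledHull P h),
    isPreconnected_connectedComponentIn⟩
  obtain ⟨w, hw, hwR⟩ : ∃ w ∈ connectedComponentIn Pᶜ z, R < ‖w‖ := by
    by_contra! hcon
    exact hz (isBounded_closedBall.subset fun w hw => mem_closedBall_zero_iff.2 (hcon w hw))
  rw [connectedComponentIn_eq hw]
  exact (isPreconnected_exterior R).subset_connectedComponentIn hwR
    (hext.trans (compl_subset_compl.2 (subset_filledHull P))) he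

lemma frontier_connectedComponentIn_compl_subset {P : Set ℂ} (hP : IsClosed P) (z : ℂ) :
    frontier (connectedComponentIn Pᶜ z) ⊆ P := by
  intro w hw
  by_contra hwP
  have hopen (v : ℂ) : IsOpen (connectedComponentIn Pᶜ v) := hP.isOpen_compl.connectedComponentIn
  obtain ⟨v, hvw, hvz⟩ := mem_closure_iff.1 (frontier_subset_closure hw) _ (hopen w)
    (mem_connectedComponentIn hwP)
  rw [(hopen z).frontier_eq] at hw
  refine hw.2 ?_
  rw [connectedComponentIn_eq hvz, ← connectedComponentIn_eq hvw]
  exact mem_connectedComponentIn hwP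

/-- Otherwise extending the logarithm over the bounded component `B` of `z` and replacing `w - z` by
its exponential there produces a nonvanishing function of degree one. -/
lemma IsLogOn.notMem_filledHull {P : Set ℂ} {z : ℂ} {l : ℂ → ℂ} (hl : IsLogOn l (· - z) P)
    (hP : IsCompact P) : z ∉ filledHull P := by
  classical
  intro hz
  have hzP : z ∉ P := fun hzP => Complex.exp_ne_zero _ ((hl.exp_eq z hzP).trans (sub_self z))
  obtain ⟨g, hg⟩ := ContinuousMap.exists_restrict_eq hP.isClosed
    ⟨P.domRestrict l, hl.continuousOn.domRestrict⟩
  have hgl (w : ℂ) (hw : w ∈ P) : g w = l w := DFunLike.congr_fun hg ⟨w, hw⟩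
  set B := connectedComponentIn Pᶜ z
  have hzB : z ∈ B := mem_connectedComponentIn hzP
  obtain ⟨R, hR⟩ := Bornology.IsBounded.exists_norm_le (s := B) hz
  let F (w : ℂ) : ℂ := if w ∈ B then Complex.exp (g w) else w - z
  have hF : Continuous F := by
    refine Continuous.if (fun w hw => ?_) (by fun_prop) (by fun_prop)
    have hwP := frontier_connectedComponentIn_compl_subset hP.isClosed z hw
    rw [hgl w hwP, hl.exp_eq w hwP]
  have hF0 (w : ℂ) : F w ≠ 0 := by
    by_cases hw : w ∈ B
    · simp [F, hw]
    · simpa [F, hw, sub_eq_zero] using fun h : w = z => hw (h ▸ hzB)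
  obtain ⟨w, hwR, hw⟩ :=
    not_eq_sub_mul_exp (a := z) (M := 0) (R := R) hF hF0 continuousOn_const
  have hwB : w ∉ B := fun hwB => absurd (hR w hwB) (not_le.2 hwR)
  exact hw (by simp [F, hwB])

lemma filledHull_range_subset {X : Set ℂ} (hX : IsSimplyConnected X) {x y : ℂ} (γ : Path x y)
    (hγ : range γ ⊆ X) : filledHull (range γ) ⊆ X := by
  intro z hz
  by_contra hzX
  have hne : ∀ w ∈ X, w - z ≠ 0 := fun w hw h => hzX (sub_eq_zero.1 h ▸ hw)
  have hxX : x ∈ X := γ.source ▸ hγ ⟨0, rfl⟩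
  obtain ⟨l, hl, -⟩ := exists_isPathLogOn hX (f := (· - z)) (by fun_prop) hne hxX
    (Complex.exp_log (hne x hxX))
  exact (hl.isLogOn_range γ fun t => hγ ⟨t, rfl⟩).notMem_filledHull
    (isCompact_range γ.continuous) hz

lemma filledHull_empty : filledHull ∅ = ∅ :=
  subset_empty_iff.1 (((isNonseparating_closedBall 0 (-1)).filledHull_subset
    (empty_subset _)).trans (closedBall_eq_empty.2 (by norm_num)).subset)

lemma subset_filledHull_of_isPreconnected {P C : Set ℂ} (hC : IsPreconnected C) (hCP : C ⊆ Pᶜ)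
    {x : ℂ} (hx : x ∈ C) (hxP : x ∈ filledHull P) : C ⊆ filledHull P := fun y hy => by
  rw [filledHull, mem_ofPred_eq] at hxP ⊢
  rwa [← connectedComponentIn_eq (hC.subset_connectedComponentIn hx hCP hy)]

lemma exists_segment_subset_filledHull {P : Set ℂ} (hP : IsClosed P) {x y : ℂ}
    (hx : x ∈ filledHull P) (hxy : ¬ segment ℝ x y ⊆ filledHull P) :
    ∃ p ∈ P, p ∈ segment ℝ x y ∧ segment ℝ x p ⊆ filledHull P := by
  let g : ℝ →ᵃ[ℝ] ℂ := AffineMap.lineMap x y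
  have hg : Continuous g := AffineMap.lineMap_continuous
  have hseg : segment ℝ x y = g '' Icc 0 1 := segment_eq_image_lineMap ℝ x y
  obtain ⟨s, ⟨hs, hsP⟩, hmin⟩ : ∃ s, IsLeast (Icc 0 1 ∩ g ⁻¹' P) s := by
    refine (isCompact_Icc.inter_right (hP.preimage hg)).exists_isLeast ?_
    by_contra hne
    refine hxy (subset_filledHull_of_isPreconnected (convex_segment x y).isPreconnected ?_
      (left_mem_segment ℝ x y) hx)
    rw [hseg]
    rintro _ ⟨t, ht, rfl⟩ htP
    exact hne ⟨t, ht, htP⟩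
  refine ⟨g s, hsP, hseg ▸ mem_image_of_mem g hs, ?_⟩
  have hx0 : g 0 = x := AffineMap.lineMap_apply_zero x y
  rw [← hx0, ← image_segment ℝ g, segment_eq_Icc hs.1]
  rintro _ ⟨t, ht, rfl⟩
  rcases eq_or_lt_of_le ht.2 with h | h
  · exact subset_filledHull P (h ▸ hsP)
  · refine subset_filledHull_of_isPreconnected (isPreconnected_Ico.image g hg.continuousOn) ?_
      ⟨0, ⟨le_rfl, ht.1.trans_lt h⟩, hx0⟩ hx (mem_image_of_mem g ⟨ht.1, h⟩)
    rintro _ ⟨u, hu, rfl⟩ huP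
    exact absurd (hmin ⟨⟨hu.1, hu.2.le.trans hs.2⟩, huP⟩) (not_le.2 hu.2)

lemma isPreconnected_filledHull {P : Set ℂ} (hP : IsCompact P) (hc : IsPreconnected P) :
    IsPreconnected (filledHull P) := by
  rcases P.eq_empty_or_nonempty with rfl | ⟨p, hp⟩
  · simpa only [filledHull_empty] using isPreconnected_empty
  obtain ⟨y, hy⟩ : ∃ y, y ∉ filledHull P := (ne_univ_iff_exists_notMem _).1 fun h =>
    NormedSpace.unbounded_univ ℝ ℂ (h ▸ (isNonseparating_filledHull hP).isCompact.isBounded)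
  refine isPreconnected_of_forall p fun x hx => ?_
  obtain ⟨q, hq, -, hxq⟩ := exists_segment_subset_filledHull hP.isClosed hx
    fun h => hy (h (right_mem_segment ℝ x y))
  exact ⟨P ∪ segment ℝ x q, union_subset (subset_filledHull P) hxq, Or.inl hp,
    Or.inr (left_mem_segment _ _ _), hc.union q hq (right_mem_segment _ _ _)
      (convex_segment _ _).isPreconnected⟩

/-! ### Eilenberg's criterion and triple intersections -/

lemma exists_isLogOn_sub_div_sub {C : Set ℂ} (hC : IsPreconnected C) {p q : ℂ} (hp : p ∈ C)
    (hq : q ∈ C) {ε : ℝ} (hε : 0 < ε) :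
    ∃ l : ℂ → ℂ, IsLogOn l (fun z => (z - p) / (z - q)) {z | ∀ c ∈ C, ε ≤ dist z c} := by
  set U : Set ℂ := {z | ∀ c ∈ C, ε ≤ dist z c}
  have hne : ∀ z ∈ U, ∀ c ∈ C, z - c ≠ 0 := fun z hz c hc =>
    sub_ne_zero.2 (dist_pos.1 (hε.trans_le (hz c hc)))
  refine hC.induction₂ (fun p q => ∃ l : ℂ → ℂ, IsLogOn l (fun z => (z - p) / (z - q)) U)
    (fun a _ => ?_) ?_ ?_ hp hq
  · filter_upwards [mem_nhdsWithin_of_mem_nhds (ball_mem_nhds a hε), self_mem_nhdsWithin]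
      with b hb hbC
    have hslit : ∀ z ∈ U, (z - a) / (z - b) ∈ Complex.slitPlane := fun z hz => by
      have h0 := hne z hz b hbC
      have hlt : ‖(b - a) / (z - b)‖ < 1 := by
        rw [norm_div, div_lt_one (norm_pos_iff.2 h0), ← dist_eq_norm, ← dist_eq_norm]
        exact (mem_ball.1 hb).trans_le (hz b hbC)
      have heq : (z - a) / (z - b) = 1 + (b - a) / (z - b) := by field_simp; ring
      rw [heq]
      exact Complex.mem_slitPlane_of_norm_lt_one hlt
    exact ⟨fun z => Complex.log ((z - a) / (z - b)),
      ContinuousOn.clog (.div (by fun_prop) (by fun_prop) fun z hz => hne z hz b hbC) hslit,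
      fun z hz => Complex.exp_log (Complex.slitPlane_ne_zero (hslit z hz))⟩
  · rintro a b c _ hb _ ⟨l, hl⟩ ⟨m, hm⟩
    refine ⟨l + m, hl.continuousOn.add hm.continuousOn, fun z hz => ?_⟩
    rw [Pi.add_apply, Complex.exp_add, hl.exp_eq z hz, hm.exp_eq z hz,
      div_mul_div_cancel₀ (hne z hz b hb)]
  · rintro a b _ _ ⟨l, hl⟩
    refine ⟨-l, hl.continuousOn.neg, fun z hz => ?_⟩
    rw [Pi.neg_apply, Complex.exp_neg, hl.exp_eq z hz, inv_div]

lemma exists_mem_connectedComponentIn_compl_cthickening {C : Set ℂ} (hC : IsClosed C) {z₀ z : ℂ}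
    (hz : z ∈ connectedComponentIn Cᶜ z₀) :
    ∃ η > 0, z ∈ connectedComponentIn (cthickening η C)ᶜ z₀ := by
  have hz₀ : z₀ ∈ Cᶜ := connectedComponentIn_nonempty_iff.1 ⟨z, hz⟩
  have hcon : IsPathConnected (connectedComponentIn Cᶜ z₀) :=
    hC.isOpen_compl.connectedComponentIn.isConnected_iff_isPathConnected.1
      (isConnected_connectedComponentIn_iff.2 hz₀)
  obtain ⟨γ, hγ⟩ := hcon.joinedIn z₀ (mem_connectedComponentIn hz₀) z hz
  have hdisj : Disjoint (range γ) C := disjoint_left.2 fun w ⟨t, ht⟩ hw =>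
    connectedComponentIn_subset _ _ (hγ t) (ht ▸ hw)
  obtain ⟨δ, hδ, hd⟩ := hdisj.exists_cthickenings (isCompact_range γ.continuous) hC
  exact ⟨δ, hδ, (isPreconnected_range γ.continuous).subset_connectedComponentIn ⟨0, γ.source⟩
    (fun w hw => disjoint_left.1 hd (self_subset_cthickening _ hw)) ⟨1, γ.target⟩⟩

lemma exists_isLogOn_connectedComponentIn_compl {C : Set ℂ} (hC : IsClosed C)
    (hC' : IsPreconnected C) {p q : ℂ} (hp : p ∈ C) (hq : q ∈ C) {z₀ e : ℂ} (hz₀ : z₀ ∉ C)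
    (he : Complex.exp e = (z₀ - p) / (z₀ - q)) :
    ∃ l : ℂ → ℂ, IsLogOn l (fun z => (z - p) / (z - q)) (connectedComponentIn Cᶜ z₀) ∧
      l z₀ = e := by
  let ι : Type := {η : ℝ // 0 < η ∧ z₀ ∉ cthickening η C}
  let W (η : ι) : Set ℂ := connectedComponentIn (cthickening η C)ᶜ z₀
  have hunion : connectedComponentIn Cᶜ z₀ = ⋃ η, W η := by
    refine Subset.antisymm (fun z hz => ?_) (iUnion_subset fun η =>
      connectedComponentIn_mono _ (compl_subset_compl.2 (self_subset_cthickening C)))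
    obtain ⟨η, hη, hzη⟩ := exists_mem_connectedComponentIn_compl_cthickening hC hz
    exact mem_iUnion.2 ⟨⟨η, hη, connectedComponentIn_nonempty_iff.1 ⟨z, hzη⟩⟩, hzη⟩
  have hlog (η : ι) : ∃ l : ℂ → ℂ, IsLogOn l (fun z => (z - p) / (z - q)) (W η) ∧ l z₀ = e := by
    obtain ⟨l, hl⟩ := exists_isLogOn_sub_div_sub hC' hp hq η.2.1
    have hWU : W η ⊆ {z | ∀ c ∈ C, η ≤ dist z c} := fun z hz c hc => by
      by_contra! h
      exact connectedComponentIn_subset _ _ hz (mem_cthickening_of_dist_le z c η C hc h.le)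
    refine ⟨fun z => l z - l z₀ + e, ⟨((hl.mono hWU).continuousOn.sub continuousOn_const).add
      continuousOn_const, fun z hz => ?_⟩, by ring⟩
    rw [Complex.exp_add, Complex.exp_sub, he, hl.exp_eq z (hWU hz),
      ← hl.exp_eq z₀ (hWU (mem_connectedComponentIn η.2.2)),
      div_mul_cancel₀ _ (Complex.exp_ne_zero _)]
  choose l hl hl₀ using hlog
  have : Nonempty ι := by
    obtain ⟨η, -⟩ := mem_iUnion.1 (hunion ▸ mem_connectedComponentIn hz₀)
    exact ⟨η⟩
  rw [hunion]
  exact IsLogOn.exists_iUnion hl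
    (fun η => isClosed_cthickening.isOpen_compl.connectedComponentIn)
    (fun η => isPreconnected_connectedComponentIn)
    (directed_of_isDirected_ge fun _ _ h =>
      connectedComponentIn_mono _ (compl_subset_compl.2 (cthickening_mono h C)))
    (fun η => mem_connectedComponentIn η.2.2) hl₀

lemma exists_isClosed_separation {X : Type*} [TopologicalSpace X] [T2Space X] {K : Set X}
    (hK : IsCompact K) {p q : X} (hp : p ∈ K) (hq : q ∈ K) (h : q ∉ connectedComponentIn K p) :
    ∃ P Q : Set X, IsClosed P ∧ IsClosed Q ∧ Disjoint P Q ∧ K = P ∪ Q ∧ p ∈ P ∧ q ∈ Q := by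
  have : CompactSpace K := isCompact_iff_compactSpace.1 hK
  obtain ⟨Z, hZ, hpZ, hqZ⟩ : ∃ Z : Set K, IsClopen Z ∧ (⟨p, hp⟩ : K) ∈ Z ∧ (⟨q, hq⟩ : K) ∉ Z := by
    by_contra! hcon
    rw [connectedComponentIn_eq_image hp, connectedComponent_eq_iInter_isClopen] at h
    exact h ⟨⟨q, hq⟩, mem_iInter.2 fun Z => hcon Z Z.2.1 Z.2.2, rfl⟩
  have hcl := hK.isClosed.isClosedEmbedding_subtypeVal.isClosedMap
  refine ⟨Subtype.val '' Z, Subtype.val '' Zᶜ, hcl _ hZ.1, hcl _ hZ.compl.1,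
    (disjoint_image_iff Subtype.val_injective).2 disjoint_compl_right, ?_, ⟨_, hpZ, rfl⟩,
    ⟨_, hqZ, rfl⟩⟩
  rw [← image_union, union_compl_self, image_univ, Subtype.range_coe]

lemma continuousOn_mul_of_eventually_eq_zero {X : Type*} [TopologicalSpace X] {K S : Set X}
    (hK : IsClosed K) {g l : X → ℂ} (hg : Continuous g) (hl : ContinuousOn l Kᶜ)
    (hgK : ∀ x ∈ S ∩ K, ∀ᶠ y in 𝓝 x, g y = 0) : ContinuousOn (fun x => g x * l x) S := by
  intro x hx
  refine ContinuousAt.continuousWithinAt ?_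
  by_cases hxK : x ∈ K
  · refine (continuousAt_const (y := (0 : ℂ))).congr ?_
    filter_upwards [hgK x ⟨hx, hxK⟩] with y hy
    rw [hy, zero_mul]
  · exact hg.continuousAt.mul (hl.continuousAt (hK.isOpen_compl.mem_nhds hxK))

lemma exists_continuous_eventually_eq_zero_one {X : Type*} [TopologicalSpace X] [NormalSpace X]
    {P Q : Set X} (hP : IsClosed P) (hQ : IsClosed Q) (hPQ : Disjoint P Q) :
    ∃ g : X → ℝ, Continuous g ∧ (∀ x ∈ P, ∀ᶠ y in 𝓝 x, g y = 0) ∧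
      ∀ x ∈ Q, ∀ᶠ y in 𝓝 x, g y = 1 := by
  obtain ⟨f, hf₀, hf₁, -⟩ := exists_continuous_zero_one_of_isClosed hP hQ hPQ
  refine ⟨fun x => max 0 (min 1 (3 * f x - 1)), by fun_prop, fun x hx => ?_, fun x hx => ?_⟩
  · filter_upwards [f.continuous.continuousAt.eventually_lt_const
      (show f x < 1 / 3 by rw [hf₀ hx]; norm_num)] with y hy
    exact max_eq_left ((min_le_right _ _).trans (by linarith))
  · filter_upwards [f.continuous.continuousAt.eventually_const_lt
      (show 2 / 3 < f x by rw [hf₁ hx]; norm_num)] with y hy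
    rw [min_eq_left (by linarith), max_eq_right zero_le_one]

/-- A cutoff function `g` interpolates between `z - q` near `P` and `z - p` near `Q`. -/
lemma exists_eq_sub_mul_exp_of_disjoint {P Q : Set ℂ} (hP : IsClosed P) (hQ : IsClosed Q)
    (hPQ : Disjoint P Q) {p q : ℂ} (hp : p ∈ P) (hq : q ∈ Q) {l : ℂ → ℂ}
    (hl : IsLogOn l (fun z => (z - p) / (z - q)) (P ∪ Q)ᶜ) :
    ∃ F M : ℂ → ℂ, Continuous F ∧ (∀ z, F z ≠ 0) ∧ ContinuousOn M (P ∪ Q)ᶜ ∧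
      ∀ z ∈ (P ∪ Q)ᶜ, F z = (z - q) * Complex.exp (M z) := by
  obtain ⟨g, hg, hgP, hgQ⟩ := exists_continuous_eventually_eq_zero_one hP hQ hPQ
  have hP0 {z : ℂ} (hz : z ∈ P) : g z = 0 := (hgP z hz).self_of_nhds
  have hQ1 {z : ℂ} (hz : z ∈ Q) : g z = 1 := (hgQ z hz).self_of_nhds
  have hcontP : ContinuousOn (fun z => (g z : ℂ) * l z) {z | g z ≤ 1 / 2} := by
    refine continuousOn_mul_of_eventually_eq_zero (hP.union hQ) (by fun_prop) hl.continuousOn ?_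
    rintro z ⟨hz, h | h⟩
    · exact (hgP z h).mono fun y hy => by simp [hy]
    · norm_num [hQ1 h] at hz
  have hcontQ : ContinuousOn (fun z => ((g z : ℂ) - 1) * l z) {z | 1 / 2 ≤ g z} := by
    refine continuousOn_mul_of_eventually_eq_zero (hP.union hQ) (by fun_prop) hl.continuousOn ?_
    rintro z ⟨hz, h | h⟩
    · norm_num [hP0 h] at hz
    · exact (hgQ z h).mono fun y hy => by simp [hy]
  have hagree {z : ℂ} (hz : z ∈ (P ∪ Q)ᶜ) :
      (z - q) * Complex.exp (g z * l z) = (z - p) * Complex.exp ((g z - 1) * l z) := by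
    have h := (hl.exp_eq z hz).symm
    rw [div_eq_iff (sub_ne_zero.2 (by rintro rfl; exact hz (Or.inr hq)))] at h
    rw [h, mul_right_comm, ← Complex.exp_add, mul_comm]
    ring_nf
  refine ⟨fun z => if g z ≤ 1 / 2 then (z - q) * Complex.exp (g z * l z) else
    (z - p) * Complex.exp ((g z - 1) * l z), fun z => g z * l z,
    continuous_if_le (by fun_prop) continuous_const (.mul (by fun_prop) hcontP.cexp)
      (.mul (by fun_prop) hcontQ.cexp) fun z hz => hagree ?_, fun z => ?_,
    (Complex.continuous_ofReal.comp hg).continuousOn.mul hl.continuousOn, fun z hz => ?_⟩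
  · rintro (h | h)
    · norm_num [hP0 h] at hz
    · norm_num [hQ1 h] at hz
  · beta_reduce
    split_ifs with hz <;> refine mul_ne_zero (sub_ne_zero.2 ?_) (Complex.exp_ne_zero _) <;>
      rintro rfl
    · norm_num [hQ1 hq] at hz
    · norm_num [hP0 hp] at hz
  · simp only [← hagree hz, ite_self]

lemma IsLogOn.mem_connectedComponentIn {K : Set ℂ} {p q : ℂ} {l : ℂ → ℂ}
    (hl : IsLogOn l (fun z => (z - p) / (z - q)) Kᶜ) (hK : IsCompact K) (hp : p ∈ K) (hq : q ∈ K) :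
    q ∈ connectedComponentIn K p := by
  by_contra hcon
  obtain ⟨P, Q, hP, hQ, hPQ, rfl, hpP, hqQ⟩ := exists_isClosed_separation hK hp hq hcon
  obtain ⟨F, M, hF, hF0, hM, hFM⟩ := exists_eq_sub_mul_exp_of_disjoint hP hQ hPQ hpP hqQ hl
  obtain ⟨R, hR⟩ := hK.isBounded.subset_closedBall 0
  have hout : {z : ℂ | R < ‖z‖} ⊆ (P ∪ Q)ᶜ := fun z hz hzK =>
    (mem_closedBall_zero_iff.1 (hR hzK)).not_gt hz
  obtain ⟨z, hz, hFz⟩ := not_eq_sub_mul_exp hF hF0 (hM.mono hout)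
  exact hFz (hFM z (hout hz))

lemma isCompact_connectedComponentIn {X : Type*} [TopologicalSpace X] [T2Space X] {K : Set X}
    (hK : IsCompact K) (x : X) : IsCompact (connectedComponentIn K x) := by
  rw [connectedComponentIn]
  split_ifs with hx
  · have : CompactSpace K := isCompact_iff_compactSpace.1 hK
    exact isClosed_connectedComponent.isCompact.image continuous_subtype_val
  · exact isCompact_empty

lemma IsNonseparating.exists_isLogOn {K : Set ℂ} (hK : IsNonseparating K) {p q z₀ e : ℂ}
    (hpq : q ∈ connectedComponentIn K p) (hz₀ : z₀ ∈ Kᶜ)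
    (he : Complex.exp e = (z₀ - p) / (z₀ - q)) :
    ∃ l : ℂ → ℂ, IsLogOn l (fun z => (z - p) / (z - q)) Kᶜ ∧ l z₀ = e := by
  have hCK := connectedComponentIn_subset K p
  obtain ⟨l, hl, hl₀⟩ := exists_isLogOn_connectedComponentIn_compl
    (isCompact_connectedComponentIn hK.isCompact p).isClosed isPreconnected_connectedComponentIn
    (mem_connectedComponentIn (connectedComponentIn_nonempty_iff.1 ⟨q, hpq⟩)) hpq
    (fun h => hz₀ (hCK h)) he
  exact ⟨l, hl.mono (hK.isPreconnected_compl.subset_connectedComponentIn hz₀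
    (compl_subset_compl.2 hCK)), hl₀⟩

lemma IsNonseparating.inter {K L : Set ℂ} (hK : IsNonseparating K) (hL : IsNonseparating L) :
    IsNonseparating (K ∩ L) := by
  obtain ⟨z, hz⟩ := nonempty_compl.2 (hK.isCompact.union hL.isCompact).ne_univ
  rw [mem_compl_iff, mem_union, not_or] at hz
  refine ⟨hK.isCompact.inter hL.isCompact, ?_⟩
  rw [compl_inter]
  exact hK.isPreconnected_compl.union z hz.1 hz.2 hL.isPreconnected_compl

/-- Logarithms of `(z - p) / (z - q)` off the pairwise intersections glue to one off the triple
intersection. -/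
lemma mem_connectedComponentIn_inter {K₀ K₁ K₂ : Set ℂ} (h₀ : IsNonseparating K₀)
    (h₁ : IsNonseparating K₁) (h₂ : IsNonseparating K₂) {p q : ℂ}
    (h₀₁ : q ∈ connectedComponentIn (K₀ ∩ K₁) p) (h₀₂ : q ∈ connectedComponentIn (K₀ ∩ K₂) p)
    (h₁₂ : q ∈ connectedComponentIn (K₁ ∩ K₂) p) :
    q ∈ connectedComponentIn (K₀ ∩ K₁ ∩ K₂) p := by
  have hp₀₁ : p ∈ K₀ ∩ K₁ := connectedComponentIn_nonempty_iff.1 ⟨q, h₀₁⟩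
  have hp₀₂ : p ∈ K₀ ∩ K₂ := connectedComponentIn_nonempty_iff.1 ⟨q, h₀₂⟩
  have hq₀₁ : q ∈ K₀ ∩ K₁ := connectedComponentIn_subset _ _ h₀₁
  have hq₀₂ : q ∈ K₀ ∩ K₂ := connectedComponentIn_subset _ _ h₀₂
  obtain ⟨z₀, hz₀⟩ :=
    nonempty_compl.2 ((h₀.isCompact.union h₁.isCompact).union h₂.isCompact).ne_univ
  simp only [mem_compl_iff, mem_union, not_or] at hz₀
  obtain ⟨⟨hz₀₀, hz₀₁⟩, hz₀₂⟩ := hz₀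
  have hne : ∀ c ∈ K₀, z₀ - c ≠ 0 := fun c hc h => hz₀₀ (sub_eq_zero.1 h ▸ hc)
  have he := Complex.exp_log (div_ne_zero (hne p hp₀₁.1) (hne q hq₀₁.1))
  obtain ⟨l₀₁, hl₀₁, he₀₁⟩ := (h₀.inter h₁).exists_isLogOn h₀₁ (fun h => hz₀₀ h.1) he
  obtain ⟨l₀₂, hl₀₂, he₀₂⟩ := (h₀.inter h₂).exists_isLogOn h₀₂ (fun h => hz₀₀ h.1) he
  obtain ⟨l₁₂, hl₁₂, he₁₂⟩ := (h₁.inter h₂).exists_isLogOn h₁₂ (fun h => hz₀₁ h.1) he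
  have heq₀ : EqOn l₀₁ l₀₂ K₀ᶜ := (hl₀₁.mono (compl_subset_compl.2 inter_subset_left)).eqOn
    (hl₀₂.mono (compl_subset_compl.2 inter_subset_left)) h₀.isPreconnected_compl hz₀₀
    (he₀₁.trans he₀₂.symm)
  have heq₁ : EqOn l₀₁ l₁₂ K₁ᶜ := (hl₀₁.mono (compl_subset_compl.2 inter_subset_right)).eqOn
    (hl₁₂.mono (compl_subset_compl.2 inter_subset_left)) h₁.isPreconnected_compl hz₀₁
    (he₀₁.trans he₁₂.symm)
  have heq₂ : EqOn l₁₂ l₀₂ K₂ᶜ := (hl₁₂.mono (compl_subset_compl.2 inter_subset_right)).eqOn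
    (hl₀₂.mono (compl_subset_compl.2 inter_subset_right)) h₂.isPreconnected_compl hz₀₂
    (he₁₂.trans he₀₂.symm)
  have hoverlap : EqOn l₀₁ l₀₂ ((K₀ ∩ K₁)ᶜ ∩ (K₀ ∩ K₂)ᶜ) := fun z hz => by
    by_cases hz₀ : z ∈ K₀
    · exact (heq₁ fun h => hz.1 ⟨hz₀, h⟩).trans (heq₂ fun h => hz.2 ⟨hz₀, h⟩)
    · exact heq₀ hz₀
  obtain ⟨l, hl⟩ := hl₀₁.exists_union hl₀₂ (h₀.inter h₁).isCompact.isClosed.isOpen_compl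
    (h₀.inter h₂).isCompact.isClosed.isOpen_compl hoverlap
  rw [← compl_inter, ← inter_inter_distrib_left, ← inter_assoc] at hl
  exact hl.mem_connectedComponentIn ((h₀.inter h₁).inter h₂).isCompact ⟨hp₀₁, hp₀₂.2⟩
    ⟨hq₀₁, hq₀₂.2⟩

/-! ### Functions of small oscillation -/

section Oscillation

variable {α β E : Type*} [TopologicalSpace α] [TopologicalSpace β] [PseudoMetricSpace E]
  {f g : α → E} {δ ε : ℝ}

/-- Near each point, the values of `f` differ by less than `δ` from the value there. Such functions
are the approximations from which continuous maps are obtained as uniform limits. -/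
def HasOscLT (f : α → E) (δ : ℝ) : Prop :=
  ∀ x, ∀ᶠ y in 𝓝 x, dist (f y) (f x) < δ

lemma HasOscLT.mono (hf : HasOscLT f δ) (h : δ ≤ ε) : HasOscLT f ε :=
  fun x => (hf x).mono fun _ hy => hy.trans_le h

lemma continuous_of_forall_hasOscLT (hf : ∀ δ > 0, HasOscLT f δ) : Continuous f :=
  continuous_iff_continuousAt.2 fun x => Metric.tendsto_nhds.2 fun δ hδ => hf δ hδ x

lemma HasOscLT.comp {f : β → E} (hf : HasOscLT f δ) {k : α → β} (hk : Continuous k) :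
    HasOscLT (f ∘ k) δ :=
  fun x => hk.continuousAt.eventually (hf (k x))

lemma HasOscLT.of_dist_le (hf : HasOscLT f δ) (hfg : ∀ x, dist (f x) (g x) ≤ ε) :
    HasOscLT g (δ + 2 * ε) := by
  refine fun x => (hf x).mono fun y hy => ?_
  linarith [dist_triangle4 (g y) (f y) (f x) (g x), hfg x, dist_comm (g y) (f y), hfg y]

lemma HasOscLT.of_locallyFinite {ι : Type*} {S : ι → Set α} (hS : LocallyFinite S)
    (hSc : ∀ i, IsClosed (S i)) (hcov : ⋃ i, S i = univ) {p : ι → α → E}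
    (hp : ∀ i, HasOscLT (p i) δ) (hf : ∀ i, EqOn f (p i) (S i)) : HasOscLT f δ := by
  intro x
  rw [← nhdsWithin_univ, ← hcov, hS.nhdsWithin_iUnion, eventually_iSup]
  intro i
  by_cases hx : x ∈ S i
  · filter_upwards [nhdsWithin_le_nhds (hp i x), self_mem_nhdsWithin] with y hy hyS
    rwa [hf i hyS, hf i hx]
  · rw [notMem_closure_iff_nhdsWithin_eq_bot.1 (by rwa [(hSc i).closure_eq])]
    exact eventually_bot

lemma HasOscLT.exists_forall_dist_lt {α : Type*} [PseudoMetricSpace α] [CompactSpace α]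
    {f : α → E} (hf : HasOscLT f δ) :
    ∃ r > 0, ∀ x y, dist x y < r → dist (f x) (f y) < 2 * δ := by
  obtain ⟨r, hr, h⟩ := uniformity_basis_dist.lebesgue_number_lemma_nhds isCompact_univ
    fun x _ => hf x
  refine ⟨r, hr, fun x y hxy => ?_⟩
  obtain ⟨z, hz⟩ := h x (mem_univ x)
  have hx : dist (f x) (f z) < δ := hz (by simpa [UniformSpace.ball] using hr)
  have hy : dist (f y) (f z) < δ := hz hxy
  linarith [dist_triangle_right (f x) (f y) (f z)]

lemma exists_continuous_forall_mem_of_refine [CompleteSpace E] {C : α → Set E}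
    (hC : ∀ x, IsClosed (C x))
    (href : ∀ ε > 0, ∃ δ > 0, ∀ f : α → E, (∀ x, f x ∈ C x) → HasOscLT f δ → ∀ δ' > 0,
      ∃ g : α → E, (∀ x, g x ∈ C x) ∧ HasOscLT g δ' ∧ ∀ x, dist (f x) (g x) ≤ ε)
    (hε : 0 < ε) :
    ∃ δ > 0, ∀ f : α → E, (∀ x, f x ∈ C x) → HasOscLT f δ →
      ∃ g : α → E, (∀ x, g x ∈ C x) ∧ Continuous g ∧ ∀ x, dist (f x) (g x) ≤ ε := by
  have hpos (n : ℕ) : 0 < ε / 2 / 2 ^ n := by positivity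
  choose δ hδ hstep using fun n => href _ (hpos n)
  choose! next hnextC hnextO hnext using fun n f hf ho =>
    hstep n f hf ho (min (δ (n + 1)) (ε / 2 / 2 ^ (n + 1))) (lt_min (hδ _) (hpos _))
  refine ⟨min (δ 0) (ε / 2 / 2 ^ 0), lt_min (hδ 0) (hpos 0), fun f hf ho => ?_⟩
  let s : ℕ → α → E := fun n => Nat.rec f next n
  have hs (n : ℕ) : (∀ x, s n x ∈ C x) ∧ HasOscLT (s n) (min (δ n) (ε / 2 / 2 ^ n)) := by
    induction n with
    | zero => exact ⟨hf, ho⟩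
    | succ n ih =>
      have ihδ := ih.2.mono (min_le_left _ _)
      exact ⟨hnextC n _ ih.1 ihδ, hnextO n _ ih.1 ihδ⟩
  have hdist (x : α) (n : ℕ) : dist (s n x) (s (n + 1) x) ≤ ε / 2 / 2 ^ n :=
    hnext n _ (hs n).1 ((hs n).2.mono (min_le_left _ _)) x
  choose g hg using fun x => cauchySeq_tendsto_of_complete (cauchySeq_of_le_geometric_two (hdist x))
  have hsg (n : ℕ) (x : α) : dist (s n x) (g x) ≤ ε / 2 ^ n :=
    dist_le_of_le_geometric_two_of_tendsto (hdist x) (hg x) n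
  refine ⟨g, fun x => (hC x).mem_of_tendsto (hg x) (.of_forall fun n => (hs n).1 x),
    continuous_of_forall_hasOscLT fun η hη => ?_, fun x => by simpa [s] using hsg 0 x⟩
  have hlim : Tendsto (fun n : ℕ => ε / 2 / 2 ^ n + 2 * (ε / 2 ^ n)) atTop (𝓝 0) := by
    have h (c : ℝ) := tendsto_const_nhds.div_atTop (a := c)
      (tendsto_pow_atTop_atTop_of_one_lt (one_lt_two (α := ℝ)))
    simpa using (h (ε / 2)).add ((h ε).const_mul 2)
  obtain ⟨n, hn⟩ := (hlim.eventually_lt_const hη).exists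
  exact (((hs n).2.mono (min_le_right _ _)).of_dist_le (hsg n)).mono hn.le

end Oscillation

/-! ### Gluing along the integer grid -/

section Grid

/-- The fractional part of a real number, as a point of the unit interval. -/
noncomputable def unitFract (t : ℝ) : I :=
  ⟨Int.fract t, Int.fract_nonneg t, (Int.fract_lt_one t).le⟩

/-- The closed unit square with lower left corner `k`. -/
def unitCell (k : ℤ × ℤ) : Set (ℝ × ℝ) := Icc (k.1 : ℝ) (k.1 + 1) ×ˢ Icc (k.2 : ℝ) (k.2 + 1)

lemma mem_unitCell_floor (z : ℝ × ℝ) : z ∈ unitCell (⌊z.1⌋, ⌊z.2⌋) :=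
  ⟨⟨Int.floor_le _, (Int.lt_floor_add_one _).le⟩, Int.floor_le _, (Int.lt_floor_add_one _).le⟩

lemma locallyFinite_unitCell : LocallyFinite unitCell := by
  intro z
  have hfin (t : ℝ) : {i : ℤ | (Icc (i : ℝ) (i + 1) ∩ ball t 1).Nonempty}.Finite := by
    refine (finite_Icc ⌊t - 2⌋ ⌈t + 2⌉).subset ?_
    rintro i ⟨s, hs, hst⟩
    rw [mem_ball, Real.dist_eq, abs_lt] at hst
    exact ⟨Int.floor_le_iff.2 (by linarith [hs.2]), Int.le_ceil_iff.2 (by linarith [hs.1])⟩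
  refine ⟨ball z 1, ball_mem_nhds z one_pos, ((hfin z.1).prod (hfin z.2)).subset ?_⟩
  rintro k ⟨w, hwk, hw⟩
  rw [← ball_prod_same] at hw
  exact ⟨⟨w.1, hwk.1, hw.1⟩, ⟨w.2, hwk.2, hw.2⟩⟩

lemma eq_projIcc_of_mem_Icc {X : Type*} {p : ℤ → I → X} (hp : ∀ i, p i 1 = p (i + 1) 0) {i : ℤ}
    {t : ℝ} (ht : t ∈ Icc (i : ℝ) (i + 1)) :
    p ⌊t⌋ (unitFract t) = p i (projIcc 0 1 zero_le_one (t - i)) := by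
  rcases ht.2.lt_or_eq with hlt | rfl
  · obtain rfl : ⌊t⌋ = i := Int.floor_eq_iff.2 ⟨ht.1, hlt⟩
    exact congrArg _ (projIcc_of_mem _ (unitFract t).2).symm
  · have hfloor : ⌊(i : ℝ) + 1⌋ = i + 1 := by simp
    have hfract : unitFract ((i : ℝ) + 1) = 0 := Subtype.ext (by simp [unitFract])
    rw [hfloor, hfract, ← hp, add_sub_cancel_left, projIcc_right]
    rfl

/-- The `i`-th subdivision point of the unit interval for the mesh `1 / (n + 1)`, clamped to the
interval for `i` out of range. -/
noncomputable def gridPoint (n : ℕ) (i : ℤ) : I := projIcc 0 1 zero_le_one (i / (n + 1) : ℝ)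

lemma dist_gridPoint_le (n : ℕ) (i : ℤ) (t : ℝ) (ht : |(n + 1) * t - i| ≤ 1) :
    dist (projIcc 0 1 zero_le_one t) (gridPoint n i) ≤ 1 / (n + 1) := by
  have hn : (0 : ℝ) < n + 1 := n.cast_add_one_pos
  have h : |t - i / (n + 1)| ≤ 1 / (n + 1) := by
    rw [le_div_iff₀ hn, ← abs_of_pos hn, ← abs_mul, abs_of_pos hn]
    rwa [sub_mul, div_mul_cancel₀ _ hn.ne', mul_comm]
  have hlip := (LipschitzWith.projIcc (zero_le_one (α := ℝ))).dist_le_mul t (i / (n + 1) : ℝ)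
  rw [NNReal.coe_one, one_mul] at hlip
  exact hlip.trans h

lemma dist_gridPoint_succ_le (n : ℕ) (i : ℤ) :
    dist (gridPoint n i) (gridPoint n (i + 1)) ≤ 1 / (n + 1) := by
  refine dist_gridPoint_le n (i + 1) _ ?_
  rw [mul_div_cancel₀ _ n.cast_add_one_pos.ne']
  simp

lemma dist_gridPoint_floor_le (n : ℕ) (t : I) :
    dist t (gridPoint n ⌊(n + 1) * (t : ℝ)⌋) ≤ 1 / (n + 1) := by
  have h := dist_gridPoint_le n ⌊(n + 1) * (t : ℝ)⌋ t
  rw [projIcc_val] at h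
  refine h (abs_le.2 ⟨?_, ?_⟩)
  · linarith [Int.floor_le ((n + 1) * (t : ℝ))]
  · linarith [Int.lt_floor_add_one ((n + 1) * (t : ℝ))]

lemma unitFract_mul_of_eq_zero_or_one (n : ℕ) {t : I} (ht : t = 0 ∨ t = 1) :
    unitFract ((n + 1) * (t : ℝ)) = 0 := by
  rcases ht with rfl | rfl <;> exact Subtype.ext (by simp [unitFract])

lemma gridPoint_floor_of_eq_zero_or_one (n : ℕ) {t : I} (ht : t = 0 ∨ t = 1) :
    gridPoint n ⌊(n + 1) * (t : ℝ)⌋ = t := by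
  rcases ht with rfl | rfl
  · simp [gridPoint]
  · simp [gridPoint, div_self (n.cast_add_one_pos (α := ℝ)).ne']

variable {E : Type*} [PseudoMetricSpace E] {δ : ℝ}

lemma hasOscLT_glue {p : ℤ → ℤ → I → I → E}
    (hp : ∀ i j, HasOscLT (fun z : I × I => p i j z.1 z.2) δ)
    (hp₁ : ∀ i j t, p i j 1 t = p (i + 1) j 0 t) (hp₂ : ∀ i j s, p i j s 1 = p i (j + 1) s 0) :
    HasOscLT (fun z : ℝ × ℝ => p ⌊z.1⌋ ⌊z.2⌋ (unitFract z.1) (unitFract z.2)) δ := by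
  let proj (k : ℤ × ℤ) (z : ℝ × ℝ) : I × I :=
    (projIcc 0 1 zero_le_one (z.1 - k.1), projIcc 0 1 zero_le_one (z.2 - k.2))
  have hproj (k : ℤ × ℤ) : Continuous (proj k) :=
    (continuous_projIcc.comp (by fun_prop)).prodMk (continuous_projIcc.comp (by fun_prop))
  refine HasOscLT.of_locallyFinite locallyFinite_unitCell
    (fun k => isClosed_Icc.prod isClosed_Icc)
    (iUnion_eq_univ_iff.2 fun z => ⟨_, mem_unitCell_floor z⟩)
    (fun k => (hp k.1 k.2).comp (hproj k)) fun k z hz => ?_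
  have h₂ : p ⌊z.1⌋ ⌊z.2⌋ (unitFract z.1) (unitFract z.2) =
      p ⌊z.1⌋ k.2 (unitFract z.1) (proj k z).2 :=
    eq_projIcc_of_mem_Icc (p := fun j => p ⌊z.1⌋ j (unitFract z.1)) (fun j => hp₂ _ j _) hz.2
  exact h₂.trans (eq_projIcc_of_mem_Icc (p := fun i s => p i k.2 s (proj k z).2)
    (fun i => hp₁ i _ _) hz.1)

lemma hasOscLT_glue_line {p : ℤ → I → E} (hp : ∀ i, HasOscLT (p i) δ)
    (hp₁ : ∀ i, p i 1 = p (i + 1) 0) :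
    HasOscLT (fun t : ℝ => p ⌊t⌋ (unitFract t)) δ :=
  (hasOscLT_glue (p := fun i _ s _ => p i s) (fun i _ => (hp i).comp continuous_fst)
    (fun i _ _ => hp₁ i) fun _ _ _ => rfl).comp
    (continuous_id.prodMk (continuous_const (y := (0 : ℝ))))

end Grid

/-! ### Paths in uniformly locally connected sets -/

section Paths

variable {E : Type*} [PseudoMetricSpace E] {K T : Set E} {x y : E} {δ ε : ℝ}

lemma HasOscLT.trans {f g : I → E} (hf : HasOscLT f δ) (hg : HasOscLT g δ) (h : f 1 = g 0) :
    HasOscLT (fun t : I => if (t : ℝ) ≤ 1 / 2 then f (projIcc 0 1 zero_le_one (2 * t : ℝ))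
      else g (projIcc 0 1 zero_le_one (2 * t - 1 : ℝ))) δ := by
  let S (b : Bool) : Set I := if b then {t | (t : ℝ) ≤ 1 / 2} else {t | 1 / 2 ≤ (t : ℝ)}
  have hS (b : Bool) : IsClosed (S b) := by
    cases b
    · exact isClosed_le continuous_const continuous_subtype_val
    · exact isClosed_le continuous_subtype_val continuous_const
  have hcov : ⋃ b, S b = univ :=
    iUnion_eq_univ_iff.2 fun t => (le_total (t : ℝ) (1 / 2)).elim (⟨true, ·⟩) (⟨false, ·⟩)
  let p (b : Bool) (t : I) : E := if b then f (projIcc 0 1 zero_le_one (2 * t : ℝ))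
    else g (projIcc 0 1 zero_le_one (2 * t - 1 : ℝ))
  have hp (b : Bool) : HasOscLT (p b) δ := by
    cases b
    · exact hg.comp (continuous_projIcc.comp (by fun_prop))
    · exact hf.comp (continuous_projIcc.comp (by fun_prop))
  refine HasOscLT.of_locallyFinite (locallyFinite_of_finite S) hS hcov hp fun b t ht => ?_
  cases b
  · rcases (show 1 / 2 ≤ (t : ℝ) from ht).eq_or_lt with heq | hlt
    · simpa [p, ← heq] using h
    · exact if_neg hlt.not_ge
  · exact if_pos ht

lemma hasOscLT_jump (h : dist x y < δ) : HasOscLT (fun t : I => if t = 1 then y else x) δ := by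
  refine fun t => .of_forall fun s => ?_
  have hδ : 0 < δ := dist_nonneg.trans_lt h
  dsimp only
  split_ifs <;> simp [hδ, h, dist_comm y x]

lemma exists_hasOscLT_of_isPreconnected (hT : IsPreconnected T) (hx : x ∈ T) (hy : y ∈ T)
    (hδ : 0 < δ) :
    ∃ f : I → E, (∀ t, f t ∈ T) ∧ HasOscLT f δ ∧ f 0 = x ∧ f 1 = y := by
  have jump {x y : E} (hx : x ∈ T) (hy : y ∈ T) (hxy : dist x y < δ) :
      ∃ f : I → E, (∀ t, f t ∈ T) ∧ HasOscLT f δ ∧ f 0 = x ∧ f 1 = y := by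
    refine ⟨_, fun t => ?_, hasOscLT_jump hxy, if_neg zero_ne_one, if_pos rfl⟩
    split_ifs <;> assumption
  refine hT.induction₂' (fun x y => ∃ f : I → E, (∀ t, f t ∈ T) ∧ HasOscLT f δ ∧ f 0 = x ∧ f 1 = y)
    (fun x hx => ?_) ?_ hx hy
  · filter_upwards [self_mem_nhdsWithin, nhdsWithin_le_nhds (ball_mem_nhds x hδ)] with y hy hyx
    exact ⟨jump hx hy (mem_ball'.1 hyx), jump hy hx hyx⟩
  · rintro x y z - - - ⟨f, hfT, hf, rfl, rfl⟩ ⟨g, hgT, hg, hfg, rfl⟩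
    refine ⟨_, fun t => ?_, hf.trans hg hfg.symm, ?_, ?_⟩
    · split_ifs
      exacts [hfT _, hgT _]
    · simp
    · norm_num

lemma exists_hasOscLT_or_eq (hT : IsPreconnected T) (hx : x ∈ T) (hy : y ∈ T) (hδ : 0 < δ) :
    ∃ f : I → E, (∀ t, f t ∈ T) ∧ HasOscLT f δ ∧ f 0 = x ∧ f 1 = y ∧
      (dist x y < δ → ∀ t, f t = x ∨ f t = y) := by
  by_cases h : dist x y < δ
  · refine ⟨_, fun t => ?_, hasOscLT_jump h, if_neg zero_ne_one, if_pos rfl, fun _ t => ?_⟩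
    · split_ifs <;> assumption
    · exact (ite_eq_or_eq ..).symm
  · obtain ⟨f, hfT, hf, hf₀, hf₁⟩ := exists_hasOscLT_of_isPreconnected hT hx hy hδ
    exact ⟨f, hfT, hf, hf₀, hf₁, fun h' => absurd h' h⟩

lemma exists_refinement_of_join {f : I → E} (hf : HasOscLT f δ)
    (hjoin : ∀ s t, dist (f s) (f t) < 2 * δ →
      ∃ T ⊆ K ∩ closedBall (f s) ε, IsPreconnected T ∧ f s ∈ T ∧ f t ∈ T)
    {η : ℝ} (hη : 0 < η) :
    ∃ g : I → E, (∀ t, g t ∈ K) ∧ HasOscLT g η ∧ g 0 = f 0 ∧ g 1 = f 1 ∧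
      ∀ t, dist (f t) (g t) ≤ 2 * δ + ε := by
  obtain ⟨r, hr, hfr⟩ := hf.exists_forall_dist_lt
  obtain ⟨n, hn⟩ := exists_nat_one_div_lt hr
  have hnext (i : ℤ) : dist (f (gridPoint n i)) (f (gridPoint n (i + 1))) < 2 * δ :=
    hfr _ _ ((dist_gridPoint_succ_le n i).trans_lt hn)
  choose T hTK hT hT₀ hT₁ using fun i => hjoin _ _ (hnext i)
  choose p hpT hp hp₀ hp₁ using fun i =>
    exists_hasOscLT_of_isPreconnected (hT i) (hT₀ i) (hT₁ i) hη
  have hend {t : I} (ht : t = 0 ∨ t = 1) :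
      p ⌊(n + 1) * (t : ℝ)⌋ (unitFract ((n + 1) * (t : ℝ))) = f t := by
    rw [unitFract_mul_of_eq_zero_or_one n ht, hp₀, gridPoint_floor_of_eq_zero_or_one n ht]
  refine ⟨fun t => p ⌊(n + 1) * (t : ℝ)⌋ (unitFract ((n + 1) * (t : ℝ))),
    fun t => (hTK _ (hpT _ _)).1,
    (hasOscLT_glue_line hp fun i => (hp₁ i).trans (hp₀ (i + 1)).symm).comp (by fun_prop),
    hend (.inl rfl), hend (.inr rfl), fun t => ?_⟩
  refine (dist_triangle_right _ _ (f (gridPoint n ⌊(n + 1) * (t : ℝ)⌋))).trans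
    (add_le_add (hfr _ _ ?_).le (mem_closedBall.1 (hTK _ (hpT _ _)).2))
  exact (dist_gridPoint_floor_le n t).trans_lt hn

end Paths

/-! ### Uniformly locally connected sets -/

section LocallyConnected

variable {E : Type*} [MetricSpace E] {K T : Set E} {x y : E}

/-- Points of `K` at small distance lie in a small connected subset of `K`, uniformly on `K`. -/
def UniformlyLocallyConnected (K : Set E) : Prop :=
  ∀ ε > 0, ∃ δ > 0, ∀ x ∈ K, ∀ y ∈ K, dist x y < δ →
    y ∈ connectedComponentIn (K ∩ closedBall x ε) x

/-- Step functions with small jumps in `K` are refined to step functions with smaller jumps; in the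
limit they become paths. -/
theorem UniformlyLocallyConnected.exists_path_near [CompleteSpace E]
    (hK : UniformlyLocallyConnected K) (hKc : IsClosed K) (hT : IsPreconnected T) (hTK : T ⊆ K)
    (hx : x ∈ T) (hy : y ∈ T) {ε : ℝ} (hε : 0 < ε) :
    ∃ γ : Path x y, ∀ t, γ t ∈ K ∧ ∃ z ∈ T, dist z (γ t) ≤ ε := by
  let C (t : I) : Set E := {z | z ∈ K ∧ (t = 0 → z = x) ∧ (t = 1 → z = y)}
  have hC (t : I) : IsClosed (C t) := by
    have himp (p : Prop) (w : E) : IsClosed {z | p → z = w} := by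
      by_cases hp : p <;> simp [hp]
    exact hKc.inter ((himp _ x).inter (himp _ y))
  have hrefine : ∀ ε > 0, ∃ δ > 0, ∀ f : I → E, (∀ t, f t ∈ C t) → HasOscLT f δ →
      ∀ η > 0, ∃ g, (∀ t, g t ∈ C t) ∧ HasOscLT g η ∧ ∀ t, dist (f t) (g t) ≤ ε := by
    intro ε hε
    obtain ⟨δ, hδ, hKδ⟩ := hK (ε / 2) (half_pos hε)
    refine ⟨min δ (ε / 2) / 2, by positivity, fun f hfC hf η hη => ?_⟩
    obtain ⟨g, hgK, hg, hg₀, hg₁, hfg⟩ := exists_refinement_of_join (K := K) (ε := ε / 2) hf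
      (fun s t hst => ⟨_, connectedComponentIn_subset _ _, isPreconnected_connectedComponentIn,
        mem_connectedComponentIn ⟨(hfC s).1, mem_closedBall_self (half_pos hε).le⟩,
        hKδ _ (hfC s).1 _ (hfC t).1 (by linarith [min_le_left δ (ε / 2)])⟩) hη
    refine ⟨g, fun t => ⟨hgK t, ?_, ?_⟩, hg, fun t => ?_⟩
    · rintro rfl
      exact hg₀.trans ((hfC 0).2.1 rfl)
    · rintro rfl
      exact hg₁.trans ((hfC 1).2.2 rfl)
    · linarith [hfg t, min_le_right δ (ε / 2)]
  obtain ⟨δ, hδ, h⟩ := exists_continuous_forall_mem_of_refine hC hrefine hε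
  obtain ⟨f, hfT, hf, hf₀, hf₁⟩ := exists_hasOscLT_of_isPreconnected hT hx hy hδ
  obtain ⟨g, hgC, hg, hfg⟩ := h f
    (fun t => ⟨hTK (hfT t), by rintro rfl; exact hf₀, by rintro rfl; exact hf₁⟩) hf
  exact ⟨⟨⟨g, hg⟩, (hgC 0).2.1 rfl, (hgC 1).2.2 rfl⟩, fun t => ⟨(hgC t).1, f t, hfT t, hfg t⟩⟩

lemma UniformlyLocallyConnected.exists_small_path [CompleteSpace E]
    (hK : UniformlyLocallyConnected K) (hKc : IsClosed K) {ε : ℝ} (hε : 0 < ε) :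
    ∃ δ > 0, ∀ x y : K, dist x y < δ → ∃ γ : Path x y, ∀ t, dist x (γ t) ≤ ε := by
  obtain ⟨δ, hδ, h⟩ := hK (ε / 2) (half_pos hε)
  refine ⟨δ, hδ, fun x y hxy => ?_⟩
  obtain ⟨γ, hγ⟩ := hK.exists_path_near hKc isPreconnected_connectedComponentIn
    ((connectedComponentIn_subset _ _).trans inter_subset_left)
    (mem_connectedComponentIn ⟨x.2, mem_closedBall_self (half_pos hε).le⟩)
    (h x x.2 y y.2 hxy) (half_pos hε)
  refine ⟨⟨⟨fun t => ⟨γ t, (hγ t).1⟩, γ.continuous.subtype_mk _⟩, Subtype.ext γ.source,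
    Subtype.ext γ.target⟩, fun t => ?_⟩
  obtain ⟨z, hz, hzγ⟩ := (hγ t).2
  have hxz : dist z x ≤ ε / 2 := (connectedComponentIn_subset _ _ hz).2
  change dist (x : E) (γ t) ≤ ε
  linarith [dist_triangle_left (x : E) (γ t) z]

lemma UniformlyLocallyConnected.isPathConnected [CompleteSpace E]
    (hK : UniformlyLocallyConnected K) (hKc : IsClosed K) (hKp : IsConnected K) :
    IsPathConnected K := by
  refine isPathConnected_iff.2 ⟨hKp.nonempty, fun x hx y hy => ?_⟩
  obtain ⟨γ, hγ⟩ := hK.exists_path_near hKc hKp.isPreconnected subset_rfl hx hy one_pos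
  exact ⟨γ, fun t => (hγ t).1⟩

/-- The path from `p` to `q` is chosen almost as short as possible, so that one choice serves all
scales. -/
theorem UniformlyLocallyConnected.exists_paths [CompleteSpace E]
    (hK : UniformlyLocallyConnected K) (hKc : IsClosed K) (hKp : IsPreconnected K) :
    ∃ path : ∀ x y : K, Path x y,
      ∀ ε > 0, ∃ δ > 0, ∀ x y, dist x y < δ → ∀ t, dist x (path x y t) ≤ ε := by
  have hbest (x y : K) : ∃ γ : Path x y, ∀ (γ' : Path x y) (r : ℝ),
      (∀ t, dist x (γ' t) ≤ r) → ∀ t, dist x (γ t) ≤ r + dist x y := by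
    rcases eq_or_ne x y with rfl | hxy
    · refine ⟨.refl x, fun γ' r hr t => ?_⟩
      simpa using hr 0
    let radii : Set ℝ := {r | ∃ γ : Path x y, ∀ t, dist x (γ t) ≤ r}
    have hne : radii.Nonempty := by
      obtain ⟨γ⟩ :=
        ((hK.isPathConnected hKc ⟨⟨x, x.2⟩, hKp⟩).joinedIn x x.2 y y.2).joined_subtype
      obtain ⟨r, hr⟩ := (isCompact_range γ.continuous).isBounded.subset_closedBall x
      exact ⟨r, γ, fun t => mem_closedBall'.1 (hr (mem_range_self t))⟩
    have hbdd : BddBelow radii := ⟨0, fun r ⟨γ, hr⟩ => dist_nonneg.trans (hr 0)⟩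
    obtain ⟨r, ⟨γ, hγ⟩, hr⟩ := Real.lt_sInf_add_pos hne (dist_pos.2 hxy)
    exact ⟨γ, fun γ' r' hr' t => (hγ t).trans (hr.le.trans
      (add_le_add_left (csInf_le hbdd ⟨γ', hr'⟩) _))⟩
  choose path hpath using hbest
  refine ⟨path, fun ε hε => ?_⟩
  obtain ⟨δ, hδ, h⟩ := hK.exists_small_path hKc (half_pos hε)
  refine ⟨min δ (ε / 2), by positivity, fun x y hxy t => ?_⟩
  obtain ⟨γ, hγ⟩ := h x y (hxy.trans_le (min_le_left _ _))
  linarith [hpath x y γ _ hγ t, min_le_right δ (ε / 2)]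

end LocallyConnected

lemma uniformlyLocallyConnected_of_locallyConnectedSpace {E : Type*} [MetricSpace E] {K : Set E}
    (hK : IsCompact K) [LocallyConnectedSpace K] : UniformlyLocallyConnected K := by
  intro ε hε
  have : CompactSpace K := isCompact_iff_compactSpace.1 hK
  obtain ⟨δ, hδ, h⟩ := uniformity_basis_dist.lebesgue_number_lemma_nhds isCompact_univ
    fun (x : K) _ => connectedComponentIn_mem_nhds (ball_mem_nhds x (half_pos hε))
  refine ⟨δ, hδ, fun x hx y hy hxy => ?_⟩
  obtain ⟨z, hz⟩ := h ⟨x, hx⟩ (mem_univ _)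
  have hsub : connectedComponentIn (ball z (ε / 2)) z ⊆ closedBall ⟨x, hx⟩ ε := fun w hw => by
    have h₁ := mem_ball.1 (connectedComponentIn_subset _ _ hw)
    have h₂ := mem_ball'.1 (connectedComponentIn_subset _ _ (hz (mem_ball_self hδ)))
    exact mem_closedBall.2 ((dist_triangle w z ⟨x, hx⟩).trans (by linarith))
  refine (isPreconnected_connectedComponentIn.image (f := ((↑) : K → E))
    continuous_subtype_val.continuousOn).subset_connectedComponentIn
    ⟨_, hz (mem_ball_self hδ), rfl⟩ ?_ ⟨⟨y, hy⟩, hz hxy, rfl⟩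
  rintro _ ⟨w, hw, rfl⟩
  exact ⟨w.2, hsub hw⟩

lemma uniformlyLocallyConnected_range {α E : Type*} [TopologicalSpace α] [CompactSpace α]
    [LocallyConnectedSpace α] [MetricSpace E] {f : α → E} (hf : Continuous f) :
    UniformlyLocallyConnected (range f) := by
  have hquot : IsQuotientMap (rangeFactorization f) :=
    IsQuotientMap.of_surjective_continuous rangeFactorization_surjective
      (hf.subtype_mk _)
  have := hquot.isCoinducing.locallyConnectedSpace
  exact uniformlyLocallyConnected_of_locallyConnectedSpace (isCompact_range hf)

lemma dist_le_of_mem_segment {E : Type*} [SeminormedAddCommGroup E] [NormedSpace ℝ E] {x y p q : E}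
    (hp : p ∈ segment ℝ x y) (hq : q ∈ segment ℝ x y) : dist p q ≤ dist x y := by
  rw [← convexHull_pair] at hp hq
  have := dist_le_diam_of_mem (isBounded_convexHull.2 (toFinite {x, y}).isBounded) hp hq
  rwa [convexHull_diam, diam_pair] at this

lemma UniformlyLocallyConnected.filledHull {P : Set ℂ} (h : UniformlyLocallyConnected P)
    (hP : IsClosed P) : UniformlyLocallyConnected (filledHull P) := by
  intro ε hε
  obtain ⟨δ, hδ, hPδ⟩ := h (ε / 2) (half_pos hε)
  refine ⟨min δ (ε / 2), by positivity, fun x hx y hy hxy => ?_⟩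
  have hball : segment ℝ x y ⊆ closedBall x (ε / 2) :=
    (convex_closedBall x _).segment_subset (mem_closedBall_self (by positivity))
      (mem_closedBall'.2 (hxy.le.trans (min_le_right _ _)))
  have hball_closed : segment ℝ x y ⊆ closedBall x ε :=
    hball.trans (closedBall_subset_closedBall (by linarith))
  by_cases hs : segment ℝ x y ⊆ PlanarHelly.filledHull P
  · exact (convex_segment x y).isPreconnected.subset_connectedComponentIn (left_mem_segment ℝ x y)
      (subset_inter hs hball_closed) (right_mem_segment ℝ x y)
  obtain ⟨p, hp, hpxy, hxp⟩ := exists_segment_subset_filledHull hP hx hs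
  obtain ⟨q, hq, hqxy, hyq⟩ :=
    exists_segment_subset_filledHull hP hy (segment_symm ℝ x y ▸ hs)
  rw [segment_symm] at hqxy
  have hpq : dist p q < δ :=
    (dist_le_of_mem_segment hpxy hqxy).trans_lt (hxy.trans_le (min_le_left _ _))
  set C := connectedComponentIn (P ∩ closedBall p (ε / 2)) p
  have hpC : p ∈ C := mem_connectedComponentIn ⟨hp, mem_closedBall_self (by positivity)⟩
  have hqC : q ∈ C := hPδ p hp q hq hpq
  have hC : C ⊆ P ∩ closedBall p (ε / 2) := connectedComponentIn_subset _ _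
  have hpre : IsPreconnected (segment ℝ x p ∪ C ∪ segment ℝ y q) :=
    ((convex_segment x p).isPreconnected.union p (right_mem_segment _ _ _) hpC
      isPreconnected_connectedComponentIn).union q (Or.inr hqC) (right_mem_segment _ _ _)
      (convex_segment y q).isPreconnected
  refine hpre.subset_connectedComponentIn (Or.inl (Or.inl (left_mem_segment _ _ _)))
    (union_subset (union_subset (subset_inter hxp ?_) (subset_inter ?_ fun z hz => ?_))
      (subset_inter hyq ?_)) (Or.inr (left_mem_segment _ _ _))
  · exact ((convex_segment x y).segment_subset (left_mem_segment _ _ _) hpxy).trans hball_closed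
  · exact (hC.trans inter_subset_left).trans (subset_filledHull P)
  · exact (closedBall_subset_closedBall' (by linarith [mem_closedBall.1 (hball hpxy)])) (hC hz).2
  · exact ((convex_segment x y).segment_subset (right_mem_segment _ _ _) hqxy).trans hball_closed

/-- Apply `mem_connectedComponentIn_inter` to `K`, `L` and the hull of small connected subsets of
`K` and `L` joining the two points. -/
lemma UniformlyLocallyConnected.connectedComponentIn_inter {K L : Set ℂ} (hK : IsNonseparating K)
    (hL : IsNonseparating L) (hKu : UniformlyLocallyConnected K)
    (hLu : UniformlyLocallyConnected L) (a : ℂ) :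
    UniformlyLocallyConnected (connectedComponentIn (K ∩ L) a) := by
  intro ε hε
  obtain ⟨δ, hδ, hKδ⟩ := hKu ε hε
  obtain ⟨δ', hδ', hLδ⟩ := hLu ε hε
  refine ⟨min δ δ', by positivity, fun x hx y hy hxy => ?_⟩
  have hxKL := connectedComponentIn_subset _ _ hx
  have hyKL := connectedComponentIn_subset _ _ hy
  have hxyB := mem_connectedComponentIn_inter hK hL (isNonseparating_closedBall x ε)
    (by rwa [← connectedComponentIn_eq hx])
    (hKδ x hxKL.1 y hyKL.1 (hxy.trans_le (min_le_left _ _)))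
    (hLδ x hxKL.2 y hyKL.2 (hxy.trans_le (min_le_right _ _)))
  refine isPreconnected_connectedComponentIn.subset_connectedComponentIn
    (mem_connectedComponentIn (F := K ∩ L ∩ closedBall x ε)
      ⟨hxKL, mem_closedBall_self hε.le⟩) (subset_inter ?_ fun z hz => ?_)
    hxyB
  · rw [connectedComponentIn_eq hx]
    exact connectedComponentIn_mono _ inter_subset_left
  · exact (connectedComponentIn_subset _ _ hz).2

/-! ### Pushing maps off a connected unbounded set -/

section Push

variable {α : Type*} [TopologicalSpace α]

lemma exists_continuous_le_dist {E : Type*} [NormedAddCommGroup E] [NormedSpace ℝ E] {g : α → E}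
    (hg : Continuous g) {c : E} {r : ℝ} (hc : ∀ x, g x ≠ c) :
    ∃ g' : α → E, Continuous g' ∧ ∀ x, r ≤ dist (g' x) c ∧
      (r ≤ dist (g x) c → g' x = g x) ∧ (g' x = g x ∨ g' x ∈ sphere c r) := by
  have hne (x : α) : 0 < dist (g x) c := dist_pos.2 (hc x)
  refine ⟨fun x => c + max 1 (r / dist (g x) c) • (g x - c), ?_, fun x => ?_⟩
  · have hdist : Continuous fun x => r / dist (g x) c :=
      continuous_const.div (hg.dist continuous_const) fun x => (hne x).ne'
    exact continuous_const.add ((continuous_const.max hdist).smul (hg.sub continuous_const))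
  have hdist : dist (c + max 1 (r / dist (g x) c) • (g x - c)) c = max (dist (g x) c) r := by
    rw [dist_eq_norm, add_sub_cancel_left, norm_smul, Real.norm_of_nonneg (by positivity),
      ← dist_eq_norm, max_mul_of_nonneg _ _ dist_nonneg, one_mul, div_mul_cancel₀ _ (hne x).ne']
  have heq (h : r ≤ dist (g x) c) : c + max 1 (r / dist (g x) c) • (g x - c) = g x := by
    rw [max_eq_left ((div_le_one (hne x)).2 h), one_smul, add_sub_cancel]
  refine ⟨(le_max_right _ _).trans_eq hdist.symm, heq, ?_⟩
  rcases le_or_gt r (dist (g x) c) with h | h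
  · exact Or.inl (heq h)
  · exact Or.inr (hdist.trans (max_eq_right h.le))

/-- The union of the horizontal and vertical lines through the integer points. -/
def gridLines : Set (ℝ × ℝ) := {w | w.1 ∈ range ((↑) : ℤ → ℝ) ∨ w.2 ∈ range ((↑) : ℤ → ℝ)}

/-- The centre of the unit square with lower left corner `k`; the open square is the ball of radius
`1 / 2` about it. -/
noncomputable def cellCenter (k : ℤ × ℤ) : ℝ × ℝ := (k.1 + 1 / 2, k.2 + 1 / 2)

lemma dist_cellCenter_floor (w : ℝ × ℝ) : dist w (cellCenter (⌊w.1⌋, ⌊w.2⌋)) ≤ 1 / 2 := by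
  have h (a : ℝ) : dist a (⌊a⌋ + 1 / 2) ≤ 1 / 2 := abs_le.2
    ⟨by linarith [Int.floor_le a], by linarith [Int.lt_floor_add_one a]⟩
  exact max_le (h _) (h _)

lemma mem_ball_cellCenter {w : ℝ × ℝ} (hw : w ∉ gridLines) :
    w ∈ ball (cellCenter (⌊w.1⌋, ⌊w.2⌋)) (1 / 2) := by
  have h {a : ℝ} (ha : a ∉ range ((↑) : ℤ → ℝ)) : dist a (⌊a⌋ + 1 / 2) < 1 / 2 := abs_lt.2
    ⟨by linarith [(Int.floor_le a).lt_of_ne fun h => ha ⟨_, h⟩],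
      by linarith [Int.lt_floor_add_one a]⟩
  rw [gridLines, mem_ofPred_eq, not_or] at hw
  exact max_lt (h hw.1) (h hw.2)

lemma notMem_ball_cellCenter {w : ℝ × ℝ} (hw : w ∈ gridLines) (k : ℤ × ℤ) :
    w ∉ ball (cellCenter k) (1 / 2) := by
  have h (n m : ℤ) : 1 / 2 ≤ dist (n : ℝ) (m + 1 / 2) := by
    rw [Real.dist_eq, le_abs]
    rcases le_or_gt n m with hnm | hnm
    · right
      linarith [(Int.cast_le (R := ℝ)).2 hnm]
    · left
      have : (m + 1 : ℝ) ≤ n := by exact_mod_cast hnm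
      linarith
  rw [mem_ball, not_lt]
  rcases hw with ⟨n, hn⟩ | ⟨n, hn⟩
  · exact (hn ▸ h n k.1).trans (le_max_left _ _)
  · exact (hn ▸ h n k.2).trans (le_max_right _ _)

lemma sphere_cellCenter_subset (k : ℤ × ℤ) : sphere (cellCenter k) (3 / 2) ⊆ gridLines := by
  have h {a : ℝ} {n : ℤ} (ha : dist a (n + 1 / 2) = 3 / 2) : a ∈ range ((↑) : ℤ → ℝ) := by
    rcases (abs_eq (by norm_num)).1 ha with ha | ha
    · exact ⟨n + 2, by push_cast; linarith⟩
    · exact ⟨n - 1, by push_cast; linarith⟩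
  intro w (hw : max _ _ = _)
  rcases max_choice (dist w.1 (cellCenter k).1) (dist w.2 (cellCenter k).2) with h' | h'
  · exact Or.inl (h (h'.symm.trans hw))
  · exact Or.inr (h (h'.symm.trans hw))

lemma dist_cellCenter_floor_le_one {v w : ℝ × ℝ} (h : dist v w < 1) :
    dist (cellCenter (⌊v.1⌋, ⌊v.2⌋)) (cellCenter (⌊w.1⌋, ⌊w.2⌋)) ≤ 1 := by
  have hfloor {a b : ℝ} (hab : dist a b < 1) : dist ((⌊a⌋ : ℝ) + 1 / 2) (⌊b⌋ + 1 / 2) ≤ 1 := by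
    obtain ⟨h₁, h₂⟩ := abs_lt.1 hab
    have h₃ : ⌊a⌋ < ⌊b⌋ + 2 := Int.floor_lt.2 (by
      push_cast; linarith [Int.lt_floor_add_one b])
    have h₄ : ⌊b⌋ < ⌊a⌋ + 2 := Int.floor_lt.2 (by
      push_cast; linarith [Int.lt_floor_add_one a])
    have h₅ : |⌊a⌋ - ⌊b⌋| ≤ 1 := abs_le.2 ⟨by omega, by omega⟩
    rw [dist_add_right, Real.dist_eq]
    exact_mod_cast h₅
  exact max_le (hfloor ((le_max_left _ _).trans_lt h)) (hfloor ((le_max_right _ _).trans_lt h))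

lemma finite_setOf_ball_cellCenter_inter_nonempty {A : Set (ℝ × ℝ)} (hA : Bornology.IsBounded A) :
    {k | (ball (cellCenter k) (1 / 2) ∩ A).Nonempty}.Finite := by
  obtain ⟨R, hR⟩ := hA.subset_closedBall 0
  have hfin : (closedBall (0 : ℤ × ℤ) (R + 1)).Finite :=
    (isCompact_closedBall _ _).finite_of_discrete
  refine hfin.subset ?_
  rintro k ⟨w, hwk, hwA⟩
  have hk : dist (cellCenter k) 0 ≤ R + 1 / 2 := by
    linarith [dist_triangle_left (cellCenter k) 0 w, mem_ball.1 hwk, mem_closedBall.1 (hR hwA)]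
  have h {n : ℤ} (hn : dist ((n : ℝ) + 1 / 2) 0 ≤ R + 1 / 2) : dist n 0 ≤ R + 1 := by
    rw [Real.dist_0_eq_abs, abs_le] at hn
    rw [Int.dist_eq, Int.cast_zero, sub_zero, abs_le]
    exact ⟨by linarith, by linarith⟩
  exact max_le (h ((le_max_left _ _).trans hk)) (h ((le_max_right _ _).trans hk))

/-- Take a map meeting as few open cells as possible. Around a missed cell, pushing radially away
from its centre onto the boundary of the surrounding block of nine cells meets no new open cell, so
all nine are missed. -/
lemma exists_continuous_forall_cell_missed {f : α → ℝ × ℝ} (hf : Continuous f)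
    (hfb : Bornology.IsBounded (range f)) (B : Set α) :
    ∃ g : α → ℝ × ℝ, Continuous g ∧ EqOn g f B ∧
      {k | (ball (cellCenter k) (1 / 2) ∩ range g).Nonempty}.Finite ∧
      ∀ k, Disjoint (ball (cellCenter k) (1 / 2)) (range g) →
        (∀ x ∈ B, 3 / 2 ≤ dist (f x) (cellCenter k)) → ∀ j, dist (cellCenter j) (cellCenter k) ≤ 1 →
        Disjoint (ball (cellCenter j) (1 / 2)) (range g) := by
  let met (g : α → ℝ × ℝ) : Set (ℤ × ℤ) := {k | (ball (cellCenter k) (1 / 2) ∩ range g).Nonempty}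
  obtain ⟨g, ⟨hg, hgf, hfin⟩, hmin⟩ := exists_minimalFor_of_wellFoundedLT
    (fun g => Continuous g ∧ EqOn g f B ∧ (met g).Finite) (fun g => (met g).ncard)
    ⟨f, hf, eqOn_refl f B, finite_setOf_ball_cellCenter_inter_nonempty hfb⟩
  refine ⟨g, hg, hgf, hfin, fun k hk hkB j hjk => ?_⟩
  obtain ⟨g', hg', h⟩ := exists_continuous_le_dist hg (c := cellCenter k) (r := 3 / 2)
    fun x hx => disjoint_left.1 hk (mem_ball_self (by norm_num)) ⟨x, hx⟩
  have hsub : met g' ⊆ met g := by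
    rintro i ⟨_, hi, x, rfl⟩
    rcases (h x).2.2 with hx | hx
    · exact ⟨g x, hx ▸ hi, x, rfl⟩
    · exact absurd hi (notMem_ball_cellCenter (sphere_cellCenter_subset k hx) i)
  have hg'f : EqOn g' f B := fun x hx => by
    rw [← hgf hx]
    exact (h x).2.1 (hgf hx ▸ hkB x hx)
  have heq : met g' = met g := eq_of_subset_of_ncard_le hsub
    (hmin ⟨hg', hg'f, hfin.subset hsub⟩ (ncard_le_ncard hsub hfin)) hfin
  have hj : j ∉ met g' := by
    rintro ⟨_, hj, x, rfl⟩
    linarith [(h x).1, dist_triangle (g' x) (cellCenter j) (cellCenter k), mem_ball.1 hj]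
  rw [heq] at hj
  exact disjoint_iff_inter_eq_empty.2 (not_nonempty_iff_eq_empty.1 hj)

theorem exists_continuous_mem_gridLines {f : α → ℝ × ℝ} (hf : Continuous f)
    (hfb : Bornology.IsBounded (range f)) {B : Set α} {V : Set (ℝ × ℝ)} (hV : IsPreconnected V)
    (hVb : ¬ Bornology.IsBounded V) (hVB : ∀ x ∈ B, ∀ v ∈ V, 2 ≤ dist (f x) v) :
    ∃ g : α → ℝ × ℝ, Continuous g ∧ EqOn g f B ∧ ∀ x, g x ∈ V → g x ∈ gridLines := by
  obtain ⟨g, hg, hgf, hfin, hmiss⟩ := exists_continuous_forall_cell_missed hf hfb B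
  let Missed (v : ℝ × ℝ) : Prop := Disjoint (ball (cellCenter (⌊v.1⌋, ⌊v.2⌋)) (1 / 2)) (range g)
  have hnear : ∀ v ∈ V, ∀ w, dist w v < 1 → Missed v → Missed w := fun v hv w hwv hmv =>
    hmiss _ hmv (fun x hx => by
      linarith [hVB x hx v hv, dist_triangle_right (f x) v (cellCenter (⌊v.1⌋, ⌊v.2⌋)),
        dist_cellCenter_floor v]) _ (dist_cellCenter_floor_le_one hwv)
  obtain ⟨v₀, hv₀, hmv₀⟩ : ∃ v ∈ V, Missed v := by
    by_contra! hcon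
    refine hVb (((Bornology.isBounded_biUnion hfin).2 fun k _ =>
      isBounded_closedBall (x := cellCenter k) (r := 1 / 2)).subset fun v hv => ?_)
    exact mem_biUnion (not_disjoint_iff_nonempty_inter.1 (hcon v hv)) (dist_cellCenter_floor v)
  have hall : ∀ v ∈ V, Missed v := fun v hv =>
    (hV.induction₂ (fun v w => Missed v ↔ Missed w) (fun v hv => by
      filter_upwards [self_mem_nhdsWithin, mem_nhdsWithin_of_mem_nhds (ball_mem_nhds v one_pos)]
        with w hw hwv
      exact ⟨hnear v hv w hwv, hnear w hw v (mem_ball'.1 hwv)⟩)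
      (fun _ _ _ _ _ _ h h' => h.trans h') (fun _ _ _ _ h => h.symm) hv₀ hv).1 hmv₀
  refine ⟨g, hg, hgf, fun x hx => ?_⟩
  by_contra hgrid
  exact disjoint_left.1 (hall _ hx) (mem_ball_cellCenter hgrid) ⟨x, rfl⟩

end Push

section Extension

lemma eventually_dist_glue_line_lt {X E : Type*} [TopologicalSpace X] [PseudoMetricSpace E] {δ : ℝ}
    {p : ℤ → ℤ → I → E} (hp : ∀ n i, HasOscLT (p n i) δ) (hp₁ : ∀ n i, p n i 1 = p n (i + 1) 0)
    {c d : X → ℝ} (hc : Continuous c) (hd : Continuous d) {x : X}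
    (hx : d x ∈ range ((↑) : ℤ → ℝ)) :
    ∀ᶠ y in 𝓝[{y | d y ∈ range ((↑) : ℤ → ℝ)}] x,
      dist (p ⌊d y⌋ ⌊c y⌋ (unitFract (c y))) (p ⌊d x⌋ ⌊c x⌋ (unitFract (c x))) < δ := by
  obtain ⟨n, hn⟩ := hx
  filter_upwards [self_mem_nhdsWithin, mem_nhdsWithin_of_mem_nhds <|
      hd.continuousAt.preimage_mem_nhds (ball_mem_nhds (d x) one_pos),
    mem_nhdsWithin_of_mem_nhds <| hc.continuousAt.eventually
      (hasOscLT_glue_line (hp n) (hp₁ n) (c x))] with y ⟨m, hm⟩ hyx hosc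
  have hmn : m = n := by
    rw [mem_preimage, mem_ball, ← hm, ← hn, Int.dist_cast_real, Int.dist_eq] at hyx
    rw [← sub_eq_zero, ← Int.abs_lt_one_iff]
    exact_mod_cast hyx
  rwa [← hm, ← hn, hmn, Int.floor_intCast]

lemma eventually_dist_lt_of_eqOn {X E : Type*} [TopologicalSpace X] [PseudoMetricSpace E] {δ : ℝ}
    {A : Set X} (hA : IsClosed A) {e e' : X → E} (he : EqOn e e' A)
    (h : ∀ x ∈ A, ∀ᶠ y in 𝓝[A] x, dist (e' y) (e' x) < δ) (x : X) :
    ∀ᶠ y in 𝓝[A] x, dist (e y) (e x) < δ := by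
  by_cases hx : x ∈ A
  · filter_upwards [self_mem_nhdsWithin, h x hx] with y hy hlt
    rwa [he hy, he hx]
  · rw [notMem_closure_iff_nhdsWithin_eq_bot.1 (hA.closure_eq.symm ▸ hx)]
    exact eventually_bot

lemma dist_floor_le_one (a : ℝ) : dist a ⌊a⌋ ≤ 1 :=
  abs_le.2 ⟨by linarith [Int.floor_le a], by linarith [Int.lt_floor_add_one a]⟩

lemma dist_floor_add_one_le_one (a : ℝ) : dist a ↑(⌊a⌋ + 1) ≤ 1 := by
  push_cast
  exact abs_le.2 ⟨by linarith [Int.floor_le a], by linarith [Int.lt_floor_add_one a]⟩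

lemma exists_map_gridLines {E : Type*} [PseudoMetricSpace E] {δ : ℝ} {N : ℤ × ℤ → E}
    {γ : ℤ × ℤ → ℤ × ℤ → I → E} (hγ : ∀ k k', HasOscLT (γ k k') δ) (hγ₀ : ∀ k k', γ k k' 0 = N k)
    (hγ₁ : ∀ k k', γ k k' 1 = N k') :
    ∃ e : ℝ × ℝ → E, ∀ w ∈ gridLines,
      (∃ k k' : ℤ × ℤ, dist w (k.1, k.2) ≤ 1 ∧ dist w (k'.1, k'.2) ≤ 1 ∧ ∃ t, e w = γ k k' t) ∧
      ∀ᶠ w' in 𝓝[gridLines] w, dist (e w') (e w) < δ := by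
  classical
  let A₁ : Set (ℝ × ℝ) := {w | w.1 ∈ range ((↑) : ℤ → ℝ)}
  let A₂ : Set (ℝ × ℝ) := {w | w.2 ∈ range ((↑) : ℤ → ℝ)}
  have hrange : IsClosed (range ((↑) : ℤ → ℝ)) := Int.isClosedEmbedding_coe_real.isClosed_range
  let e₁ (w : ℝ × ℝ) : E := γ (⌊w.1⌋, ⌊w.2⌋) (⌊w.1⌋, ⌊w.2⌋ + 1) (unitFract w.2)
  let e₂ (w : ℝ × ℝ) : E := γ (⌊w.1⌋, ⌊w.2⌋) (⌊w.1⌋ + 1, ⌊w.2⌋) (unitFract w.1)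
  let e (w : ℝ × ℝ) : E := if w ∈ A₂ then e₂ w else e₁ w
  have he₂ : EqOn e e₂ A₂ := fun w hw => if_pos hw
  have he₁ : EqOn e e₁ A₁ := fun w hw => by
    by_cases hw₂ : w ∈ A₂
    · have hzero {a : ℝ} (ha : a ∈ range ((↑) : ℤ → ℝ)) : unitFract a = 0 := by
        obtain ⟨n, rfl⟩ := ha
        exact Subtype.ext (Int.fract_intCast n)
      rw [he₂ hw₂]
      simp only [e₁, e₂, hzero hw₂, hzero hw, hγ₀]
    · exact if_neg hw₂
  have hosc₂ : ∀ w ∈ A₂, ∀ᶠ w' in 𝓝[A₂] w, dist (e₂ w') (e₂ w) < δ := fun w hw =>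
    eventually_dist_glue_line_lt (p := fun n i => γ (i, n) (i + 1, n)) (fun _ _ => hγ _ _)
      (fun _ _ => (hγ₁ _ _).trans (hγ₀ _ _).symm) continuous_fst continuous_snd hw
  have hosc₁ : ∀ w ∈ A₁, ∀ᶠ w' in 𝓝[A₁] w, dist (e₁ w') (e₁ w) < δ := fun w hw =>
    eventually_dist_glue_line_lt (p := fun n i => γ (n, i) (n, i + 1)) (fun _ _ => hγ _ _)
      (fun _ _ => (hγ₁ _ _).trans (hγ₀ _ _).symm) continuous_snd continuous_fst hw
  refine ⟨e, fun w hw => ⟨?_, ?_⟩⟩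
  · rcases hw.symm with hw | hw
    · exact ⟨(⌊w.1⌋, ⌊w.2⌋), (⌊w.1⌋ + 1, ⌊w.2⌋), max_le (dist_floor_le_one _) (dist_floor_le_one _),
        max_le (dist_floor_add_one_le_one _) (dist_floor_le_one _), _, he₂ hw⟩
    · exact ⟨(⌊w.1⌋, ⌊w.2⌋), (⌊w.1⌋, ⌊w.2⌋ + 1), max_le (dist_floor_le_one _) (dist_floor_le_one _),
        max_le (dist_floor_le_one _) (dist_floor_add_one_le_one _), _, he₁ hw⟩
  · change ∀ᶠ w' in 𝓝[A₁ ∪ A₂] w, _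
    rw [nhdsWithin_union, eventually_sup]
    exact ⟨eventually_dist_lt_of_eqOn (hrange.preimage continuous_fst) he₁ hosc₁ w,
      eventually_dist_lt_of_eqOn (hrange.preimage continuous_snd) he₂ hosc₂ w⟩

lemma exists_antilipschitzWith {r : NNReal} (hr : 0 < r) :
    ∃ κ : ℂ ≃L[ℝ] ℝ × ℝ, AntilipschitzWith r κ := by
  have hr₀ : (r : ℝ) ≠ 0 := NNReal.coe_ne_zero.2 hr.ne'
  let s : ℝˣ := Units.mk0 (NNReal.sqrt 2 / r : ℝ) (div_ne_zero (by positivity) hr₀)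
  refine ⟨Complex.equivRealProdCLM.trans (ContinuousLinearEquiv.smulLeft s),
    AntilipschitzWith.of_le_mul_dist fun x y => ?_⟩
  change dist x y ≤ r * dist ((NNReal.sqrt 2 / r : ℝ) • Complex.equivRealProd x)
    ((NNReal.sqrt 2 / r : ℝ) • Complex.equivRealProd y)
  rw [dist_smul₀, Real.norm_of_nonneg (by positivity), ← mul_assoc,
    mul_div_cancel₀ _ hr₀]
  exact Complex.antilipschitz_equivRealProd.le_mul_dist x y

variable {α : Type*} [TopologicalSpace α] {u : α → ℂ} {B : Set α} {D : Set ℂ}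

lemma IsNonseparating.exists_filledHull_cthickening_subset (hD : IsNonseparating D) {U : Set ℂ}
    (hU : IsOpen U) (hDU : D ⊆ U) : ∃ η > 0, filledHull (cthickening η D) ⊆ U := by
  let ι := {η : ℝ // 0 < η}
  have : Nonempty ι := ⟨⟨1, one_pos⟩⟩
  have hcomp (η : ι) : IsCompact (filledHull (cthickening η D)) :=
    (isNonseparating_filledHull hD.isCompact.cthickening).isCompact
  have hmono {η η' : ℝ} (h : η ≤ η') :
      filledHull (cthickening η D) ⊆ filledHull (cthickening η' D) :=
    filledHull_mono (cthickening_mono h D)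
  obtain ⟨z₀, hz₀⟩ := nonempty_compl.2 (hcomp ⟨1, one_pos⟩).ne_univ
  obtain ⟨⟨η, hη⟩, hηU⟩ : ∃ η : ι, filledHull (cthickening η D) ⊆ U := by
    refine exists_subset_nhds_of_isCompact (fun η η' => ⟨⟨min η η', lt_min η.2 η'.2⟩,
      hmono (min_le_left _ _), hmono (min_le_right _ _)⟩) hcomp fun z hz => ?_
    by_contra hzU
    have hzD : z ∈ Dᶜ := fun h => hzU (hU.mem_nhds (hDU h))
    have hz₀D : z₀ ∈ Dᶜ := fun h => hz₀ (subset_filledHull _ (self_subset_cthickening D h))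
    obtain ⟨η, hη, hzη⟩ := exists_mem_connectedComponentIn_compl_cthickening hD.isCompact.isClosed
      (hD.isPreconnected_compl.subset_connectedComponentIn hz₀D subset_rfl hzD)
    have hz₀η : z₀ ∉ filledHull (cthickening (min η 1) D) := fun h =>
      hz₀ (hmono (min_le_right _ _) h)
    have hsub := compl_subset_compl.2 (cthickening_mono (min_le_left η 1) D)
    exact connectedComponentIn_subset_compl_filledHull hz₀η (connectedComponentIn_mono _ hsub hzη)
      (mem_iInter.1 hz ⟨min η 1, lt_min hη one_pos⟩)
  exact ⟨η, hη, hηU⟩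

lemma IsNonseparating.exists_continuous_mem_or_mem_gridLines (hD : IsNonseparating D)
    (hu : Continuous u) (hub : Bornology.IsBounded (range u)) (huB : ∀ x ∈ B, u x ∈ D) {U : Set ℂ}
    {η : ℝ} (hη : filledHull (cthickening η D) ⊆ U) {κ : ℂ ≃L[ℝ] ℝ × ℝ} {r : NNReal}
    (hκ : AntilipschitzWith r κ) (hrη : 2 * r ≤ η) :
    ∃ g : α → ℂ, Continuous g ∧ EqOn g u B ∧ ∀ x, g x ∈ U ∨ κ (g x) ∈ gridLines := by
  let V : Set ℂ := (filledHull (cthickening η D))ᶜ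
  have hN : IsNonseparating (filledHull (cthickening η D)) :=
    isNonseparating_filledHull hD.isCompact.cthickening
  have hVb : ¬ Bornology.IsBounded (κ '' V) := fun h =>
    not_isBounded_compl hN.isCompact.isBounded
      (κ.symm_image_image V ▸ κ.symm.lipschitz.isBounded_image h : Bornology.IsBounded V)
  have hdist : ∀ x ∈ B, ∀ v ∈ κ '' V, 2 ≤ dist (κ (u x)) v := by
    rintro x hx _ ⟨v, hv, rfl⟩
    by_contra! h
    have hle : dist v (u x) ≤ η := by
      rw [dist_comm]
      nlinarith [hκ.le_mul_dist (u x) v, r.coe_nonneg]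
    exact hv (subset_filledHull _ (mem_cthickening_of_dist_le v _ _ D (huB x hx) hle))
  obtain ⟨g, hg, hgu, hgV⟩ := exists_continuous_mem_gridLines (κ.continuous.comp hu)
    (range_comp κ u ▸ κ.lipschitz.isBounded_image hub)
    (hN.isPreconnected_compl.image κ κ.continuous.continuousOn) hVb hdist
  refine ⟨κ.symm ∘ g, κ.symm.continuous.comp hg, fun x hx => by simp [hgu hx], fun x => ?_⟩
  rw [Function.comp_apply, κ.apply_symm_apply, or_iff_not_imp_left]
  exact fun hx => hgV x ⟨_, fun h => hx (hη h), κ.apply_symm_apply _⟩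

lemma exists_gridLines_map_near (hD : IsCompact D) (hDc : IsConnected D) {κ : ℂ ≃L[ℝ] ℝ × ℝ}
    {r : NNReal} (hκ : AntilipschitzWith r κ) {δ : ℝ} (hδ : 0 < δ) (hrδ : 2 * r ≤ δ) :
    ∃ e : ℝ × ℝ → ℂ, ∀ w ∈ gridLines, e w ∈ D ∧
      (∀ᶠ w' in 𝓝[gridLines] w, dist (e w') (e w) < 6 * δ) ∧
      (infDist (κ.symm w) D < 2 * δ → dist (e w) (κ.symm w) < 3 * δ) := by
  let P (k : ℤ × ℤ) : ℂ := κ.symm (k.1, k.2)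
  choose N hND hN using fun k => hD.exists_infDist_eq_dist hDc.nonempty (P k)
  choose γ hγD hγ hγ₀ hγ₁ hγ' using fun k k' =>
    exists_hasOscLT_or_eq hDc.isPreconnected (hND k) (hND k') (δ := 6 * δ) (by positivity)
  obtain ⟨e, he⟩ := exists_map_gridLines hγ hγ₀ hγ₁
  refine ⟨e, fun w hw => ?_⟩
  obtain ⟨⟨k, k', hk, hk', t, ht⟩, hosc⟩ := he w hw
  refine ⟨ht ▸ hγD k k' t, hosc, fun hlt => ?_⟩
  have hnode {k : ℤ × ℤ} (hk : dist w (k.1, k.2) ≤ 1) : dist (N k) (κ.symm w) < 3 * δ := by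
    have h₁ := hκ.le_mul_dist (P k) (κ.symm w)
    rw [κ.apply_symm_apply, κ.apply_symm_apply, dist_comm _ w] at h₁
    have h₂ := infDist_le_infDist_add_dist (x := P k) (y := κ.symm w) (s := D)
    have h₃ := dist_triangle_left (N k) (κ.symm w) (P k)
    have h₄ := mul_le_of_le_one_right r.coe_nonneg hk
    linarith [hN k]
  have hkk' : dist (N k) (N k') < 6 * δ := by
    linarith [hnode hk, hnode hk', dist_triangle_right (N k) (N k') (κ.symm w)]
  rw [ht]
  rcases hγ' k k' hkk' t with h | h <;> rw [h]
  exacts [hnode hk, hnode hk']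

lemma hasOscLT_of_dist_lt_or_eq_comp {β E : Type*} [TopologicalSpace β] [PseudoMetricSpace E]
    {f g : α → E} (hg : Continuous g) {ρ : α → ℝ} (hρ : Continuous ρ) {a b δ ε : ℝ} (hab : a < b)
    (hδε : 2 * δ < ε) (hnear : ∀ x, ρ x < b → dist (f x) (g x) < δ) {k : α → β}
    (hk : Continuous k) {S : Set β} {e : β → E}
    (he : ∀ w ∈ S, ∀ᶠ w' in 𝓝[S] w, dist (e w') (e w) < ε)
    (hfar : ∀ x, a < ρ x → k x ∈ S ∧ f x = e (k x)) : HasOscLT f ε := by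
  intro x
  rcases lt_or_ge (ρ x) b with hx | hx
  · filter_upwards [hρ.continuousAt.eventually (gt_mem_nhds hx), hg.continuousAt.eventually
      (ball_mem_nhds (g x) (sub_pos.2 hδε))] with y hy hyx
    linarith [hnear x hx, hnear y hy, mem_ball.1 hyx, dist_triangle4_right (f y) (f x) (g y) (g x)]
  · have hx' : a < ρ x := hab.trans_le hx
    have hfar' := hρ.continuousAt.eventually (lt_mem_nhds hx')
    have hlim : Tendsto k (𝓝 x) (𝓝[S] k x) :=
      tendsto_nhdsWithin_iff.2 ⟨hk.continuousAt, hfar'.mono fun y hy => (hfar y hy).1⟩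
    filter_upwards [hfar', hlim.eventually (he _ (hfar x hx').1)] with y hy hyx
    rwa [(hfar x hx').2, (hfar y hy).2]

/-- Where the pushed map `g` is close to `D` the nearest point projection is nearly continuous; away
from `D` the values of `g` lie on a fine grid, which is mapped to `D` edge by edge. -/
theorem IsNonseparating.exists_hasOscLT_extension (hD : IsNonseparating D) (hDc : IsConnected D)
    (hu : Continuous u) (hub : Bornology.IsBounded (range u)) (huB : ∀ x ∈ B, u x ∈ D) {δ : ℝ}
    (hδ : 0 < δ) : ∃ f : α → ℂ, (∀ x, f x ∈ D) ∧ HasOscLT f δ ∧ EqOn f u B := by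
  classical
  obtain ⟨η, hη, hηD⟩ := hD.exists_filledHull_cthickening_subset
    (isOpen_thickening (δ := δ / 7)) (self_subset_thickening (by positivity) D)
  obtain ⟨r, hr, hrη⟩ : ∃ r : NNReal, 0 < r ∧ (r : ℝ) ≤ min η (δ / 7) / 2 :=
    ⟨_, Real.toNNReal_pos.2 (by positivity), (Real.coe_toNNReal _ (by positivity)).le⟩
  obtain ⟨κ, hκ⟩ := exists_antilipschitzWith hr
  obtain ⟨g, hg, hgu, hgU⟩ := hD.exists_continuous_mem_or_mem_gridLines hu hub huB hηD hκ
    (by linarith [min_le_left η (δ / 7)])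
  obtain ⟨e, he⟩ := exists_gridLines_map_near hD.isCompact hDc hκ (δ := δ / 7) (by positivity)
    (by linarith [min_le_right η (δ / 7)])
  choose nd hndD hnd using fun w => hD.isCompact.exists_infDist_eq_dist hDc.nonempty w
  let f (x : α) : ℂ := if x ∈ B then u x else if κ (g x) ∈ gridLines then e (κ (g x)) else nd (g x)
  have hfB : EqOn f u B := fun x hx => if_pos hx
  have hf_near {x : α} (hx : infDist (g x) D < 2 * (δ / 7)) : dist (f x) (g x) < 3 * (δ / 7) := by
    dsimp only [f]
    split_ifs with hxB hgrid
    · rw [hgu hxB, dist_self]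
      positivity
    · simpa using (he _ hgrid).2.2 (by simpa using hx)
    · rw [dist_comm, ← hnd]
      linarith
  have hf_far {x : α} (hx : δ / 7 < infDist (g x) D) :
      κ (g x) ∈ gridLines ∧ f x = e (κ (g x)) := by
    have hgrid := (hgU x).resolve_left fun h =>
      (mem_thickening_iff_infDist_lt hDc.nonempty).1 h |>.not_gt hx
    refine ⟨hgrid, (if_neg fun hxB => ?_).trans (if_pos hgrid)⟩
    rw [hgu hxB, infDist_zero_of_mem (huB x hxB)] at hx
    linarith
  refine ⟨f, fun x => ?_, hasOscLT_of_dist_lt_or_eq_comp hg ((continuous_infDist_pt D).comp hg)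
    (show δ / 7 < 2 * (δ / 7) by linarith) (show 2 * (3 * (δ / 7)) < δ by linarith)
    (fun _ => hf_near) (κ.continuous.comp hg)
    (fun w hw => (he w hw).2.1.mono fun _ h => h.trans (by linarith)) fun _ => hf_far, hfB⟩
  dsimp only [f]
  split_ifs with hxB hgrid
  exacts [huB x hxB, (he _ hgrid).1, hndD _]

end Extension

/-! ### Filling the boundary of a square -/

section Filling

/-- The boundary of the unit square. -/
def squareBoundary : Set (I × I) := {z | (z.1 = 0 ∨ z.1 = 1) ∨ z.2 = 0 ∨ z.2 = 1}

lemma isClosed_squareBoundary : IsClosed squareBoundary :=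
  ((isClosed_eq continuous_fst continuous_const).union
    (isClosed_eq continuous_fst continuous_const)).union
    ((isClosed_eq continuous_snd continuous_const).union
      (isClosed_eq continuous_snd continuous_const))

lemma isConnected_squareBoundary : IsConnected squareBoundary := by
  have hv (s : I) : IsPreconnected ({s} ×ˢ univ : Set (I × I)) :=
    isPreconnected_singleton.prod isPreconnected_univ
  have hh (t : I) : IsPreconnected (univ ×ˢ {t} : Set (I × I)) :=
    isPreconnected_univ.prod isPreconnected_singleton
  have h : squareBoundary =
      ({0} ×ˢ univ ∪ univ ×ˢ {0}) ∪ ({1} ×ˢ univ ∪ univ ×ˢ {1} : Set (I × I)) := by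
    ext z
    simp only [squareBoundary, mem_ofPred_eq, mem_union, mem_prod, mem_singleton_iff, mem_univ,
      and_true, true_and]
    tauto
  refine ⟨⟨0, .inl (.inl rfl)⟩, h ▸ ?_⟩
  exact ((hv 0).union (0, 0) (by simp) (by simp) (hh 0)).union (0, 1) (by simp) (by simp)
    ((hv 1).union (1, 1) (by simp) (by simp) (hh 1))

variable {D : Set ℂ} {u : I × I → ℂ} {δ : ℝ}

lemma IsNonseparating.exists_hasOscLT_eqOn_squareBoundary (hD : IsNonseparating D)
    (hu : Continuous u) (huD : ∀ z ∈ squareBoundary, u z ∈ D) (hδ : 0 < δ) :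
    ∃ f : I × I → ℂ, (∀ z, f z ∈ D) ∧ HasOscLT f δ ∧ EqOn f u squareBoundary := by
  have hcomp : IsCompact (u '' squareBoundary) := isClosed_squareBoundary.isCompact.image hu
  have hcon : IsConnected (u '' squareBoundary) :=
    isConnected_squareBoundary.image u hu.continuousOn
  have hhull : IsConnected (filledHull (u '' squareBoundary)) :=
    ⟨hcon.nonempty.mono (subset_filledHull _), isPreconnected_filledHull hcomp hcon.isPreconnected⟩
  obtain ⟨f, hf, hosc, hfu⟩ := (isNonseparating_filledHull hcomp).exists_hasOscLT_extension hhull hu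
    (isCompact_range hu).isBounded (fun z hz => subset_filledHull _ (mem_image_of_mem u hz)) hδ
  exact ⟨f, fun z => hD.filledHull_subset (image_subset_iff.2 huD) (hf z), hosc, hfu⟩

/-- The Coons patch: the sum of the two linear interpolations between opposite sides, minus the
bilinear interpolation of the corners. -/
lemma exists_continuous_square {p₀₀ p₀₁ p₁₀ p₁₁ : ℂ} (a : Path p₀₀ p₀₁) (b : Path p₁₀ p₁₁)
    (c : Path p₀₀ p₁₀) (d : Path p₀₁ p₁₁) :
    ∃ v : I × I → ℂ, Continuous v ∧ (∀ t, v (0, t) = a t) ∧ (∀ t, v (1, t) = b t) ∧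
      (∀ s, v (s, 0) = c s) ∧ ∀ s, v (s, 1) = d s := by
  let ι (t : I) : ℂ := (t : ℝ)
  have hι : Continuous ι := Complex.continuous_ofReal.comp continuous_subtype_val
  refine ⟨fun z => (1 - ι z.1) * a z.2 + ι z.1 * b z.2 + (1 - ι z.2) * c z.1 + ι z.2 * d z.1
    - ((1 - ι z.1) * ((1 - ι z.2) * p₀₀ + ι z.2 * p₀₁)
      + ι z.1 * ((1 - ι z.2) * p₁₀ + ι z.2 * p₁₁)), by fun_prop, ?_, ?_, ?_, ?_⟩
  all_goals
    intro t
    simp only [ι, Icc.coe_zero, Icc.coe_one, Complex.ofReal_zero, Complex.ofReal_one, Path.source,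
      Path.target]
    ring

lemma IsNonseparating.exists_hasOscLT_square (hD : IsNonseparating D) {p₀₀ p₀₁ p₁₀ p₁₁ : ℂ}
    (a : Path p₀₀ p₀₁) (b : Path p₁₀ p₁₁) (c : Path p₀₀ p₁₀) (d : Path p₀₁ p₁₁)
    (ha : ∀ t, a t ∈ D) (hb : ∀ t, b t ∈ D) (hc : ∀ t, c t ∈ D) (hd : ∀ t, d t ∈ D) (hδ : 0 < δ) :
    ∃ f : I × I → ℂ, (∀ z, f z ∈ D) ∧ HasOscLT f δ ∧ (∀ t, f (0, t) = a t) ∧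
      (∀ t, f (1, t) = b t) ∧ (∀ s, f (s, 0) = c s) ∧ ∀ s, f (s, 1) = d s := by
  obtain ⟨v, hv, hva, hvb, hvc, hvd⟩ := exists_continuous_square a b c d
  obtain ⟨f, hfD, hf, hfv⟩ := hD.exists_hasOscLT_eqOn_squareBoundary hv (by
    rintro ⟨s, t⟩ ((rfl | rfl) | rfl | rfl)
    exacts [hva t ▸ ha t, hvb t ▸ hb t, hvc s ▸ hc s, hvd s ▸ hd s]) hδ
  exact ⟨f, hfD, hf, fun t => (hfv (.inl (.inl rfl))).trans (hva t),
    fun t => (hfv (.inl (.inr rfl))).trans (hvb t),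
    fun s => (hfv (.inr (.inl rfl))).trans (hvc s), fun s => (hfv (.inr (.inr rfl))).trans (hvd s)⟩

/-- Each cell of a grid is filled separately, with the chosen paths between adjacent nodes as its
sides. -/
lemma exists_hasOscLT_grid (hD : IsNonseparating D) {path : ∀ x y : D, Path x y} {ρ ε : ℝ}
    (hpath : ∀ x y, dist x y < ρ → ∀ t, dist (path x y t) x ≤ ε) {P : ℤ → ℤ → D}
    (hP₁ : ∀ i j, dist (P (i + 1) j) (P i j) < ρ) (hP₂ : ∀ i j, dist (P i (j + 1)) (P i j) < ρ)
    (hδ : 0 < δ) :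
    ∃ F : ℝ × ℝ → ℂ, HasOscLT F δ ∧ (∀ z, F z ∈ D ∧ dist (F z) (P ⌊z.1⌋ ⌊z.2⌋) ≤ ε + ρ) ∧
      (∀ z, unitFract z.1 = 0 →
        F z = path (P ⌊z.1⌋ ⌊z.2⌋) (P ⌊z.1⌋ (⌊z.2⌋ + 1)) (unitFract z.2)) ∧
      ∀ z, unitFract z.2 = 0 →
        F z = path (P ⌊z.1⌋ ⌊z.2⌋) (P (⌊z.1⌋ + 1) ⌊z.2⌋) (unitFract z.1) := by
  have hcont : Continuous ((↑) : D → ℂ) := continuous_subtype_val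
  have hmem {x y p : D} (hxy : dist y x < ρ) (hxp : dist x p < ρ ∨ x = p) (t : I) :
      (path x y t : ℂ) ∈ D ∩ closedBall (p : ℂ) (ε + ρ) := by
    have hρ : 0 < ρ := dist_nonneg.trans_lt hxy
    refine ⟨Subtype.coe_prop _, (dist_triangle (path x y t) x p).trans (add_le_add
      (hpath x y (dist_comm x y ▸ hxy) t) ?_)⟩
    rcases hxp with h | rfl
    exacts [h.le, (dist_self x).trans_le hρ.le]
  choose f hfK hf hf₀ hf₁ hf₂ hf₃ using fun i j =>
    (hD.inter (isNonseparating_closedBall (P i j : ℂ) (ε + ρ))).exists_hasOscLT_square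
      ((path (P i j) (P i (j + 1))).map hcont) ((path (P (i + 1) j) (P (i + 1) (j + 1))).map hcont)
      ((path (P i j) (P (i + 1) j)).map hcont) ((path (P i (j + 1)) (P (i + 1) (j + 1))).map hcont)
      (hmem (hP₂ i j) (.inr rfl)) (hmem (hP₂ (i + 1) j) (.inl (hP₁ i j)))
      (hmem (hP₁ i j) (.inr rfl)) (hmem (hP₁ i (j + 1)) (.inl (hP₂ i j))) hδ
  refine ⟨fun z => f ⌊z.1⌋ ⌊z.2⌋ (unitFract z.1, unitFract z.2),
    hasOscLT_glue (p := fun i j s t => f i j (s, t)) hf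
      (fun i j t => (hf₁ i j t).trans (hf₀ (i + 1) j t).symm)
      (fun i j s => (hf₃ i j s).trans (hf₂ i (j + 1) s).symm),
    fun z => hfK _ _ _, fun z hz => ?_, fun z hz => ?_⟩
  · dsimp only
    rw [hz]
    exact hf₀ _ _ _
  · dsimp only
    rw [hz]
    exact hf₂ _ _ _

lemma exists_hasOscLT_subdivision (hD : IsNonseparating D) {path : ∀ x y : D, Path x y} {ρ ε : ℝ}
    (hpath : ∀ x y, dist x y < ρ → ∀ t, dist (path x y t) x ≤ ε) {f : I × I → D} {n : ℕ}
    (hf : ∀ x y, dist x y ≤ 1 / (n + 1) → dist (f x) (f y) < ρ) (hδ : 0 < δ) :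
    ∃ g : I × I → ℂ, HasOscLT g δ ∧ (∀ z, g z ∈ D ∧ dist (f z : ℂ) (g z) ≤ ε + 2 * ρ) ∧
      ∀ z ∈ squareBoundary, ∃ x ∈ squareBoundary, ∃ y ∈ squareBoundary,
        dist x z ≤ 1 / (n + 1) ∧ dist x y ≤ 1 / (n + 1) ∧ ∃ t, g z = path (f x) (f y) t := by
  have hdist (a b : I × I) (h₁ : dist a.1 b.1 ≤ 1 / (n + 1)) (h₂ : dist a.2 b.2 ≤ 1 / (n + 1)) :
      dist a b ≤ 1 / (n + 1) := max_le h₁ h₂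
  have hpos : (0 : ℝ) ≤ 1 / (n + 1) := by positivity
  have hself (a : I) : dist a a ≤ 1 / (n + 1) := (dist_self a).trans_le hpos
  have hstep (i : ℤ) : dist (gridPoint n (i + 1)) (gridPoint n i) ≤ 1 / (n + 1) :=
    dist_comm (gridPoint n i) _ ▸ dist_gridPoint_succ_le n i
  obtain ⟨F, hF, hFD, hF₁, hF₂⟩ := exists_hasOscLT_grid hD hpath
    (P := fun i j => f (gridPoint n i, gridPoint n j))
    (fun i j => hf _ _ (hdist _ _ (hstep i) (hself _)))
    (fun i j => hf _ _ (hdist _ _ (hself _) (hstep j))) hδ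
  have hfloor (t : I) := dist_gridPoint_floor_le n t
  refine ⟨fun z => F ((n + 1) * z.1, (n + 1) * z.2), hF.comp (by fun_prop),
    fun z => ⟨(hFD _).1, ?_⟩, fun z hz => ?_⟩
  · have hnode := hf z (gridPoint n ⌊(n + 1) * (z.1 : ℝ)⌋, gridPoint n ⌊(n + 1) * (z.2 : ℝ)⌋)
      (hdist _ _ (hfloor z.1) (hfloor z.2))
    have hFnode := (hFD ((n + 1) * z.1, (n + 1) * z.2)).2
    rw [Subtype.dist_eq] at hnode
    exact (dist_triangle_right _ _ _).trans (by linarith)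
  · rcases hz with hz | hz
    · have hFz := hF₁ ((n + 1) * z.1, (n + 1) * z.2) (unitFract_mul_of_eq_zero_or_one n hz)
      rw [gridPoint_floor_of_eq_zero_or_one n hz] at hFz
      let j : ℤ := ⌊(n + 1) * (z.2 : ℝ)⌋
      exact ⟨(z.1, gridPoint n j), .inl hz, (z.1, gridPoint n (j + 1)), .inl hz,
        hdist _ _ (hself _) (dist_comm z.2 _ ▸ hfloor z.2),
        hdist _ _ (hself _) (dist_gridPoint_succ_le n j), _, hFz⟩
    · have hFz := hF₂ ((n + 1) * z.1, (n + 1) * z.2) (unitFract_mul_of_eq_zero_or_one n hz)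
      rw [gridPoint_floor_of_eq_zero_or_one n hz] at hFz
      let i : ℤ := ⌊(n + 1) * (z.1 : ℝ)⌋
      exact ⟨(gridPoint n i, z.2), .inr hz, (gridPoint n (i + 1), z.2), .inr hz,
        hdist _ _ (dist_comm z.1 _ ▸ hfloor z.1) (hself _),
        hdist _ _ (dist_gridPoint_succ_le n i) (hself _), _, hFz⟩

lemma dist_le_of_mem_path {path : ∀ x y : D, Path x y} {ρ ε r : ℝ}
    (hpath : ∀ x y, dist x y < ρ → ∀ t, dist (path x y t) x ≤ ε) {f : I × I → D}
    (hfu : ∀ z ∈ squareBoundary, (f z : ℂ) = u z)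
    (hu : ∀ x y, dist x y ≤ r → dist (u x) (u y) < min ρ ε) {w : ℂ} {z : I × I}
    (hw : ∃ x ∈ squareBoundary, ∃ y ∈ squareBoundary,
      dist x z ≤ r ∧ dist x y ≤ r ∧ ∃ t, w = path (f x) (f y) t) : dist w (u z) ≤ 2 * ε := by
  obtain ⟨x, hx, y, hy, hxz, hxy, t, rfl⟩ := hw
  have hfxy : dist (f x) (f y) < ρ := by
    rw [Subtype.dist_eq, hfu x hx, hfu y hy]
    exact (hu x y hxy).trans_le (min_le_left _ _)
  have hfxz : dist (f x : ℂ) (u z) < ε := by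
    rw [hfu x hx]
    exact (hu x z hxz).trans_le (min_le_right _ _)
  linarith [hpath _ _ hfxy t, Subtype.dist_eq (path (f x) (f y) t) (f x),
    dist_triangle (path (f x) (f y) t : ℂ) (f x) (u z)]

lemma exists_square_refinement (hD : IsNonseparating D) {path : ∀ x y : D, Path x y}
    (hpath : ∀ ε > 0, ∃ δ > 0, ∀ x y, dist x y < δ → ∀ t, dist x (path x y t) ≤ ε)
    (hu : Continuous u) {ε : ℝ} (hε : 0 < ε) :
    ∃ δ > 0, ∀ f : I × I → ℂ, (∀ z, f z ∈ D) → EqOn f u squareBoundary → HasOscLT f δ →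
      ∀ δ' > 0, ∃ g : I × I → ℂ, (∀ z, g z ∈ D) ∧ EqOn g u squareBoundary ∧ HasOscLT g δ' ∧
        ∀ z, dist (f z) (g z) ≤ ε := by
  classical
  simp only [dist_comm _ (path _ _ _)] at hpath
  obtain ⟨ρ, hρ, hρpath⟩ := hpath (ε / 2) (half_pos hε)
  have hρε : 0 < min ρ (ε / 4) := by positivity
  refine ⟨min ρ (ε / 4) / 2, half_pos hρε, fun f hfD hfu hf δ' hδ' => ?_⟩
  obtain ⟨ρ', hρ', hρ'path⟩ := hpath (δ' / 8) (by positivity)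
  obtain ⟨r, hr, hfr⟩ := hf.exists_forall_dist_lt
  obtain ⟨r', hr', hur⟩ := Metric.uniformContinuous_iff.1
    (CompactSpace.uniformContinuous_of_continuous hu) (min ρ' (δ' / 8)) (by positivity)
  obtain ⟨n, hn⟩ := exists_nat_one_div_lt (lt_min hr hr')
  rw [lt_min_iff] at hn
  obtain ⟨g, hg, hgD, hgbd⟩ := exists_hasOscLT_subdivision hD
    (fun x y hxy => hρpath x y (hxy.trans_le (min_le_left _ _))) (f := fun z => ⟨f z, hfD z⟩)
    (fun x y hxy => (hfr x y (hxy.trans_lt hn.1)).trans_le (mul_div_cancel₀ _ two_ne_zero).le)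
    (half_pos hδ')
  have hgu (z) (hz : z ∈ squareBoundary) : dist (g z) (u z) ≤ δ' / 4 :=
    (dist_le_of_mem_path hρ'path (fun _ => @hfu _) (fun x y hxy => hur (hxy.trans_lt hn.2))
      (hgbd z hz)).trans (by linarith)
  have hfg (z) : dist (f z) (g z) ≤ ε := by
    linarith [(hgD z).2, min_le_right ρ (ε / 4)]
  refine ⟨squareBoundary.piecewise u g, fun z => ?_, piecewise_eqOn _ _ _,
    (hg.of_dist_le (ε := δ' / 4) fun z => ?_).mono (by linarith), fun z => ?_⟩
  all_goals by_cases hz : z ∈ squareBoundary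
  all_goals simp only [piecewise_eq_of_mem, piecewise_eq_of_notMem, hz, not_false_eq_true]
  exacts [hfu hz ▸ hfD z, (hgD z).1, hgu z hz, by rw [dist_self]; positivity,
    by rw [hfu hz, dist_self]; exact hε.le, hfg z]

/-- Squares are filled in a nonseparating, uniformly locally connected set by successive
subdivision: at each stage the cells are filled with jumps below a smaller bound. -/
theorem IsNonseparating.exists_continuous_eqOn_squareBoundary (hD : IsNonseparating D)
    (hDp : IsPreconnected D) (hDu : UniformlyLocallyConnected D) (hu : Continuous u)
    (huD : ∀ z ∈ squareBoundary, u z ∈ D) :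
    ∃ f : I × I → ℂ, Continuous f ∧ (∀ z, f z ∈ D) ∧ EqOn f u squareBoundary := by
  obtain ⟨path, hpath⟩ := hDu.exists_paths hD.isCompact.isClosed hDp
  have hmem {f : I × I → ℂ} : (∀ z, f z ∈ {w | w ∈ D ∧ (z ∈ squareBoundary → w = u z)}) ↔
      (∀ z, f z ∈ D) ∧ EqOn f u squareBoundary := forall_and
  obtain ⟨δ, hδ, h⟩ := exists_continuous_forall_mem_of_refine
    (C := fun z => {w | w ∈ D ∧ (z ∈ squareBoundary → w = u z)})
    (fun z => hD.isCompact.isClosed.inter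
      (isClosed_imp isOpen_const (isClosed_eq continuous_id continuous_const)))
    (fun ε hε => by simpa only [hmem, and_imp, and_assoc] using
      exists_square_refinement hD hpath hu hε) one_pos
  obtain ⟨f, hfD, hf, hfu⟩ := hD.exists_hasOscLT_eqOn_squareBoundary hu huD hδ
  obtain ⟨g, hg, hgc, -⟩ := h f (hmem.2 ⟨hfD, hfu⟩) hf
  exact ⟨g, hgc, (hmem.1 hg).1, (hmem.1 hg).2⟩

end Filling

/-! ### Simply connected subsets of the plane -/

section SimplyConnected

variable {X Y : Set ℂ}

theorem IsNonseparating.isSimplyConnected {D : Set ℂ} (hD : IsNonseparating D)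
    (hDc : IsConnected D) (hDu : UniformlyLocallyConnected D) : IsSimplyConnected D := by
  refine isSimplyConnected_iff_exists_homotopy_refl_forall_mem.2
    ⟨hDu.isPathConnected hD.isCompact.isClosed hDc, fun x γ hγ => ?_⟩
  let u (z : I × I) : ℂ := (1 - (z.1 : ℝ)) * γ z.2 + (z.1 : ℝ) * x
  have hu₀ (t : I) : u (0, t) = γ t := by simp [u]
  have hu₁ (t : I) : u (1, t) = x := by simp [u]
  have hus₀ (s : I) : u (s, 0) = x := by simp [u, ← add_mul]
  have hus₁ (s : I) : u (s, 1) = x := by simp [u, ← add_mul]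
  have hx : x ∈ D := γ.source ▸ hγ 0
  obtain ⟨f, hf, hfD, hfu⟩ := hD.exists_continuous_eqOn_squareBoundary hDc.isPreconnected hDu
    (u := u) (by fun_prop) (by
      rintro ⟨s, t⟩ ((rfl | rfl) | rfl | rfl)
      exacts [hu₀ t ▸ hγ t, hu₁ t ▸ hx, hus₀ s ▸ hx, hus₁ s ▸ hx])
  refine ⟨⟨⟨⟨f, hf⟩, fun t => (hfu (.inl (.inl rfl))).trans (hu₀ t),
    fun t => (hfu (.inl (.inr rfl))).trans (hu₁ t)⟩, ?_⟩, hfD⟩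
  rintro s t (rfl | rfl)
  · exact ((hfu (.inr (.inl rfl))).trans (hus₀ s)).trans γ.source.symm
  · exact ((hfu (.inr (.inr rfl))).trans (hus₁ s)).trans γ.target.symm

lemma isConnected_filledHull_range {x y : ℂ} (γ : Path x y) :
    IsConnected (filledHull (range γ)) :=
  ⟨(range_nonempty γ).mono (subset_filledHull _), isPreconnected_filledHull
    (isCompact_range γ.continuous) (isPreconnected_range γ.continuous)⟩

lemma uniformlyLocallyConnected_filledHull_range {x y : ℂ} (γ : Path x y) :
    UniformlyLocallyConnected (filledHull (range γ)) := by
  have := (convex_Icc (0 : ℝ) 1).locallyPathConnectedSpace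
  exact (uniformlyLocallyConnected_range γ.continuous).filledHull
    (isCompact_range γ.continuous).isClosed

lemma isSimplyConnected_filledHull_range {x y : ℂ} (γ : Path x y) :
    IsSimplyConnected (filledHull (range γ)) :=
  (isNonseparating_filledHull (isCompact_range γ.continuous)).isSimplyConnected
    (isConnected_filledHull_range γ) (uniformlyLocallyConnected_filledHull_range γ)

lemma isSimplyConnected_of_filledHull_range_subset (hX : IsPathConnected X)
    (h : ∀ x, ∀ γ : Path x x, range γ ⊆ X → filledHull (range γ) ⊆ X) : IsSimplyConnected X := by
  refine isSimplyConnected_iff_exists_homotopy_refl_forall_mem.2 ⟨hX, fun x γ hγ => ?_⟩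
  obtain ⟨F, hF⟩ := (isSimplyConnected_iff_exists_homotopy_refl_forall_mem.1
    (isSimplyConnected_filledHull_range γ)).2 x γ fun t => subset_filledHull _ ⟨t, rfl⟩
  exact ⟨F, fun t => h x γ (range_subset_iff.2 hγ) (hF t)⟩

theorem isSimplyConnected_inter (hX : IsSimplyConnected X) (hY : IsSimplyConnected Y)
    (hXY : IsPathConnected (X ∩ Y)) : IsSimplyConnected (X ∩ Y) :=
  isSimplyConnected_of_filledHull_range_subset hXY fun _ γ hγ =>
    subset_inter (filledHull_range_subset hX γ (hγ.trans inter_subset_left))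
      (filledHull_range_subset hY γ (hγ.trans inter_subset_right))

lemma exists_isNonseparating_of_paths (hX : IsSimplyConnected X) {p q : ℂ} (α β : Path p q)
    (hα : ∀ t, α t ∈ X) (hβ : ∀ t, β t ∈ X) :
    ∃ K ⊆ X, IsNonseparating K ∧ UniformlyLocallyConnected K ∧ range α ⊆ K ∧ range β ⊆ K := by
  have hrange : range (α.trans β.symm) = range α ∪ range β := by
    rw [Path.trans_range, Path.symm_range]
  have hK : range α ∪ range β ⊆ filledHull (range (α.trans β.symm)) :=
    hrange ▸ subset_filledHull _
  exact ⟨_, filledHull_range_subset hX _ (hrange.trans_subset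
      (union_subset (range_subset_iff.2 hα) (range_subset_iff.2 hβ))),
    isNonseparating_filledHull (isCompact_range (Path.continuous _)),
    uniformlyLocallyConnected_filledHull_range _, (union_subset_iff.1 hK).1,
    (union_subset_iff.1 hK).2⟩

lemma joinedIn_inter_of_mem_connectedComponentIn {K₀ K₁ K₂ : Set ℂ} (h₀ : IsNonseparating K₀)
    (h₁ : IsNonseparating K₁) (h₂ : IsNonseparating K₂) (hu₀ : UniformlyLocallyConnected K₀)
    (hu₁ : UniformlyLocallyConnected K₁) (hu₂ : UniformlyLocallyConnected K₂) {p q : ℂ}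
    (hq : q ∈ connectedComponentIn (K₀ ∩ K₁ ∩ K₂) p) : JoinedIn (K₀ ∩ K₁ ∩ K₂) p q := by
  have hp : p ∈ K₀ ∩ K₁ ∩ K₂ := connectedComponentIn_nonempty_iff.1 ⟨q, hq⟩
  have hpT := mem_connectedComponentIn hp
  let C := connectedComponentIn (K₀ ∩ K₁) p
  have hC : IsCompact C := isCompact_connectedComponentIn (h₀.isCompact.inter h₁.isCompact) p
  have hCK : filledHull C ⊆ K₀ ∩ K₁ :=
    (h₀.inter h₁).filledHull_subset (connectedComponentIn_subset _ _)
  have hCn := isNonseparating_filledHull hC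
  have hTC : connectedComponentIn (K₀ ∩ K₁ ∩ K₂) p ⊆
      connectedComponentIn (filledHull C ∩ K₂) p :=
    isPreconnected_connectedComponentIn.subset_connectedComponentIn hpT (subset_inter
      ((connectedComponentIn_mono p inter_subset_left).trans (subset_filledHull C))
      ((connectedComponentIn_subset _ _).trans inter_subset_right))
  have hM : UniformlyLocallyConnected (connectedComponentIn (filledHull C ∩ K₂) p) :=
    (((hu₀.connectedComponentIn_inter h₀ h₁ hu₁ p).filledHull hC.isClosed)
      |>.connectedComponentIn_inter hCn h₂ hu₂ p)
  obtain ⟨γ, hγ⟩ := hM.exists_path_near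
    (isCompact_connectedComponentIn (hCn.isCompact.inter h₂.isCompact) p).isClosed
    isPreconnected_connectedComponentIn hTC hpT hq one_pos
  exact ⟨γ, fun t => inter_subset_inter_left K₂ hCK (connectedComponentIn_subset _ _ (hγ t).1)⟩

theorem isPathConnected_inter_inter {X₀ X₁ X₂ : Set ℂ} (h₀ : IsSimplyConnected X₀)
    (h₁ : IsSimplyConnected X₁) (h₂ : IsSimplyConnected X₂) (h₀₁ : IsPathConnected (X₀ ∩ X₁))
    (h₀₂ : IsPathConnected (X₀ ∩ X₂)) (h₁₂ : IsPathConnected (X₁ ∩ X₂))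
    (hne : (X₀ ∩ X₁ ∩ X₂).Nonempty) : IsPathConnected (X₀ ∩ X₁ ∩ X₂) := by
  obtain ⟨p, hp⟩ := hne
  refine ⟨p, hp, fun {q} hq => ?_⟩
  obtain ⟨α, hα⟩ := h₀₁.joinedIn p ⟨hp.1.1, hp.1.2⟩ q ⟨hq.1.1, hq.1.2⟩
  obtain ⟨β, hβ⟩ := h₀₂.joinedIn p ⟨hp.1.1, hp.2⟩ q ⟨hq.1.1, hq.2⟩
  obtain ⟨γ, hγ⟩ := h₁₂.joinedIn p ⟨hp.1.2, hp.2⟩ q ⟨hq.1.2, hq.2⟩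
  obtain ⟨K₀, hKX₀, hK₀, hu₀, hα₀, hβ₀⟩ := exists_isNonseparating_of_paths h₀ α β
    (fun t => (hα t).1) fun t => (hβ t).1
  obtain ⟨K₁, hKX₁, hK₁, hu₁, hα₁, hγ₁⟩ := exists_isNonseparating_of_paths h₁ α γ
    (fun t => (hα t).2) fun t => (hγ t).1
  obtain ⟨K₂, hKX₂, hK₂, hu₂, hβ₂, hγ₂⟩ := exists_isNonseparating_of_paths h₂ β γ
    (fun t => (hβ t).2) fun t => (hγ t).2
  have hcomp {K L : Set ℂ} (δ : Path p q) (hK : range δ ⊆ K) (hL : range δ ⊆ L) :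
      q ∈ connectedComponentIn (K ∩ L) p :=
    (isPreconnected_range δ.continuous).subset_connectedComponentIn ⟨0, δ.source⟩
      (subset_inter hK hL) ⟨1, δ.target⟩
  exact (joinedIn_inter_of_mem_connectedComponentIn hK₀ hK₁ hK₂ hu₀ hu₁ hu₂
    (mem_connectedComponentIn_inter hK₀ hK₁ hK₂ (hcomp α hα₀ hα₁) (hcomp β hβ₀ hβ₂)
      (hcomp γ hγ₁ hγ₂))).mono (inter_subset_inter (inter_subset_inter hKX₀ hKX₁) hKX₂)

end SimplyConnected

/-! ### Four sets -/

section FourSets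

lemma IsLogOn.exists_iUnion_of_isClosed {ι E : Type*} [Finite ι] [TopologicalSpace E] {f : E → ℂ}
    {P : ι → Set E} {l : ι → E → ℂ} (hl : ∀ i, IsLogOn (l i) f (P i)) (hP : ∀ i, IsClosed (P i))
    (h : ∀ i j, ∀ x ∈ P i ∩ P j, l i x = l j x) : ∃ m, IsLogOn m f (⋃ i, P i) := by
  classical
  let m (x : E) : ℂ := if hx : ∃ i, x ∈ P i then l hx.choose x else 0
  have hm (i) : EqOn m (l i) (P i) := fun x hx => by
    have hx' : ∃ i, x ∈ P i := ⟨i, hx⟩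
    rw [show m x = l hx'.choose x from dif_pos hx']
    exact h _ _ x ⟨hx'.choose_spec, hx⟩
  refine ⟨m, (locallyFinite_of_finite P).continuousOn_iUnion hP
    fun i => (hl i).continuousOn.congr (hm i), fun x hx => ?_⟩
  obtain ⟨i, hi⟩ := mem_iUnion.1 hx
  rw [hm i hi, (hl i).exp_eq x hi]

/-- A branch of `log (· - z)` on each `A i`, normalised at a common point, would give one on the
union of the paths. -/
lemma filledHull_iUnion_range_subset {ι : Type*} [Finite ι] {A : ι → Set ℂ}
    (hA : ∀ i, IsSimplyConnected (A i)) (hAA : ∀ i j, IsPathConnected (A i ∩ A j))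
    (hne : (⋂ i, A i).Nonempty) {x y : ι → ℂ} (γ : ∀ i, Path (x i) (y i))
    (hγ : ∀ i t, γ i t ∈ A i) : filledHull (⋃ i, range (γ i)) ⊆ ⋃ i, A i := by
  intro z hz
  by_contra hzA
  simp only [mem_iUnion, not_exists] at hzA
  obtain ⟨c, hc⟩ := hne
  rw [mem_iInter] at hc
  have hlog (i) : ∃ l, IsPathLogOn l (· - z) (A i) ∧ l c = Complex.log (c - z) :=
    exists_isPathLogOn (hA i) (by fun_prop)
      (fun w hw => sub_ne_zero.2 (ne_of_mem_of_not_mem hw (hzA i))) (hc i)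
      (Complex.exp_log (sub_ne_zero.2 (ne_of_mem_of_not_mem (hc i) (hzA i))))
  choose l hl hlc using hlog
  have hagree (i j) (w : ℂ) (hw : w ∈ range (γ i) ∩ range (γ j)) : l i w = l j w :=
    (hl i).eq_of_joinedIn (hl j) inter_subset_left inter_subset_right
      ((hAA i j).joinedIn c ⟨hc i, hc j⟩ w
        (inter_subset_inter (range_subset_iff.2 (hγ i)) (range_subset_iff.2 (hγ j)) hw))
      (by rw [hlc, hlc])
  obtain ⟨m, hm⟩ := IsLogOn.exists_iUnion_of_isClosed
    (fun i => (hl i).isLogOn_range (γ i) (hγ i))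
    (fun i => (isCompact_range (γ i).continuous).isClosed) hagree
  exact hm.notMem_filledHull (isCompact_iUnion fun i => isCompact_range (γ i).continuous) hz

lemma im_sub_im_eq_of_exp_eq {M f : I → ℂ} {k : ℂ} (hM : Continuous M) (hf : Continuous f)
    (hslit : ∀ t, f t ∈ Complex.slitPlane) (hexp : ∀ t, Complex.exp (M t) = k * f t) (s t : I) :
    (M t).im - (M s).im = (f t).arg - (f s).arg := by
  have hf0 (t) : f t ≠ 0 := Complex.slitPlane_ne_zero (hslit t)
  have hlog : Continuous fun t => Complex.log (f t) := hf.clog hslit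
  have h := eqOn_of_exp_eq (isPreconnected_univ (α := I)) (f := fun t => M t - M s)
    (g := fun t => Complex.log (f t) - Complex.log (f s)) (hM.sub continuous_const).continuousOn
    (hlog.sub continuous_const).continuousOn
    (fun t _ => by
      rw [Complex.exp_sub, Complex.exp_sub, hexp, hexp, Complex.exp_log (hf0 t),
        Complex.exp_log (hf0 s), mul_div_mul_left]
      exact left_ne_zero_of_mul (hexp s ▸ Complex.exp_ne_zero (M s)))
    (mem_univ s) (by simp only [sub_self]) (mem_univ t)
  simpa only [Complex.sub_im, Complex.log_im] using congrArg Complex.im h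

lemma arg_ofReal_mul_exp {r θ : ℝ} (hr : 0 < r) (hθ : θ ∈ Ioc (-Real.pi) Real.pi) :
    (r * Complex.exp (θ * Complex.I)).arg = θ := by
  rw [Complex.exp_mul_I, Complex.arg_mul_cos_add_sin_mul_I hr hθ]

/-- The sector `|arg| ≤ π / 3` is parametrised by combinations of its boundary directions. -/
noncomputable def sectorMap (x y : ℝ) : ℂ :=
  x * Complex.exp (↑(-(Real.pi / 3)) * Complex.I) + y * Complex.exp (↑(Real.pi / 3) * Complex.I)

lemma sectorMap_re (x y : ℝ) : (sectorMap x y).re = (x + y) / 2 := by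
  simp only [sectorMap, Complex.add_re, Complex.re_ofReal_mul, Complex.exp_ofReal_mul_I_re,
    Real.cos_neg, Real.cos_pi_div_three]
  ring

lemma sectorMap_eq_zero {x y : ℝ} (hx : 0 ≤ x) (hy : 0 ≤ y) (h : sectorMap x y = 0) :
    x = 0 ∧ y = 0 := by
  have hre := sectorMap_re x y
  rw [h, Complex.zero_re] at hre
  constructor <;> linarith

lemma arg_sectorMap_zero_right {x : ℝ} (hx : 0 < x) : (sectorMap x 0).arg = -(Real.pi / 3) := by
  rw [sectorMap, Complex.ofReal_zero, zero_mul, add_zero]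
  exact arg_ofReal_mul_exp hx ⟨by linarith [Real.pi_pos], by linarith [Real.pi_pos]⟩

lemma arg_sectorMap_zero_left {y : ℝ} (hy : 0 < y) : (sectorMap 0 y).arg = Real.pi / 3 := by
  rw [sectorMap, Complex.ofReal_zero, zero_mul, zero_add]
  exact arg_ofReal_mul_exp hy ⟨by linarith [Real.pi_pos], by linarith [Real.pi_pos]⟩

lemma im_sub_im_of_exp_eq_sectorMap {M : I → ℂ} {x y : I → ℝ} {k : ℂ} (hM : Continuous M)
    (hx : Continuous x) (hy : Continuous y) (hx0 : ∀ t, 0 ≤ x t) (hy0 : ∀ t, 0 ≤ y t)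
    (hexp : ∀ t, Complex.exp (M t) = k * sectorMap (x t) (y t)) (hy₀ : y 0 = 0) (hx₁ : x 1 = 0) :
    (M 1).im - (M 0).im = 2 * Real.pi / 3 := by
  have hpos (t) : 0 < x t + y t := by
    refine (add_nonneg (hx0 t) (hy0 t)).lt_of_ne' fun h => ?_
    obtain ⟨hxt, hyt⟩ := (add_eq_zero_iff_of_nonneg (hx0 t) (hy0 t)).1 h
    refine Complex.exp_ne_zero (M t) ((hexp t).trans ?_)
    rw [hxt, hyt, sectorMap, Complex.ofReal_zero, zero_mul, zero_mul, add_zero, mul_zero]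
  have hslit (t) : sectorMap (x t) (y t) ∈ Complex.slitPlane :=
    .inl (sectorMap_re (x t) (y t) ▸ half_pos (hpos t))
  have hcont : Continuous fun t => sectorMap (x t) (y t) := by
    unfold sectorMap
    fun_prop
  have hx₀ : 0 < x 0 := by linarith [hpos 0]
  have hy₁ : 0 < y 1 := by linarith [hpos 1]
  rw [im_sub_im_eq_of_exp_eq hM hcont hslit hexp 0 1, hy₀, hx₁, arg_sectorMap_zero_right hx₀,
    arg_sectorMap_zero_left hy₁]
  ring

/-- The three cube roots of unity `exp (2 * π * I * i / 3)`. -/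
noncomputable def cubeRoot (i : Fin 3) : ℂ := Complex.exp (Real.pi / 3 * Complex.I) ^ (2 * i.val)

lemma sum_cubeRoot_mul_of_eq_zero {d : Fin 3 → ℝ} {i : Fin 3} (hi : d i = 0) :
    ∑ j, cubeRoot j * d j = -cubeRoot i * sectorMap (d (i + 1)) (d (i + 2)) := by
  have hcube : Complex.exp (Real.pi / 3 * Complex.I) ^ 3 = -1 := by
    rw [← Complex.exp_nat_mul, ← Complex.exp_pi_mul_I]
    congr 1
    push_cast
    ring
  have hneg : Complex.exp (↑(-(Real.pi / 3)) * Complex.I) =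
      -Complex.exp (Real.pi / 3 * Complex.I) ^ 2 := by
    rw [← mul_right_inj' (Complex.exp_ne_zero (Real.pi / 3 * Complex.I)), ← Complex.exp_add]
    push_cast
    rw [neg_mul, add_neg_cancel, Complex.exp_zero]
    linear_combination hcube
  have hpos : Complex.exp (↑(Real.pi / 3) * Complex.I) =
      Complex.exp (Real.pi / 3 * Complex.I) := by push_cast; rfl
  rw [sectorMap, hneg, hpos, Fin.sum_univ_three]
  simp only [cubeRoot]
  generalize Complex.exp (Real.pi / 3 * Complex.I) = ζ at hcube ⊢
  have hdi : (d i : ℂ) = 0 := by rw [hi, Complex.ofReal_zero]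
  obtain rfl | rfl | rfl : i = 0 ∨ i = 1 ∨ i = 2 := by omega
  · simp only [Fin.isValue, Fin.reduceAdd, Fin.coe_ofNat_eq_mod, Nat.reduceMod]
    linear_combination hdi + ζ * d 2 * hcube
  · simp only [Fin.isValue, Fin.reduceAdd, Fin.coe_ofNat_eq_mod, Nat.reduceMod]
    linear_combination d 0 * hcube + ζ ^ 2 * hdi
  · simp only [Fin.isValue, Fin.reduceAdd, Fin.coe_ofNat_eq_mod, Nat.reduceMod]
    linear_combination (d 0 * (1 - ζ ^ 3) + ζ ^ 2 * d 1) * hcube + ζ ^ 4 * hdi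

/-- A Knaster–Kuratowski–Mazurkiewicz argument: otherwise `∑ i, cubeRoot i * d i` has a logarithm
along the loop, whose imaginary part grows by `2 * π / 3` on each of the three arcs. -/
theorem exists_forall_eq_zero {E : Type*} [TopologicalSpace E] {D : Set E}
    (hD : IsSimplyConnected D) {d : Fin 3 → E → ℝ} (hd : ∀ i, Continuous (d i))
    (hd0 : ∀ i x, 0 ≤ d i x) (hcov : ∀ x ∈ D, ∃ i, d i x = 0) {p : Fin 3 → E}
    (γ : ∀ i, Path (p (i + 1)) (p (i + 2))) (hγD : ∀ i t, γ i t ∈ D)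
    (hγ : ∀ i t, d i (γ i t) = 0) : ∃ x ∈ D, ∀ i, d i x = 0 := by
  by_contra! hne
  have hG (x) (hx : x ∈ D) : ∑ j, cubeRoot j * d j x ≠ 0 := fun h => by
    obtain ⟨i, hi⟩ := hcov x hx
    rw [sum_cubeRoot_mul_of_eq_zero hi] at h
    obtain ⟨h₁, h₂⟩ := sectorMap_eq_zero (hd0 _ x) (hd0 _ x)
      ((mul_eq_zero.1 h).resolve_left (neg_ne_zero.2 (pow_ne_zero _ (Complex.exp_ne_zero _))))
    obtain ⟨j, hj⟩ := hne x hx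
    obtain rfl | rfl | rfl : j = i ∨ j = i + 1 ∨ j = i + 2 := by omega
    exacts [hj hi, hj h₁, hj h₂]
  obtain ⟨l, hl, -⟩ := exists_isPathLogOn hD (by fun_prop) hG (hγD 0 0)
    (Complex.exp_log (hG _ (hγD 0 0)))
  have hstart (i) : d (i + 2) (p (i + 1)) = 0 := by
    have h := hγ (i + 2) 1
    rwa [Path.target, show i + 2 + 2 = i + 1 by omega] at h
  have hend (i) : d (i + 1) (p (i + 2)) = 0 := by
    have h := hγ (i + 1) 0
    rwa [Path.source, show i + 1 + 1 = i + 2 by omega] at h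
  have harc (i) : (l (p (i + 2))).im - (l (p (i + 1))).im = 2 * Real.pi / 3 := by
    have h := im_sub_im_of_exp_eq_sectorMap (M := l ∘ γ i) (k := -cubeRoot i)
      (hl.continuous_comp _ (γ i).continuous (hγD i)) ((hd (i + 1)).comp (γ i).continuous)
      ((hd (i + 2)).comp (γ i).continuous) (fun _ => hd0 _ _) (fun _ => hd0 _ _)
      (fun t => (hl.exp_eq _ (hγD i t)).trans (sum_cubeRoot_mul_of_eq_zero (hγ i t)))
      (by simpa using hstart i) (by simpa using hend i)
    simpa only [Function.comp_apply, Path.source, Path.target] using h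
  have h₀ := harc 0
  have h₁ := harc 1
  have h₂ := harc 2
  simp only [Fin.isValue, zero_add, Fin.reduceAdd] at h₀ h₁ h₂
  linarith [Real.pi_pos]

theorem nonempty_iInter_inter {A : Fin 3 → Set ℂ} {B : Set ℂ} (hAc : ∀ i, IsClosed (A i))
    (hA : ∀ i, IsSimplyConnected (A i)) (hB : IsSimplyConnected B)
    (hAA : ∀ i j, IsPathConnected (A i ∩ A j)) (hAB : ∀ i, IsPathConnected (A i ∩ B))
    (hAAA : (⋂ i, A i).Nonempty) (hAAB : ∀ i, (A (i + 1) ∩ A (i + 2) ∩ B).Nonempty) :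
    ((⋂ i, A i) ∩ B).Nonempty := by
  choose p hp using hAAB
  have hpath (i) : JoinedIn (A i ∩ B) (p (i + 1)) (p (i + 2)) := by
    have h₁ := hp (i + 1)
    have h₂ := hp (i + 2)
    rw [show i + 1 + 1 = i + 2 by omega, show i + 1 + 2 = i by omega] at h₁
    rw [show i + 2 + 1 = i by omega, show i + 2 + 2 = i + 1 by omega] at h₂
    exact (hAB i).joinedIn _ ⟨h₁.1.2, h₁.2⟩ _ ⟨h₂.1.1, h₂.2⟩
  choose γ hγ using hpath
  let δ : Path (p 0) (p 0) := ((γ 2).trans (γ 0)).trans (γ 1)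
  have hδ : range δ = ⋃ i, range (γ i) := by
    simp only [δ, Path.trans_range]
    ext z
    simp only [mem_union, mem_iUnion, Fin.exists_fin_succ, IsEmpty.exists_iff, or_false,
      Fin.succ_zero_eq_one, Fin.succ_one_eq_two]
    tauto
  have hDA : filledHull (range δ) ⊆ ⋃ i, A i :=
    hδ ▸ filledHull_iUnion_range_subset hA hAA hAAA γ fun i t => (hγ i t).1
  have hDB : filledHull (range δ) ⊆ B := filledHull_range_subset hB δ
    (hδ.trans_subset (iUnion_subset fun i => range_subset_iff.2 fun t => (hγ i t).2))
  have hmem (i) (z : ℂ) : infDist z (A i) = 0 ↔ z ∈ A i :=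
    ((hAc i).mem_iff_infDist_zero (hA i).nonempty).symm
  obtain ⟨x, hxD, hx⟩ := exists_forall_eq_zero (isSimplyConnected_filledHull_range δ)
    (d := fun i z => infDist z (A i)) (fun i => continuous_infDist_pt _)
    (fun _ _ => infDist_nonneg)
    (fun x hx => (mem_iUnion.1 (hDA hx)).imp fun i hi => (hmem i x).2 hi) γ
    (fun i t => subset_filledHull _ (hδ ▸ mem_iUnion.2 ⟨i, t, rfl⟩))
    fun i t => (hmem i _).2 (hγ i t).1
  exact ⟨x, mem_iInter.2 fun i => (hmem i x).1 (hx i), hDB hxD⟩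

end FourSets

/-! ### Finite families -/

section Families

variable {ι : Type*} {S : ι → Set ℂ}

lemma nonempty_inter_inter_inter (hc : ∀ i, IsClosed (S i)) (h : ∀ i, IsSimplyConnected (S i))
    (h₂ : ∀ i j, IsPathConnected (S i ∩ S j)) (h₃ : ∀ i j k, (S i ∩ S j ∩ S k).Nonempty)
    (i j k l : ι) : (S i ∩ S j ∩ S k ∩ S l).Nonempty := by
  have hiInter : ⋂ a, S (![i, j, k] a) = S i ∩ S j ∩ S k := by
    ext x
    simp [Fin.forall_fin_succ, and_assoc]
  rw [← hiInter]
  exact nonempty_iInter_inter (fun _ => hc _) (fun _ => h _) (h l) (fun _ _ => h₂ _ _)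
    (fun _ => h₂ _ _) (hiInter ▸ h₃ i j k) fun _ => h₃ _ _ _

/-- Intersecting all other members of the family with one of them preserves the hypotheses. -/
theorem isSimplyConnected_iInter [Finite ι] (hc : ∀ i, IsClosed (S i))
    (h : ∀ i, IsSimplyConnected (S i)) (h₂ : ∀ i j, IsPathConnected (S i ∩ S j))
    (h₃ : ∀ i j k, (S i ∩ S j ∩ S k).Nonempty) :
    IsSimplyConnected (⋂ i, S i) := by
  induction ι using Finite.induction_empty_option with
  | of_equiv e ih =>
    rw [← e.surjective.iInter_comp]
    exact ih (fun i => hc _) (fun i => h _) (fun i j => h₂ _ _) fun i j k => h₃ _ _ _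
  | h_empty =>
    rw [iInter_of_empty]
    exact (Homeomorph.Set.univ ℂ).toHomotopyEquiv.simplyConnectedSpace
  | @h_option ι _ ih =>
    rw [iInter_option]
    rcases isEmpty_or_nonempty ι with hι | hι
    · rw [iInter_of_empty, inter_univ]
      exact h none
    rw [inter_iInter]
    refine ih (fun i => (hc none).inter (hc (some i)))
      (fun i => isSimplyConnected_inter (h _) (h _) (h₂ _ _)) (fun i j => ?_) fun i j k => ?_
    · rw [← inter_inter_distrib_left, ← inter_assoc]
      exact isPathConnected_inter_inter (h _) (h _) (h _) (h₂ _ _) (h₂ _ _) (h₂ _ _) (h₃ _ _ _)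
    · rw [← inter_inter_distrib_left, ← inter_inter_distrib_left, inter_comm]
      exact nonempty_inter_inter_inter hc h h₂ h₃ _ _ _ _

end Families

end PlanarHelly

open PlanarHelly

theorem topological_helly_plane_general {ι : Type*} [Finite ι]
    {S : ι → Set (EuclideanSpace ℝ (Fin 2))} (hc : ∀ i, IsClosed (S i))
    (h : ∀ i, IsSimplyConnected (S i)) (h₂ : ∀ i j, i ≠ j → IsPathConnected (S i ∩ S j))
    (h₃ : ∀ i j k, i ≠ j → j ≠ k → i ≠ k → (S i ∩ S j ∩ S k).Nonempty) :
    IsSimplyConnected (⋂ i, S i) := by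
  let e : ℂ ≃ₜ EuclideanSpace ℝ (Fin 2) := Complex.orthonormalBasisOneI.repr.toHomeomorph
  have h₂' (i j) : IsPathConnected (S i ∩ S j) := by
    rcases eq_or_ne i j with rfl | hij
    · rw [inter_self]
      exact (h i).isPathConnected
    · exact h₂ i j hij
  have h₃' (i j k) : (S i ∩ S j ∩ S k).Nonempty := by
    by_cases hij : i = j
    · rw [hij, inter_self]
      exact (h₂' j k).nonempty
    by_cases hjk : j = k
    · rw [hjk, inter_assoc, inter_self]
      exact (h₂' i k).nonempty
    by_cases hik : i = k
    · rw [hik, inter_right_comm, inter_self]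
      exact (h₂' k j).nonempty
    exact h₃ i j k hij hjk hik
  rw [← e.isSimplyConnected_preimage, preimage_iInter]
  refine isSimplyConnected_iInter (fun i => (hc i).preimage e.continuous)
    (fun i => e.isSimplyConnected_preimage.2 (h i)) (fun i j => ?_) fun i j k => ?_
  · exact e.isPathConnected_preimage.2 (h₂' i j)
  · exact (h₃' i j k).preimage e.surjective

/-- **Topological Helly theorem in the plane.** If `S₀, …, S_m` (`m ≥ 2`) are simply
connected compact subsets of the plane such that the intersection of every three of them
is nonempty and the intersection of every two of them is simply connected, then the total
intersection `⋂ i, S i` is nonempty and simply connected. -/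
theorem topological_helly_plane
    (m : ℕ) (hm : 2 ≤ m) (S : Fin (m + 1) → Set (EuclideanSpace ℝ (Fin 2)))
    (hcpt : ∀ i, IsCompact (S i))
    (hsc : ∀ i, SimplyConnectedSpace (S i))
    (h3 : ∀ i j k : Fin (m + 1), i ≠ j → j ≠ k → i ≠ k → (S i ∩ S j ∩ S k).Nonempty)
    (h2 : ∀ i j : Fin (m + 1), i ≠ j → SimplyConnectedSpace ↥(S i ∩ S j)) :
    (⋂ i, S i).Nonempty ∧ SimplyConnectedSpace ↥(⋂ i, S i) := by
  have h := topological_helly_plane_general (fun i => (hcpt i).isClosed) hsc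
    (fun i j hij => IsSimplyConnected.isPathConnected (h2 i j hij)) h3
  exact ⟨h.nonempty, h.simplyConnectedSpace⟩
end

section
/- Let L be a locally connected continuum in the plane ℝ² (a nonempty compact connected locally connected subset of ℝ²) and let p be a point lying in a bounded connected component of ℝ² \ L (so L separates p from infinity). Then there exists a simple closed curve J ⊆ L such that p lies in a bounded connected component of ℝ² \ J. -/
/-- A simple closed curve in the plane: a subset homeomorphic to the unit circle, i.e.
the image of an injective continuous map from the circle into the plane. -/
def IsSimpleClosedCurve (C : Set (EuclideanSpace ℝ (Fin 2))) : Prop :=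
  ∃ f : ↥(Metric.sphere (0 : EuclideanSpace ℝ (Fin 2)) 1) → EuclideanSpace ℝ (Fin 2),
    Continuous f ∧ Function.Injective f ∧ Set.range f = C

/-!
If `p` lies in a bounded component of `Lᶜ`, then `z - p` has no continuous logarithm on `L`. As `L`
is locally path connected, some path in `L` around `p` therefore has a lift `Γ` through
`w ↦ p + exp w` with distinct endpoints that have the same image. Replace `Γ` by an arc inside its
range; since `exp` is locally injective, some subarc is injective modulo `exp` except that its
endpoints are identified, and its image is a simple closed curve `J ⊆ L`. As the endpoints of the
subarc differ, `z - p` has no continuous logarithm on `J`, so `J` separates `p` from infinity.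

The arc in the range of `Γ` is found by making `Γ` constant on each gap of a minimal closed set of
parameters for which this is possible; the result has order-connected fibres, and reparametrising it
by a monotone function with the same fibres makes it injective.
-/

open Set Filter Topology Metric unitInterval

section LocalPathConnectedness

variable {X : Type*} [MetricSpace X] {V W : Set X} {x y : X} {ε : ℝ} {f g : ℝ → X}

/-- `x` and `y` lie in a connected open subset of `V` of diameter at most `ε`. -/
def ConnectedWithin (V : Set X) (ε : ℝ) (x y : X) : Prop :=
  ∃ W ⊆ V, IsOpen W ∧ IsPreconnected W ∧ (∀ a ∈ W, ∀ b ∈ W, dist a b ≤ ε) ∧ x ∈ W ∧ y ∈ W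

/-- The concatenation of two functions on `[0, 1]`, each run at double speed; it is defined on the
whole line to avoid subtypes. -/
noncomputable def stepConcat (f g : ℝ → X) (t : ℝ) : X :=
  if t < 1 / 2 then f (2 * t) else g (2 * t - 1)

/-- Step functions from `x` to `y` obtained by concatenating finitely many jumps, each inside a
connected open subset of `V` of diameter at most `ε`. They are discrete approximations of paths:
every jump can be refined without moving the function by more than `ε`. -/
inductive StepPath (V : Set X) (ε : ℝ) : X → X → (ℝ → X) → Prop
  | jump {x y : X} (h : ConnectedWithin V ε x y) :
      StepPath V ε x y (stepConcat (fun _ ↦ x) fun _ ↦ y)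
  | trans {x y z : X} {f g : ℝ → X} (hf : StepPath V ε x y f) (hg : StepPath V ε y z g) :
      StepPath V ε x z (stepConcat f g)

namespace StepPath

lemma mono (h : StepPath W ε x y f) (hWV : W ⊆ V) : StepPath V ε x y f := by
  induction h with
  | jump h =>
    obtain ⟨U, hUW, hU⟩ := h
    exact jump ⟨U, hUW.trans hWV, hU⟩
  | trans _ _ hf hg => exact trans hf hg

lemma apply_mem (h : StepPath V ε x y f) (t : ℝ) : f t ∈ V := by
  induction h generalizing t with
  | jump h =>
    obtain ⟨W, hWV, -, -, -, hx, hy⟩ := h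
    unfold stepConcat
    split_ifs
    exacts [hWV hx, hWV hy]
  | trans _ _ hf hg =>
    unfold stepConcat
    split_ifs
    exacts [hf _, hg _]

lemma eventuallyEq_source (h : StepPath V ε x y f) : ∀ᶠ t in 𝓝 0, f t = x := by
  have hhalf : ∀ᶠ t : ℝ in 𝓝 0, t < 1 / 2 := eventually_lt_nhds (by norm_num)
  induction h with
  | jump _ => filter_upwards [hhalf] with t ht using if_pos ht
  | trans _ _ hf _ =>
    have hdouble : Tendsto (fun t : ℝ ↦ 2 * t) (𝓝 0) (𝓝 0) := by
      simpa using (continuous_const_mul (2 : ℝ)).tendsto 0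
    filter_upwards [hhalf, hdouble.eventually hf] with t ht hft
    rwa [stepConcat, if_pos ht]

lemma eventuallyEq_target (h : StepPath V ε x y f) : ∀ᶠ t in 𝓝 1, f t = y := by
  have hhalf : ∀ᶠ t : ℝ in 𝓝 1, 1 / 2 < t := eventually_gt_nhds (by norm_num)
  induction h with
  | jump _ => filter_upwards [hhalf] with t ht using if_neg ht.not_gt
  | trans _ _ _ hg =>
    have hdouble : Tendsto (fun t : ℝ ↦ 2 * t - 1) (𝓝 1) (𝓝 1) :=
      Continuous.tendsto' (by fun_prop) _ _ (by norm_num)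
    filter_upwards [hhalf, hdouble.eventually hg] with t ht hgt
    rwa [stepConcat, if_neg ht.not_gt]

lemma eventually_dist_le (h : StepPath V ε x y f) (t : ℝ) : ∀ᶠ s in 𝓝 t, dist (f s) (f t) ≤ ε := by
  induction h generalizing t with
  | jump h =>
    obtain ⟨W, -, -, -, hdiam, hx, hy⟩ := h
    refine .of_forall fun s ↦ ?_
    unfold stepConcat
    split_ifs
    exacts [hdiam _ hx _ hx, hdiam _ hx _ hy, hdiam _ hy _ hx, hdiam _ hy _ hy]
  | @trans x y z f g hf hg ihf ihg =>
    have hleft : Tendsto (fun s : ℝ ↦ 2 * s) (𝓝 t) (𝓝 (2 * t)) := Continuous.tendsto (by fun_prop) t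
    have hright : Tendsto (fun s : ℝ ↦ 2 * s - 1) (𝓝 t) (𝓝 (2 * t - 1)) :=
      Continuous.tendsto (by fun_prop) t
    rcases lt_trichotomy t (1 / 2) with ht | rfl | ht
    · filter_upwards [eventually_lt_nhds ht, hleft.eventually (ihf _)] with s hs hfs
      rwa [stepConcat, stepConcat, if_pos hs, if_pos ht]
    · norm_num at hleft hright
      have hzero : g 0 = y := hg.eventuallyEq_source.self_of_nhds
      have hmid : stepConcat f g (1 / 2) = y := by norm_num [stepConcat, hzero]
      filter_upwards [hleft.eventually hf.eventuallyEq_target, hright.eventually (ihg 0)]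
        with s hfs hgs
      rw [hmid, stepConcat]
      split_ifs
      · rw [hfs, dist_self]
        exact dist_nonneg.trans hgs
      · rwa [← hzero]
    · filter_upwards [eventually_gt_nhds ht, hright.eventually (ihg _)] with s hs hgs
      rwa [stepConcat, stepConcat, if_neg hs.not_gt, if_neg ht.not_gt]

section Existence

variable [LocallyConnectedSpace X]

lemma exists_of_isPreconnected (hVo : IsOpen V) (hVc : IsPreconnected V) (hε : 0 < ε)
    (hx : x ∈ V) (hy : y ∈ V) : ∃ f, StepPath V ε x y f := by
  refine hVc.induction₂' (fun x y ↦ ∃ f, StepPath V ε x y f) (fun z hz ↦ ?_)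
    (fun _ _ _ _ _ _ ⟨f, hf⟩ ⟨g, hg⟩ ↦ ⟨_, hf.trans hg⟩) hx hy
  obtain ⟨W, hW, hWo, hzW, hWc⟩ := locallyConnectedSpace_iff_subsets_isOpen_isConnected.1 ‹_› z
    (V ∩ ball z (ε / 2)) (inter_mem (hVo.mem_nhds hz) (ball_mem_nhds z (half_pos hε)))
  have hdiam : ∀ a ∈ W, ∀ b ∈ W, dist a b ≤ ε := fun a ha b hb ↦ by
    linarith [dist_triangle_right a b z, mem_ball.1 (hW ha).2, mem_ball.1 (hW hb).2]
  have hW' : ∀ a ∈ W, ∀ b ∈ W, ConnectedWithin V ε a b := fun a ha b hb ↦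
    ⟨W, hW.trans inter_subset_left, hWo, hWc.isPreconnected, hdiam, ha, hb⟩
  filter_upwards [mem_nhdsWithin_of_mem_nhds (hWo.mem_nhds hzW)] with w hw
  exact ⟨⟨_, jump (hW' z hzW w hw)⟩, ⟨_, jump (hW' w hw z hzW)⟩⟩

lemma exists_refinement {δ : ℝ} (h : StepPath V ε x y f) (hδ : 0 < δ) :
    ∃ g, StepPath V δ x y g ∧ ∀ t, dist (f t) (g t) ≤ ε := by
  induction h with
  | @jump x y h =>
    obtain ⟨W, hWV, hWo, hWc, hdiam, hx, hy⟩ := h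
    obtain ⟨g, hg⟩ := exists_of_isPreconnected hWo hWc hδ hx hy
    refine ⟨g, hg.mono hWV, fun t ↦ hdiam _ ?_ _ (hg.apply_mem t)⟩
    unfold stepConcat
    split_ifs
    exacts [hx, hy]
  | trans _ _ hf hg =>
    obtain ⟨f', hf', hff'⟩ := hf
    obtain ⟨g', hg', hgg'⟩ := hg
    refine ⟨_, hf'.trans hg', fun t ↦ ?_⟩
    unfold stepConcat
    split_ifs
    exacts [hff' _, hgg' _]

lemma exists_seq_refinement (hVo : IsOpen V) (hVc : IsPreconnected V) (hx : x ∈ V) (hy : y ∈ V)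
    {δ : ℕ → ℝ} (hδ : ∀ n, 0 < δ n) :
    ∃ F : ℕ → ℝ → X, (∀ n, StepPath V (δ n) x y (F n)) ∧
      ∀ n t, dist (F n t) (F (n + 1) t) ≤ δ n := by
  obtain ⟨f₀, hf₀⟩ := exists_of_isPreconnected hVo hVc (hδ 0) hx hy
  choose! next hnext hdist using
    fun n f (hf : StepPath V (δ n) x y f) ↦ hf.exists_refinement (hδ (n + 1))
  let F : ℕ → ℝ → X := Nat.rec f₀ next
  have hF : ∀ n, StepPath V (δ n) x y (F n) := fun n ↦ by
    induction n with
    | zero => exact hf₀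
    | succ n ih => exact hnext n _ ih
  exact ⟨F, hF, fun n ↦ hdist n _ (hF n)⟩

end Existence

end StepPath

variable [LocallyConnectedSpace X] [CompleteSpace X]

lemma joinedIn_closure_of_isPreconnected (hVo : IsOpen V) (hVc : IsPreconnected V)
    (hx : x ∈ V) (hy : y ∈ V) : JoinedIn (closure V) x y := by
  obtain ⟨F, hF, hdist⟩ := StepPath.exists_seq_refinement hVo hVc hx hy
    (δ := fun n ↦ 2 / 2 / 2 ^ n) fun n ↦ by positivity
  choose f hf using fun t ↦
    cauchySeq_tendsto_of_complete (cauchySeq_of_le_geometric_two fun n ↦ hdist n t)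
  have hFf : ∀ n t, dist (F n t) (f t) ≤ 2 / 2 ^ n := fun n t ↦
    dist_le_of_le_geometric_two_of_tendsto (fun n ↦ hdist n t) (hf t) n
  have hcont : Continuous f := by
    refine Metric.continuous_iff'.2 fun t ε hε ↦ ?_
    obtain ⟨n, hn⟩ := exists_pow_lt_of_lt_one (show 0 < ε / 5 by positivity) one_half_lt_one
    filter_upwards [(hF n).eventually_dist_le t] with s hs
    have h2 : (2 : ℝ) / 2 ^ n = 2 * (1 / 2) ^ n := by rw [one_div_pow]; ring
    have h1 : (2 : ℝ) / 2 / 2 ^ n = (1 / 2) ^ n := by rw [one_div_pow]; ring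
    have hs' := dist_comm (F n s) (f s) ▸ hFf n s
    linarith [dist_triangle4 (f s) (F n s) (F n t) (f t), hFf n t]
  refine JoinedIn.ofLine hcont.continuousOn ?_ ?_ ?_
  · exact tendsto_nhds_unique (hf 0) <| tendsto_const_nhds.congr fun n ↦
      (hF n).eventuallyEq_source.self_of_nhds.symm
  · exact tendsto_nhds_unique (hf 1) <| tendsto_const_nhds.congr fun n ↦
      (hF n).eventuallyEq_target.self_of_nhds.symm
  · rintro _ ⟨t, -, rfl⟩
    exact mem_closure_of_tendsto (hf t) (.of_forall fun n ↦ (hF n).apply_mem t)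

theorem locallyPathConnectedSpace_of_complete : LocallyPathConnectedSpace X := by
  refine locallyPathConnectedSpace_iff_pathComponentIn_mem_nhds.2 fun x U hU hxU ↦ ?_
  obtain ⟨K, hK, hKc, hKU⟩ := exists_mem_nhds_isClosed_subset (hU.mem_nhds hxU)
  obtain ⟨V, hVK, hVo, hxV, hVc⟩ :=
    locallyConnectedSpace_iff_subsets_isOpen_isConnected.1 ‹_› x K hK
  filter_upwards [hVo.mem_nhds hxV] with y hy
  exact (joinedIn_closure_of_isPreconnected hVo hVc.isPreconnected hxV hy).mono
    ((closure_minimal hVK hKc).trans hKU)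

end LocalPathConnectedness

section Arcs

variable {X : Type*} [TopologicalSpace X] {x y : X} {γ : C(I, X)} {K : Set I} {s t : I}

/-- `γ` can be cut down to `K`: making `γ` constant on every complementary interval of the closed
set `K` does not break its continuity, because `γ` agrees at both endpoints of such an interval. -/
structure IsCollapsing (γ : C(I, X)) (K : Set I) : Prop where
  isClosed : IsClosed K
  zero_mem : 0 ∈ K
  one_mem : 1 ∈ K
  apply_eq : ∀ u ∈ K, ∀ v ∈ K, u < v → Disjoint (Ioo u v) K → γ u = γ v

namespace IsCollapsing

lemma univ (γ : C(I, X)) : IsCollapsing γ univ where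
  isClosed := isClosed_univ
  zero_mem := mem_univ 0
  one_mem := mem_univ 1
  apply_eq _ _ _ _ huv hdisj := ((nonempty_Ioo.2 huv).ne_empty (disjoint_univ.1 hdisj)).elim

lemma exists_isGreatest (hK : IsCollapsing γ K) (t : I) : ∃ u, IsGreatest (K ∩ Iic t) u :=
  (hK.isClosed.inter isClosed_Iic).isCompact.exists_isGreatest ⟨0, hK.zero_mem, t.2.1⟩

lemma exists_isLeast (hK : IsCollapsing γ K) (t : I) : ∃ u, IsLeast (K ∩ Ici t) u :=
  (hK.isClosed.inter isClosed_Ici).isCompact.exists_isLeast ⟨1, hK.one_mem, t.2.2⟩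

lemma apply_eq_of_isGreatest_of_isLeast (hK : IsCollapsing γ K) {u v : I}
    (hu : IsGreatest (K ∩ Iic t) u) (hv : IsLeast (K ∩ Ici t) v) : γ u = γ v := by
  obtain rfl | huv := (hu.1.2.trans hv.1.2 : u ≤ v).eq_or_lt
  · rfl
  refine hK.apply_eq u hu.1.1 v hv.1.1 huv (Set.disjoint_left.2 fun w hw hwK ↦ ?_)
  obtain hwt | htw := le_total w t
  · exact hw.1.not_ge (hu.2 ⟨hwK, hwt⟩)
  · exact hw.2.not_ge (hv.2 ⟨hwK, htw⟩)

lemma sdiff_Ioo (hK : IsCollapsing γ K) (hs : s ∈ K) (ht : t ∈ K) (hst : γ s = γ t) :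
    IsCollapsing γ (K \ Ioo s t) where
  isClosed := hK.isClosed.sdiff isOpen_Ioo
  zero_mem := ⟨hK.zero_mem, fun h ↦ h.1.not_ge s.2.1⟩
  one_mem := ⟨hK.one_mem, fun h ↦ h.2.not_ge t.2.2⟩
  apply_eq u hu v hv huv hdisj := by
    have hsub : K ∩ Ioo u v ⊆ Ioo s t := fun w hw ↦ by
      by_contra hwst
      exact Set.disjoint_left.1 hdisj hw.2 ⟨hw.1, hwst⟩
    by_cases hne : Disjoint (Ioo u v) K
    · exact hK.apply_eq u hu.1 v hv.1 huv hne
    obtain ⟨w, hwuv, hwK⟩ := Set.not_disjoint_iff.1 hne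
    have hwst := hsub ⟨hwK, hwuv⟩
    have hus : u = s := le_antisymm (not_lt.1 fun h ↦ hu.2 ⟨h, hwuv.1.trans hwst.2⟩)
      (not_lt.1 fun h ↦ (hsub ⟨hs, h, hwst.1.trans hwuv.2⟩).1.false)
    have hvt : v = t := le_antisymm
      (not_lt.1 fun h ↦ (hsub ⟨ht, hwuv.1.trans hwst.2, h⟩).2.false)
      (not_lt.1 fun h ↦ hv.2 ⟨hwst.1.trans hwuv.2, h⟩)
    rw [hus, hvt, hst]

lemma sInter [T2Space X] {c : Set (Set I)} (hc : ∀ K ∈ c, IsCollapsing γ K)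
    (hchain : IsChain (· ⊆ ·) c) (hne : c.Nonempty) : IsCollapsing γ (⋂₀ c) where
  isClosed := isClosed_sInter fun K hK ↦ (hc K hK).isClosed
  zero_mem K hK := (hc K hK).zero_mem
  one_mem K hK := (hc K hK).one_mem
  apply_eq u hu v hv huv hdisj := by
    obtain ⟨m, hum, hmv⟩ := exists_between huv
    let T : Set I → Set (I × I) := fun K ↦
      ((K ∩ Icc u m) ×ˢ (K ∩ Icc m v)) ∩ {q | γ q.1 = γ q.2}
    have hTclosed : ∀ K : c, IsClosed (T K) := fun K ↦
      (((hc K K.2).isClosed.inter isClosed_Icc).prod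
        ((hc K K.2).isClosed.inter isClosed_Icc)).inter (isClosed_eq (by fun_prop) (by fun_prop))
    have hTne : ∀ K : c, (T K).Nonempty := fun K ↦ by
      have hK := hc K K.2
      obtain ⟨⟨a, ha⟩, b, hb⟩ := And.intro (hK.exists_isGreatest m) (hK.exists_isLeast m)
      exact ⟨(a, b), ⟨⟨ha.1.1, ha.2 ⟨hu K K.2, hum.le⟩, ha.1.2⟩,
        hb.1.1, hb.1.2, hb.2 ⟨hv K K.2, hmv.le⟩⟩, hK.apply_eq_of_isGreatest_of_isLeast ha hb⟩
    have hTmono : Monotone T := fun K K' h ↦ inter_subset_inter_left _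
      (prod_mono (inter_subset_inter_left _ h) (inter_subset_inter_left _ h))
    have := hne.to_subtype
    have hdir : Directed (· ⊇ ·) fun K : c ↦ T K :=
      fun K K' ↦ (hchain.total K.2 K'.2).elim (fun h ↦ ⟨K, subset_rfl, hTmono h⟩)
        fun h ↦ ⟨K', hTmono h, subset_rfl⟩
    obtain ⟨⟨a, b⟩, hab⟩ := IsCompact.nonempty_iInter_of_directed_nonempty_isCompact_isClosed
      (fun K : c ↦ T K) hdir hTne
      (fun K ↦ (hTclosed K).isCompact) hTclosed
    rw [mem_iInter] at hab
    have haK : a ∈ ⋂₀ c := fun K hK ↦ (hab ⟨K, hK⟩).1.1.1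
    have hbK : b ∈ ⋂₀ c := fun K hK ↦ (hab ⟨K, hK⟩).1.2.1
    obtain ⟨⟨⟨-, ha⟩, -, hb⟩, hγ : γ a = γ b⟩ := hab ⟨_, hne.some_mem⟩
    have hau : a = u := (ha.1.eq_or_lt.resolve_right fun h ↦
      Set.disjoint_left.1 hdisj ⟨h, ha.2.trans_lt hmv⟩ haK).symm
    have hbv : b = v := hb.2.eq_or_lt.resolve_right fun h ↦
      Set.disjoint_left.1 hdisj ⟨hum.trans_le hb.1, h⟩ hbK
    rw [← hau, ← hbv, hγ]

lemma exists_minimal [T2Space X] (γ : C(I, X)) : ∃ K, Minimal (IsCollapsing γ) K :=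
  let ⟨K, _, hK⟩ := zorn_superset_nonempty {K | IsCollapsing γ K}
    (fun _ hc hchain hne ↦ ⟨_, sInter hc hchain hne, fun _ ↦ sInter_subset_of_mem⟩) _ (univ γ)
  ⟨K, hK⟩

lemma exists_collapse {M : Type*} [PseudoMetricSpace M] {γ : C(I, M)} (hK : IsCollapsing γ K) :
    ∃ β : C(I, M), ∀ t u, IsGreatest (K ∩ Iic t) u → β t = γ u := by
  choose r hr using hK.exists_isGreatest
  have hdist : ∀ s t, s ≤ t → γ (r s) = γ (r t) ∨
      ∃ u ∈ Icc s t, ∃ v ∈ Icc s t, γ (r s) = γ u ∧ γ (r t) = γ v := fun s t hst ↦ by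
    obtain hlt | hle := lt_or_ge (r t) s
    · have hrt : r t = r s := le_antisymm ((hr s).2 ⟨(hr t).1.1, hlt.le⟩)
        ((hr t).2 ⟨(hr s).1.1, (hr s).1.2.trans hst⟩)
      exact .inl (congrArg γ hrt.symm)
    · obtain ⟨v, hv⟩ := hK.exists_isLeast s
      exact .inr ⟨v, ⟨hv.1.2, (hv.2 ⟨(hr t).1.1, hle⟩).trans (hr t).1.2⟩, r t, ⟨hle, (hr t).1.2⟩,
        hK.apply_eq_of_isGreatest_of_isLeast (hr s) hv, rfl⟩
  have hcont : Continuous (γ ∘ r) := by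
    refine UniformContinuous.continuous (Metric.uniformContinuous_iff.2 fun ε hε ↦ ?_)
    obtain ⟨δ, hδ, hγδ⟩ := Metric.uniformContinuous_iff.1
      (CompactSpace.uniformContinuous_of_continuous γ.continuous) ε hε
    refine ⟨δ, hδ, fun s t hst ↦ ?_⟩
    wlog hle : s ≤ t generalizing s t
    · rw [dist_comm]
      exact this t s (by rwa [dist_comm]) (le_of_not_ge hle)
    obtain heq | ⟨u, hu, v, hv, hsu, htv⟩ := hdist s t hle
    · simpa [heq] using hε
    · rw [Function.comp_apply, Function.comp_apply, hsu, htv]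
      exact hγδ ((Real.dist_le_of_mem_uIcc (Icc_subset_uIcc ⟨hu.1, hu.2⟩)
        (Icc_subset_uIcc ⟨hv.1, hv.2⟩)).trans_lt hst)
  exact ⟨⟨γ ∘ r, hcont⟩, fun t u hu ↦ congrArg γ ((hr t).unique hu)⟩

end IsCollapsing

lemma exists_injective_path_range_eq {φ : C(I, ℝ)} (hφ : Monotone φ) (hxy : x ≠ y) (β : Path x y)
    (hφβ : ∀ s t, φ s = φ t ↔ β s = β t) :
    ∃ α : Path x y, Function.Injective α ∧ range α = range β := by
  have h01 : φ 0 < φ 1 := (hφ zero_le_one).lt_of_ne fun h ↦ hxy <| by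
    simpa using (hφβ 0 1).1 h
  let h := iccHomeoI (φ 0) (φ 1) h01
  let ψ : C(I, I) := ⟨fun t ↦ h ⟨φ t, hφ t.2.1, hφ t.2.2⟩, by fun_prop⟩
  have hψβ : ∀ s t, ψ s = ψ t ↔ β s = β t := fun s t ↦ by
    rw [← hφβ]
    exact h.injective.eq_iff.trans Subtype.mk_eq_mk
  have hψ : Function.Surjective ψ := h.surjective.comp fun ⟨r, hr⟩ ↦
    let ⟨t, ht⟩ := intermediate_value_univ 0 1 φ.continuous hr
    ⟨t, Subtype.ext ht⟩
  have hquot : IsQuotientMap ψ := ψ.continuous.isClosedMap.isQuotientMap ψ.continuous hψ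
  have hfactor : Function.FactorsThrough β.toContinuousMap ψ := fun s t ↦ (hψβ s t).1
  let α : C(I, X) := hquot.lift β.toContinuousMap hfactor
  have hα : ∀ t, α (ψ t) = β t := DFunLike.congr_fun (hquot.lift_comp _ hfactor)
  have h0 : ψ 0 = 0 := by
    ext
    simp [ψ, h]
  have h1 : ψ 1 = 1 := by
    ext
    simp [ψ, h, (sub_pos.2 h01).ne']
  refine ⟨⟨α, ?_, ?_⟩, fun s t hst ↦ ?_, ?_⟩
  · simpa [h0] using hα 0
  · simpa [h1] using hα 1
  · obtain ⟨⟨s, rfl⟩, t, rfl⟩ := And.intro (hψ s) (hψ t)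
    exact (hψβ s t).2 ((hα s).symm.trans (hst.trans (hα t)))
  · exact (hψ.range_comp α).symm.trans (congrArg range (funext hα))

section Metric

variable {X : Type*} [MetricSpace X] {x y : X}

lemma exists_path_ordConnected_preimage (γ : Path x y) :
    ∃ β : Path x y, range β ⊆ range γ ∧ ∀ z, (β ⁻¹' {z}).OrdConnected := by
  obtain ⟨K, hK, hmin⟩ := IsCollapsing.exists_minimal γ.toContinuousMap
  obtain ⟨β, hβ⟩ := hK.exists_collapse
  have hβK : ∀ t ∈ K, β t = γ t := fun t ht ↦ hβ t t ⟨⟨ht, le_refl t⟩, fun _ h ↦ h.2⟩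
  refine ⟨⟨β, (hβK 0 hK.zero_mem).trans γ.source, (hβK 1 hK.one_mem).trans γ.target⟩, ?_,
    fun z ↦ ⟨fun s hs t ht u hu ↦ ?_⟩⟩
  · rintro _ ⟨t, rfl⟩
    obtain ⟨u, hu⟩ := hK.exists_isGreatest t
    exact ⟨u, (hβ t u hu).symm⟩
  · obtain ⟨a, ha⟩ := hK.exists_isGreatest s
    obtain ⟨b, hb⟩ := hK.exists_isGreatest t
    obtain ⟨w, hw⟩ := hK.exists_isGreatest u
    have hγa : γ a = z := (hβ s a ha).symm.trans hs
    have hγb : γ b = z := (hβ t b hb).symm.trans ht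
    have haw : a ≤ w := hw.2 ⟨ha.1.1, ha.1.2.trans hu.1⟩
    have hwb : w ≤ b := hb.2 ⟨hw.1.1, hw.1.2.trans hu.2⟩
    have hwab : w ∉ Ioo a b :=
      (hmin (hK.sdiff_Ioo ha.1.1 hb.1.1 (hγa.trans hγb.symm)) sdiff_subset hw.1.1).2
    refine (hβ u w hw).trans ?_
    obtain rfl | haw := haw.eq_or_lt
    · exact hγa
    · exact (hwb.eq_or_lt.resolve_right fun h ↦ hwab ⟨haw, h⟩) ▸ hγb

lemma continuous_infDist_range {M P T : Type*} [PseudoMetricSpace M] [TopologicalSpace P]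
    [TopologicalSpace T] [CompactSpace T] {f : P → M} {g : P → T → M} (hf : Continuous f)
    (hg : Continuous (Function.uncurry g)) : Continuous fun p ↦ infDist (f p) (range (g p)) := by
  have hinf : ∀ p, infDist (f p) (range (g p)) = sInf ((fun v ↦ dist (f p) (g p v)) '' Set.univ) :=
    fun p ↦ by rw [infDist_eq_iInf, iInf_range' (dist (f p)), image_univ, sInf_range]
  simp only [hinf]
  exact isCompact_univ.continuous_sInf (by fun_prop)

lemma exists_monotone_eq_iff {T : Type*} [LinearOrder T] [TopologicalSpace T]
    {F : T → I → ℝ}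
    (hF : Continuous (Function.uncurry F)) (hmono : ∀ u, Monotone (F · u)) :
    ∃ φ : C(T, ℝ), Monotone φ ∧ ∀ s t, φ s = φ t ↔ F s = F t := by
  let G : T → ℝ → ℝ := fun t u ↦ F t (projIcc 0 1 zero_le_one u)
  have hG : Continuous (Function.uncurry G) :=
    hF.comp (f := fun q : T × ℝ ↦ (q.1, projIcc 0 1 zero_le_one q.2)) (by fun_prop)
  have hGt : ∀ t, Continuous (G t) := fun t ↦ hG.comp (by fun_prop : Continuous fun u ↦ (t, u))
  let φ : C(T, ℝ) := ⟨fun t ↦ ∫ u in (0 : ℝ)..1, G t u,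
    intervalIntegral.continuous_parametric_intervalIntegral_of_continuous' hG 0 1⟩
  have hφ : Monotone φ := fun s t hst ↦ intervalIntegral.integral_mono_on zero_le_one
    ((hGt s).intervalIntegrable 0 1) ((hGt t).intervalIntegrable 0 1) fun _ _ ↦ hmono _ hst
  have hlt : ∀ s t, s ≤ t → F s ≠ F t → φ s < φ t := fun s t hst hne ↦ by
    obtain ⟨u, hu⟩ := Function.ne_iff.1 hne
    refine intervalIntegral.integral_lt_integral_of_continuousOn_of_le_of_exists_lt zero_lt_one
      (hGt s).continuousOn (hGt t).continuousOn (fun _ _ ↦ hmono _ hst) ⟨u, u.2, ?_⟩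
    simpa only [G, projIcc_val] using (hmono u hst).lt_of_ne hu
  refine ⟨φ, hφ, fun s t ↦ ?_⟩
  wlog hst : s ≤ t generalizing s t
  · rw [eq_comm, this t s (le_of_not_ge hst), eq_comm]
  refine ⟨fun h ↦ by_contra fun hne ↦ (hlt s t hst hne).ne h, fun h ↦ ?_⟩
  simp only [φ, G, ContinuousMap.coe_mk, h]

lemma exists_monotone_separating_fibers (β : C(I, X)) (hβ : ∀ z, (β ⁻¹' {z}).OrdConnected) :
    ∃ φ : C(I, ℝ), Monotone φ ∧ ∀ s t, φ s = φ t ↔ β s = β t := by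
  let F : I → I → ℝ := fun t u ↦ infDist (β u) (β '' Ici t)
  have hrange : ∀ t, β '' Ici t = range fun v ↦ β (max t v) := fun t ↦ by
    refine Subset.antisymm ?_ ?_
    · rintro _ ⟨v, hv, rfl⟩
      exact ⟨v, congrArg β (max_eq_right hv)⟩
    · rintro _ ⟨v, rfl⟩
      exact ⟨_, le_max_left t v, rfl⟩
  have hF : Continuous (Function.uncurry F) := by
    have := continuous_infDist_range (f := fun q : I × I ↦ β q.2) (g := fun q v ↦ β (max q.1 v))
      (by fun_prop) (by fun_prop)
    simpa only [Function.uncurry_def, F, hrange] using this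
  have hne : ∀ t, (β '' Ici t).Nonempty := fun t ↦ nonempty_Ici.image β
  have hmono : ∀ u, Monotone (F · u) := fun u s t hst ↦
    infDist_le_infDist_of_subset (image_mono (Ici_subset_Ici.2 hst)) (hne t)
  have hFβ : ∀ s t, s ≤ t → (F s = F t ↔ β s = β t) := fun s t hst ↦ by
    refine ⟨fun h ↦ ?_, fun h ↦ ?_⟩
    · have hs : infDist (β s) (β '' Ici t) = 0 :=
        (congrFun h s).symm.trans (infDist_zero_of_mem ⟨s, le_refl s, rfl⟩)
      obtain ⟨v, hv, hvs⟩ := ((isClosed_Ici.isCompact.image β.continuous).isClosed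
        |>.mem_iff_infDist_zero (hne t)).2 hs
      exact ((hβ _).out rfl hvs ⟨hst, hv⟩).symm
    · have himage : β '' Ici s = β '' Ici t := by
        refine (image_mono (Ici_subset_Ici.2 hst)).antisymm' ?_
        rintro _ ⟨v, hv, rfl⟩
        obtain htv | hvt := le_total t v
        · exact ⟨v, htv, rfl⟩
        · exact ⟨t, le_refl t, h.symm.trans ((hβ _).out rfl h.symm ⟨hv, hvt⟩).symm⟩
      simp only [F, himage]
  obtain ⟨φ, hφ, hφF⟩ := exists_monotone_eq_iff hF hmono
  refine ⟨φ, hφ, fun s t ↦ (hφF s t).trans ?_⟩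
  obtain hst | hts := le_total s t
  · exact hFβ s t hst
  · rw [eq_comm, hFβ t s hts, eq_comm]

theorem exists_injective_path (γ : Path x y) (hxy : x ≠ y) :
    ∃ α : Path x y, Function.Injective α ∧ range α ⊆ range γ := by
  obtain ⟨β, hβγ, hβ⟩ := exists_path_ordConnected_preimage γ
  obtain ⟨φ, hφ, hφβ⟩ := exists_monotone_separating_fibers β.toContinuousMap hβ
  obtain ⟨α, hα, hαβ⟩ := exists_injective_path_range_eq hφ hxy β hφβ
  exact ⟨α, hα, hαβ.trans_subset hβγ⟩

end Metric

end Arcs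

section Lifting

variable {A E Y : Type*} [TopologicalSpace A] [TopologicalSpace E] [TopologicalSpace Y]
  [LocallyPathConnectedSpace A] {c : E → Y}

lemma exists_lift_or_exists_path_of_pathConnectedSpace [PathConnectedSpace A]
    (hc : IsCoveringMap c) (hsurj : Function.Surjective c) (f : C(A, Y)) :
    (∃ F : C(A, E), ∀ a, c (F a) = f a) ∨
      ∃ x y, x ≠ y ∧ c x = c y ∧ ∃ Γ : Path x y, ∀ t, c (Γ t) ∈ range f := by
  refine or_iff_not_imp_right.2 fun hnot ↦ ?_
  obtain ⟨a₀⟩ := PathConnectedSpace.nonempty (X := A)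
  obtain ⟨e₀, he₀⟩ := hsurj (f a₀)
  suffices hF : ∃! F : C(A, E), F a₀ = e₀ ∧ c ∘ F = f by
    obtain ⟨F, ⟨-, hF⟩, -⟩ := hF
    exact ⟨F, congr_fun hF⟩
  refine hc.isLocalHomeomorph.existsUnique_continuousMap_lifts f a₀ e₀ he₀ (fun γ hγ ↦ ?_)
    fun γ γ' Γ Γ' _ _ hΓ₀ hΓ'₀ hΓ hΓ' hγγ' ↦ ?_
  · obtain ⟨Γ, hΓ, hΓ₀⟩ := hc.exists_path_lifts (f.comp γ) e₀ (by simp [hγ, he₀])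
    exact ⟨Γ, hΓ₀, hΓ⟩
  · by_contra hne
    let P : Path (Γ 1) (Γ' 1) := (Path.mk Γ hΓ₀ rfl).symm.trans (Path.mk Γ' hΓ'₀ rfl)
    have hP : range P ⊆ c ⁻¹' range f := by
      rw [Path.trans_range, Path.symm_range]
      rintro _ (⟨s, rfl⟩ | ⟨s, rfl⟩)
      exacts [⟨γ s, (congr_fun hΓ s).symm⟩, ⟨γ' s, (congr_fun hΓ' s).symm⟩]
    have hends : c (Γ 1) = c (Γ' 1) :=
      (congr_fun hΓ 1).trans ((congrArg f hγγ').trans (congr_fun hΓ' 1).symm)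
    exact hnot ⟨_, _, hne, hends, P, fun t ↦ hP (mem_range_self t)⟩

lemma exists_lift_or_exists_path (hc : IsCoveringMap c) (hsurj : Function.Surjective c)
    (f : C(A, Y)) :
    (∃ F : C(A, E), ∀ a, c (F a) = f a) ∨
      ∃ x y, x ≠ y ∧ c x = c y ∧ ∃ Γ : Path x y, ∀ t, c (Γ t) ∈ range f := by
  refine or_iff_not_imp_right.2 fun hnot ↦ ?_
  have hlift : ∀ C ∈ range (pathComponent (X := A)), ∃ F : C(C, E), ∀ a, c (F a) = f a := by
    rintro _ ⟨a, rfl⟩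
    have := (IsOpen.pathComponent a).locallyPathConnectedSpace
    have := isPathConnected_iff_pathConnectedSpace.1 (isPathConnected_pathComponent (x := a))
    refine (exists_lift_or_exists_path_of_pathConnectedSpace hc hsurj
      (f.restrict (pathComponent a))).resolve_right ?_
    rintro ⟨x, y, hne, hxy, Γ, hΓ⟩
    exact hnot ⟨x, y, hne, hxy, Γ, fun t ↦ range_comp_subset_range _ f (hΓ t)⟩
  choose F hF using hlift
  refine ⟨ContinuousMap.liftCover' (range pathComponent) F ?_ fun a ↦
    ⟨_, mem_range_self a, (IsOpen.pathComponent a).mem_nhds (mem_pathComponent_self a)⟩,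
    fun a ↦ ?_⟩
  · intro S hS T hT x hxS hxT
    obtain rfl : S = T := by
      obtain ⟨⟨a, rfl⟩, b, rfl⟩ := And.intro hS hT
      exact (pathComponent_congr hxS).symm.trans (pathComponent_congr hxT)
    rfl
  · rw [ContinuousMap.liftCover_coe' (hs := mem_range_self a) ⟨a, mem_pathComponent_self a⟩]
    exact hF _ _ _

end Lifting

section ContinuousLogarithm

open Complex

variable {A B : Type*} [TopologicalSpace A] [TopologicalSpace B]

/-- `f` has a continuous logarithm. For `f z = z - p` on `K ⊆ ℂ` this says that `K` does not wind
around `p`. -/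
def HasContinuousLog (f : A → ℂ) : Prop :=
  ∃ g : C(A, ℂ), ∀ a, exp (g a) = f a

lemma HasContinuousLog.comp {f : A → ℂ} (h : HasContinuousLog f) (φ : C(B, A)) :
    HasContinuousLog (f ∘ φ) :=
  let ⟨g, hg⟩ := h
  ⟨g.comp φ, fun b ↦ hg (φ b)⟩

lemma HasContinuousLog.eq_of_apply_eq [PreconnectedSpace B] {f : A → ℂ} {φ : B → A} {α : B → ℂ}
    (h : HasContinuousLog f) (hφ : Continuous φ) (hα : Continuous α)
    (hexp : ∀ b, exp (α b) = f (φ b)) {s t : B} (hst : φ s = φ t) : α s = α t := by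
  obtain ⟨g, hg⟩ := h
  have hone : ∀ b, exp (α b - g (φ b)) = 1 := fun b ↦ by
    rw [exp_sub, hexp, ← hg, div_self (exp_ne_zero _)]
  have hconst := isCoveringMap_exp.const_of_comp (hα.sub (g.continuous.comp hφ))
    (fun a b ↦ Subtype.ext ((hone a).trans (hone b).symm)) s t
  simpa [hst] using hconst

lemma hasContinuousLog_of_simplyConnectedSpace [SimplyConnectedSpace A]
    [LocallyPathConnectedSpace A] {f : A → ℂ} (hf : Continuous f) (hf₀ : ∀ a, f a ≠ 0) :
    HasContinuousLog f := by
  obtain ⟨a₀⟩ := (inferInstance : Nonempty A)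
  obtain ⟨g, ⟨-, hg⟩, -⟩ := isCoveringMap_exp.existsUnique_continuousMap_lifts
    ⟨fun a ↦ ⟨f a, hf₀ a⟩, by fun_prop⟩ a₀ (log (f a₀)) (Subtype.ext (exp_log (hf₀ a₀)))
  exact ⟨g, fun a ↦ congrArg Subtype.val (congr_fun hg a)⟩

lemma exists_path_of_not_hasContinuousLog [LocallyPathConnectedSpace A] {f : A → ℂ}
    (hf : Continuous f) (hf₀ : ∀ a, f a ≠ 0) (h : ¬ HasContinuousLog f) :
    ∃ a b, a ≠ b ∧ exp a = exp b ∧ ∃ Γ : Path a b, ∀ t, exp (Γ t) ∈ range f := by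
  obtain ⟨g, hg⟩ | ⟨a, b, hne, hab, Γ, hΓ⟩ := exists_lift_or_exists_path isCoveringMap_exp
    (fun z ↦ ⟨log z, Subtype.ext (exp_log z.2)⟩) (⟨fun a ↦ ⟨f a, hf₀ a⟩, by fun_prop⟩ : C(A, _))
  · exact (h ⟨g, fun a ↦ congrArg Subtype.val (hg a)⟩).elim
  · refine ⟨a, b, hne, congrArg Subtype.val hab, Γ, fun t ↦ ?_⟩
    obtain ⟨x, hx⟩ := hΓ t
    exact ⟨x, congrArg Subtype.val hx⟩

lemma not_hasContinuousLog_sphere (p : ℂ) {R : ℝ} (hR : 0 < R) :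
    ¬ HasContinuousLog fun z : sphere p R ↦ (z : ℂ) - p := fun h ↦ by
  have hα : ∀ θ : ℝ, exp (Real.log R + θ * Complex.I) = circleMap 0 R θ := fun θ ↦ by
    rw [exp_add, ← ofReal_exp, Real.exp_log hR, circleMap_zero]
  have := h.eq_of_apply_eq (φ := fun θ : ℝ ↦ ⟨circleMap p R θ, circleMap_mem_sphere p hR.le θ⟩)
    (by fun_prop) (by fun_prop) (fun θ ↦ (hα θ).trans (circleMap_sub_center p R θ).symm)
    (Subtype.ext ((periodic_circleMap p R).eq.symm) : _ = (⟨_, _⟩ : sphere p R))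
  simp at this

end ContinuousLogarithm

section Planar

open Complex

variable {K L : Set ℂ} {p q x y : ℂ}

lemma frontier_connectedComponentIn_compl_subset (hL : IsClosed L) (p : ℂ) :
    frontier (connectedComponentIn Lᶜ p) ⊆ L := by
  intro z hz
  by_contra hzL
  obtain ⟨y, hyz, hyp⟩ := mem_closure_iff.1 hz.1 _ hL.isOpen_compl.connectedComponentIn
    (mem_connectedComponentIn hzL)
  have hzp : z ∈ connectedComponentIn Lᶜ p := by
    rw [connectedComponentIn_eq hyp, ← connectedComponentIn_eq hyz]
    exact mem_connectedComponentIn hzL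
  exact hz.2 (hL.isOpen_compl.connectedComponentIn.interior_eq.symm ▸ hzp)

-- A logarithm on `L` extends, by Tietze, to a nonvanishing continuous function on the plane that
-- equals `z - p` off the bounded component of `p`; that function winds once around large circles.
lemma not_hasContinuousLog_of_isBounded (hL : IsClosed L) (hp : p ∈ Lᶜ)
    (hbd : Bornology.IsBounded (connectedComponentIn Lᶜ p)) :
    ¬ HasContinuousLog fun z : L ↦ (z : ℂ) - p := by
  classical
  rintro ⟨g, hg⟩
  obtain ⟨G, hG⟩ := ContinuousMap.exists_restrict_eq hL g
  have hGL : ∀ z ∈ L, exp (G z) = z - p := fun z hz ↦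
    (congrArg exp (DFunLike.congr_fun hG ⟨z, hz⟩)).trans (hg ⟨z, hz⟩)
  let U := connectedComponentIn Lᶜ p
  let F : ℂ → ℂ := fun z ↦ if z ∈ U then exp (G z) else z - p
  have hF : Continuous F :=
    continuous_if (fun z hz ↦ hGL z (frontier_connectedComponentIn_compl_subset hL p hz))
      (by fun_prop) (by fun_prop)
  have hF₀ : ∀ z, F z ≠ 0 := fun z ↦ by
    simp only [F]
    split_ifs with hz
    · exact exp_ne_zero _
    · exact sub_ne_zero.2 fun hzp ↦ hz (hzp ▸ mem_connectedComponentIn hp)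
  obtain ⟨R, hR, hRU⟩ := hbd.subset_ball_lt 0 p
  have hFR : ∀ z : sphere p R, F z = z - p := fun z ↦
    if_neg fun hz ↦ (mem_ball.1 (hRU hz)).ne z.2
  have hlog := (hasContinuousLog_of_simplyConnectedSpace hF hF₀).comp
    ⟨((↑) : sphere p R → ℂ), continuous_subtype_val⟩
  refine not_hasContinuousLog_sphere p hR ?_
  simpa only [Function.comp_def, ContinuousMap.coe_mk, hFR] using hlog

lemma HasContinuousLog.mul_one_add {A : Type*} [TopologicalSpace A] {f u : A → ℂ}
    (hf : HasContinuousLog f) (hu : Continuous u) (hu₁ : ∀ a, ‖u a‖ < 1) :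
    HasContinuousLog fun a ↦ f a * (1 + u a) := by
  obtain ⟨g, hg⟩ := hf
  have hslit : ∀ a, 1 + u a ∈ slitPlane := fun a ↦ mem_slitPlane_of_norm_lt_one (hu₁ a)
  refine ⟨⟨fun a ↦ g a + log (1 + u a),
    g.continuous.add (.clog (by fun_prop) hslit)⟩, fun a ↦ ?_⟩
  rw [ContinuousMap.coe_mk, exp_add, hg, exp_log (slitPlane_ne_zero (hslit a))]

lemma HasContinuousLog.sub_of_norm_sub_lt (h : HasContinuousLog fun z : K ↦ (z : ℂ) - x)
    (hxy : ∀ z ∈ K, ‖x - y‖ < ‖z - x‖) : HasContinuousLog fun z : K ↦ (z : ℂ) - y := by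
  have hne : ∀ z : K, (z : ℂ) - x ≠ 0 := fun z ↦
    norm_pos_iff.1 ((norm_nonneg _).trans_lt (hxy z z.2))
  have hlog := h.mul_one_add (u := fun z : K ↦ (x - y) / ((z : ℂ) - x))
    (by fun_prop (disch := exact hne _)) fun z ↦ by
      rw [norm_div]
      exact (div_lt_one (norm_pos_iff.2 (hne z))).2 (hxy z z.2)
  convert! hlog using 2 with z
  field_simp [hne z]
  ring

lemma hasContinuousLog_sub_of_norm_lt (hq : ∀ z ∈ K, ‖z‖ < ‖q‖) :
    HasContinuousLog fun z : K ↦ (z : ℂ) - q := by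
  obtain rfl | hq₀ := eq_or_ne q 0
  · exact ⟨0, fun z ↦ ((norm_nonneg _).not_gt (norm_zero (E := ℂ) ▸ hq z z.2)).elim⟩
  have hconst : HasContinuousLog fun _ : K ↦ -q :=
    ⟨.const _ (log (-q)), fun _ ↦ exp_log (neg_ne_zero.2 hq₀)⟩
  have hlog := hconst.mul_one_add (u := fun z : K ↦ -((z : ℂ) / q)) (by fun_prop) fun z ↦ by
      rw [norm_neg, norm_div]
      exact (div_lt_one (norm_pos_iff.2 hq₀)).2 (hq z z.2)
  convert! hlog using 2 with z
  field_simp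
  ring

lemma eventually_hasContinuousLog_sub_iff (hK : IsClosed K) (hx : x ∈ Kᶜ) :
    ∀ᶠ y in 𝓝 x, (HasContinuousLog fun z : K ↦ (z : ℂ) - x) ↔
      HasContinuousLog fun z : K ↦ (z : ℂ) - y := by
  obtain ⟨δ, hδ, hball⟩ := Metric.isOpen_iff.1 hK.isOpen_compl x hx
  have hfar : ∀ z ∈ K, δ ≤ ‖z - x‖ := fun z hz ↦
    le_of_not_gt fun hlt ↦ hball (mem_ball_iff_norm.2 hlt) hz
  filter_upwards [ball_mem_nhds x (half_pos hδ)] with y hy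
  rw [mem_ball_iff_norm] at hy
  refine ⟨fun h ↦ h.sub_of_norm_sub_lt fun z hz ↦ ?_, fun h ↦ h.sub_of_norm_sub_lt fun z hz ↦ ?_⟩
  · linarith [hfar z hz, norm_sub_rev x y]
  · linarith [hfar z hz, norm_sub_le_norm_sub_add_norm_sub z y x]

lemma isBounded_connectedComponentIn_of_not_hasContinuousLog (hK : IsCompact K) (hp : p ∈ Kᶜ)
    (h : ¬ HasContinuousLog fun z : K ↦ (z : ℂ) - p) :
    Bornology.IsBounded (connectedComponentIn Kᶜ p) := by
  obtain ⟨R, hRK⟩ := hK.isBounded.subset_ball 0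
  refine (isBounded_ball (x := (0 : ℂ)) (r := R)).subset fun q hq ↦ ?_
  by_contra hqR
  rw [mem_ball_zero_iff, not_lt] at hqR
  have hpq := isPreconnected_connectedComponentIn.induction₂
    (fun x y ↦ (HasContinuousLog fun z : K ↦ (z : ℂ) - x) ↔
      HasContinuousLog fun z : K ↦ (z : ℂ) - y)
    (fun x hx ↦ mem_nhdsWithin_of_mem_nhds <| eventually_hasContinuousLog_sub_iff hK.isClosed
      (connectedComponentIn_subset _ _ hx))
    (fun _ _ _ _ _ _ ↦ Iff.trans) (fun _ _ _ _ ↦ Iff.symm) (mem_connectedComponentIn hp) hq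
  exact h <| hpq.2 <| hasContinuousLog_sub_of_norm_lt
    fun z hz ↦ (mem_ball_zero_iff.1 (hRK hz)).trans_le hqR

end Planar

section SimpleLoops

variable {X Y : Type*} [TopologicalSpace X] [TopologicalSpace Y]

lemma exists_injOn_Ico_of_isLocallyInjective [T2Space X] (f : C(I, X)) (hf : IsLocallyInjective f)
    (h01 : f 0 = f 1) : ∃ s t, s < t ∧ f s = f t ∧ InjOn f (Ico s t) := by
  let A : Set (I × I) := {q | q.1 < q.2 ∧ f q.1 = f q.2}
  have hA : IsClosed A := by
    refine isClosed_of_closure_subset fun q hq ↦ ?_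
    have hsub : A ⊆ {q | q.1 ≤ q.2} ∩ {q | f q.1 = f q.2} := fun q hq ↦ ⟨hq.1.le, hq.2⟩
    have hcl : IsClosed ({q : I × I | q.1 ≤ q.2} ∩ {q | f q.1 = f q.2}) :=
      (isClosed_le continuous_fst continuous_snd).inter (isClosed_eq (by fun_prop) (by fun_prop))
    obtain ⟨hle, heq⟩ := closure_minimal hsub hcl hq
    refine ⟨lt_of_le_of_ne hle fun hdiag ↦ ?_, heq⟩
    obtain ⟨U, hU, hqU, hinj⟩ := hf q.1
    obtain ⟨r, hrU, hr⟩ := mem_closure_iff.1 hq _ (hU.prod hU) ⟨hqU, hdiag ▸ hqU⟩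
    exact hr.1.ne (hinj hrU.1 hrU.2 hr.2)
  obtain ⟨⟨s, t⟩, ⟨hst, hfst⟩, hmin⟩ := hA.isCompact.exists_isMinOn ⟨(0, 1), zero_lt_one, h01⟩
    (f := fun q ↦ (q.2 : ℝ) - q.1) (by fun_prop)
  have hshort : ∀ u ∈ Ico s t, ∀ v ∈ Ico s t, f u = f v → ¬ u < v := fun u hu v hv hfuv huv ↦ by
    have hle : (t : ℝ) - s ≤ v - u := hmin (show (u, v) ∈ A from ⟨huv, hfuv⟩)
    have hsu : (s : ℝ) ≤ u := hu.1
    have hvt : (v : ℝ) < t := hv.2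
    linarith
  exact ⟨s, t, hst, hfst, fun u hu v hv huv ↦ le_antisymm
    (not_lt.1 (hshort v hv u hu huv.symm)) (not_lt.1 (hshort u hu v hv huv))⟩

lemma exists_subpath_injOn_Iio [T2Space Y] {c : X → Y} (hc : Continuous c)
    (hinj : IsLocallyInjective c) {x y : X} {α : Path x y} (hα : Function.Injective α)
    (hxy : c x = c y) :
    ∃ x' y', x' ≠ y' ∧ c x' = c y' ∧
      ∃ β : Path x' y', range β ⊆ range α ∧ InjOn (c ∘ β) (Iio 1) := by
  obtain ⟨s, t, hst, hcst, hIco⟩ := exists_injOn_Ico_of_isLocallyInjective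
    ⟨c ∘ α, by fun_prop⟩ (hinj.comp_right α.continuous hα) (by simpa using hxy)
  have hst' : (s : ℝ) < t := hst
  refine ⟨α s, α t, hα.ne hst.ne, hcst, α.subpath s t, ?_, fun u hu v hv huv ↦ ?_⟩
  · rw [Path.range_subpath]
    exact image_subset_range _ _
  · have hmem : ∀ w ∈ Iio (1 : I), Icc.convexComb s t w ∈ Ico s t := fun w hw ↦ by
      refine ⟨Icc.le_convexComb hst.le w, ?_⟩
      rw [← Subtype.coe_lt_coe, Icc.coe_convexComb]
      have hw' : (w : ℝ) < 1 := hw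
      nlinarith
    have heq := congrArg Subtype.val (hIco (hmem u hu) (hmem v hv) huv)
    rw [Icc.coe_convexComb, Icc.coe_convexComb] at heq
    exact Subtype.ext (mul_right_cancel₀ (sub_pos.2 hst').ne' (by linarith))

lemma exists_circle_range_eq {x : X} {γ : Path x x} (hγ : InjOn γ (Iio 1)) :
    ∃ f : Circle → X, Continuous f ∧ Function.Injective f ∧ range f = range γ := by
  let l : AddCircle (1 : ℝ) → X := AddCircle.liftIco 1 0 γ.extend
  have hl : Continuous l :=
    AddCircle.liftIco_zero_continuous (by simp) γ.continuous_extend.continuousOn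
  have hcoe : ∀ t : I, t < 1 → l ((t : ℝ) : AddCircle (1 : ℝ)) = γ t := fun t ht ↦
    (AddCircle.liftIco_zero_coe_apply (show (t : ℝ) ∈ Ico 0 1 from ⟨t.2.1, ht⟩)).trans
      (γ.extend_apply t.2)
  have hrep (a : AddCircle (1 : ℝ)) : ∃ t : I, t < 1 ∧ ((t : ℝ) : AddCircle (1 : ℝ)) = a := by
    obtain ⟨t, ht, rfl⟩ := AddCircle.coe_image_Ico_eq (1 : ℝ) 0 ▸ mem_univ a
    rw [zero_add] at ht
    exact ⟨⟨t, ht.1, ht.2.le⟩, ht.2, rfl⟩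
  have hinj : Function.Injective l := fun a b hab ↦ by
    obtain ⟨⟨s, hs, rfl⟩, t, ht, rfl⟩ := And.intro (hrep a) (hrep b)
    rw [hcoe s hs, hcoe t ht] at hab
    rw [hγ hs ht hab]
  have hrange : range l = range γ := by
    refine Subset.antisymm ?_ ?_
    · rintro _ ⟨a, rfl⟩
      obtain ⟨t, ht, rfl⟩ := hrep a
      exact ⟨t, (hcoe t ht).symm⟩
    · rintro _ ⟨t, rfl⟩
      obtain rfl | ht := eq_or_ne t 1
      · exact ⟨_, (hcoe 0 zero_lt_one).trans (γ.source.trans γ.target.symm)⟩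
      · exact ⟨_, hcoe t (lt_of_le_of_ne t.2.2 ht)⟩
  let h := AddCircle.homeomorphCircle (one_ne_zero' ℝ)
  exact ⟨l ∘ h.symm, hl.comp h.symm.continuous, hinj.comp h.symm.injective,
    (h.symm.surjective.range_comp l).trans hrange⟩

lemma isSimpleClosedCurve_range {x : EuclideanSpace ℝ (Fin 2)} {γ : Path x x}
    (hγ : InjOn γ (Iio 1)) : IsSimpleClosedCurve (range γ) := by
  obtain ⟨f, hf, hinj, hrange⟩ := exists_circle_range_eq hγ
  let e := Complex.orthonormalBasisOneI.repr.symm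
  let h : sphere (0 : EuclideanSpace ℝ (Fin 2)) 1 ≃ₜ Circle := e.toHomeomorph.subtype fun x ↦ by
    rw [mem_sphere_zero_iff_norm]
    exact e.norm_map x ▸ mem_sphere_zero_iff_norm.symm
  exact ⟨f ∘ h, hf.comp h.continuous, hinj.comp h.injective,
    (h.surjective.range_comp f).trans hrange⟩

end SimpleLoops

section Separation

open Complex

lemma isLocallyInjective_exp : IsLocallyInjective exp := fun z ↦
  let ⟨U, hU, hzU, hinj⟩ := isCoveringMap_exp.isLocalHomeomorph.isLocallyInjective z
  ⟨U, hU, hzU, fun _ ha _ hb hab ↦ hinj ha hb (Subtype.ext hab)⟩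

lemma exists_loop_separating {L : Set ℂ} (hL : IsClosed L) [LocallyConnectedSpace L] {p : ℂ}
    (hp : p ∈ Lᶜ) (hbd : Bornology.IsBounded (connectedComponentIn Lᶜ p)) :
    ∃ x, ∃ δ : Path x x, range δ ⊆ L ∧ InjOn δ (Iio 1) ∧
      Bornology.IsBounded (connectedComponentIn (range δ)ᶜ p) := by
  have := hL.completeSpace_coe
  have := locallyPathConnectedSpace_of_complete (X := L)
  have hne : ∀ z : L, (z : ℂ) - p ≠ 0 := fun z ↦ sub_ne_zero.2 fun hzp ↦ hp (hzp ▸ z.2)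
  obtain ⟨a, b, hab, hexp, Γ, hΓ⟩ := exists_path_of_not_hasContinuousLog (by fun_prop) hne
    (not_hasContinuousLog_of_isBounded hL hp hbd)
  obtain ⟨α, hα, hαΓ⟩ := exists_injective_path Γ hab
  obtain ⟨x, y, hxy, hexp, β, hβα, hβ⟩ := exists_subpath_injOn_Iio continuous_exp
    isLocallyInjective_exp hα hexp
  let δ : Path (p + exp x) (p + exp x) :=
    (β.map (f := fun w ↦ p + exp w) (by fun_prop)).cast rfl (by rw [hexp])
  have hδ : ∀ t, δ t = p + exp (β t) := fun _ ↦ rfl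
  have hδL : range δ ⊆ L := by
    rintro _ ⟨t, rfl⟩
    obtain ⟨s, hs⟩ := hαΓ (hβα (mem_range_self t))
    obtain ⟨z, hz⟩ := hΓ s
    rw [hδ, ← hs, ← hz, add_sub_cancel]
    exact z.2
  refine ⟨_, δ, hδL, fun s hs t ht hst ↦ hβ hs ht (add_left_cancel hst), ?_⟩
  refine isBounded_connectedComponentIn_of_not_hasContinuousLog
    (isCompact_range δ.continuous) (fun h ↦ hp (hδL h)) fun hlog ↦ hxy ?_
  simpa using hlog.eq_of_apply_eq (φ := rangeFactorization δ) (by fun_prop) β.continuous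
    (fun t ↦ by simp [hδ]) (s := 0) (t := 1) (Subtype.ext (δ.source.trans δ.target.symm))

lemma isBounded_connectedComponentIn_compl_image {M N : Type*} [PseudoMetricSpace M]
    [PseudoMetricSpace N] (e : M ≃ᵢ N) {S : Set M} {q : M} (hq : q ∈ Sᶜ) :
    Bornology.IsBounded (connectedComponentIn (e '' S)ᶜ (e q)) ↔
      Bornology.IsBounded (connectedComponentIn Sᶜ q) := by
  have himage : e '' connectedComponentIn Sᶜ q = connectedComponentIn (e '' S)ᶜ (e q) := by
    rw [← image_compl_eq e.bijective]
    exact e.toHomeomorph.image_connectedComponentIn hq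
  rw [← himage]
  refine ⟨fun h ↦ ?_, e.isometry.lipschitz.isBounded_image⟩
  simpa [image_image] using e.symm.isometry.lipschitz.isBounded_image h

theorem exists_simple_closed_curve_separating_general
    (L : Set (EuclideanSpace ℝ (Fin 2))) (hL : IsClosed L) (hLlc : LocallyConnectedSpace L)
    (p : EuclideanSpace ℝ (Fin 2)) (hp : p ∈ Lᶜ)
    (hbd : Bornology.IsBounded (connectedComponentIn Lᶜ p)) :
    ∃ J ⊆ L, IsSimpleClosedCurve J ∧ Bornology.IsBounded (connectedComponentIn Jᶜ p) := by
  let e := orthonormalBasisOneI.repr.toIsometryEquiv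
  obtain ⟨S, rfl⟩ := e.surjective.image_surjective L
  obtain ⟨q, rfl⟩ := e.surjective p
  have hq : q ∈ Sᶜ := fun h ↦ hp (mem_image_of_mem e h)
  have hS : IsClosed S := e.toHomeomorph.isClosed_image.1 hL
  have : LocallyConnectedSpace (e.toHomeomorph '' S) := hLlc
  have : LocallyConnectedSpace S :=
    (e.toHomeomorph.image S).isOpenEmbedding.locallyConnectedSpace
  obtain ⟨x, δ, hδS, hδ, hδq⟩ :=
    exists_loop_separating hS hq ((isBounded_connectedComponentIn_compl_image e hq).1 hbd)
  refine ⟨e '' range δ, image_mono hδS, ?_,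
    (isBounded_connectedComponentIn_compl_image e fun h ↦ hq (hδS h)).2 hδq⟩
  rw [← range_comp]
  exact isSimpleClosedCurve_range (γ := δ.map e.continuous) (e.injective.comp_injOn hδ)

end Separation

/-- If a locally connected continuum `L` in the plane separates a point `p` from infinity
(i.e. `p` lies in a bounded component of `ℝ² \ L`), then some simple closed curve `J ⊆ L`
already separates `p` from infinity. -/
theorem exists_simple_closed_curve_separating
    (L : Set (EuclideanSpace ℝ (Fin 2)))
    (hLcpt : IsCompact L) (hLconn : IsConnected L) (hLlc : LocallyConnectedSpace L)
    (p : EuclideanSpace ℝ (Fin 2)) (hp : p ∈ Lᶜ)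
    (hbd : Bornology.IsBounded (connectedComponentIn Lᶜ p)) :
    ∃ J ⊆ L, IsSimpleClosedCurve J ∧
      Bornology.IsBounded (connectedComponentIn Jᶜ p) :=
  exists_simple_closed_curve_separating_general L hLcpt.isClosed hLlc p hp hbd
end
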